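/- Legendre transform formula for solutions of the degenerate special Lagrangian equation: Let D ⊂ ℝⁿ be a bounded strictly convex domain and c ∈ [nπ/2, (n+1)π/2). Let g be a continuous function on ∂([0,1] × D) that is C² there, with g(0, ·) ∈ F_{c−π/2}(D) and g(1, ·) ∈ F_{c−π/2}(D). Suppose u ∈ C⁰([0,1] × D̄) satisfies: u ∈ ℱ_c((0,1) × D), −u ∈ ℱ_{−c}((0,1) × D), and u = g on ∂([0,1] × D) (i.e. u is a continuous weak solution of the Dirichlet problem for the degenerate special Lagrangian equation with boundary data g). Then for every (t, x) ∈ [0,1] × D: u(t, x) = sup_{τ ∈ ℝ} [ h_τ(x) + τ t ], where for each τ ∈ ℝ, h_τ := P_{c−π/2}( min{ g(0, ·), g(1, ·) − τ } ; y ↦ inf_{r ∈ [0,1]} ( g(r, y) − rτ ) ), the envelope P_{c−π/2}(v; f) being defined as P_{c−π/2}(v; f) := sup{ w ∈ F_{c−π/2}(D) : w ≤ v on D and limsup_{ξ→y} w(ξ) ≤ f(y) for all y ∈ ∂D }. -/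

import Mathlib

open Real Filter Matrix

noncomputable section

/-- The Hessian matrix of a function `v : ℝ^m → ℝ` at `x`. -/
def hessianMatrix {m : ℕ} (v : (Fin m → ℝ) → ℝ) (x : Fin m → ℝ) :
    Matrix (Fin m) (Fin m) ℝ :=
  Matrix.of fun i j => iteratedFDeriv ℝ 2 v x ![Pi.single i 1, Pi.single j 1]

/-- The lifted Lagrangian angle θ̃(A) = ∑ arctan λ_j(A) of a real symmetric matrix. -/
def liftedAngle {m : ℕ} (A : Matrix (Fin m) (Fin m) ℝ) : ℝ :=
  if h : A.IsHermitian then ∑ j, Real.arctan (h.eigenvalues j) else 0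

/-- The Harvey–Lawson branches `F_c` of the special Lagrangian subequation. -/
def Fc (m : ℕ) (c : ℝ) : Set (Matrix (Fin m) (Fin m) ℝ) :=
  {A | A.IsSymm ∧ c ≤ liftedAngle A}

/-- `I_n = diag(0,1,…,1)` as a complex `(n+1)×(n+1)` matrix. -/
def Inmat (n : ℕ) : Matrix (Fin (n+1)) (Fin (n+1)) ℂ :=
  Matrix.diagonal fun i => if i = 0 then 0 else 1

/-- The complex matrix `I_n + i A`. -/
def cmat {n : ℕ} (A : Matrix (Fin (n+1)) (Fin (n+1)) ℝ) :
    Matrix (Fin (n+1)) (Fin (n+1)) ℂ :=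
  Inmat n + Complex.I • A.map (fun a => (a : ℂ))

open Classical in
/-- The lifted space-time Lagrangian angle Θ̃, summing `Complex.arg` (with values in
`(-π, π]`) over the roots (with multiplicity) of the characteristic polynomial of
`I_n + i A`, shifted by `π/2` over the singular set `S = {det (I_n + iA) = 0}` where only
the nonzero roots are counted. -/
def spaceTimeAngle {n : ℕ} (A : Matrix (Fin (n+1)) (Fin (n+1)) ℝ) : ℝ :=
  if (cmat A).det = 0 then
    π / 2 + ((((cmat A).charpoly.roots).filter (fun z => z ≠ 0)).map Complex.arg).sum
  else (((cmat A).charpoly.roots).map Complex.arg).sum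

/-- The degenerate special Lagrangian subequation `ℱ_c ⊂ Sym(ℝ^{n+1})`. -/
def calF (n : ℕ) (c : ℝ) : Set (Matrix (Fin (n+1)) (Fin (n+1)) ℝ) :=
  {A | A.IsSymm ∧ c ≤ spaceTimeAngle A}

/-- Interior of a set of symmetric matrices, relative to the symmetric matrices. -/
def symInterior {m : ℕ} (F : Set (Matrix (Fin m) (Fin m) ℝ)) :
    Set (Matrix (Fin m) (Fin m) ℝ) :=
  {A | A.IsSymm ∧ ∀ᶠ B in nhds A, B.IsSymm → B ∈ F}

/-- The dual subequation `F̃ = (−Int F)ᶜ` (within the symmetric matrices). -/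
def dualSub {m : ℕ} (F : Set (Matrix (Fin m) (Fin m) ℝ)) :
    Set (Matrix (Fin m) (Fin m) ℝ) :=
  {A | A.IsSymm ∧ -A ∉ symInterior F}

/-- An `EReal`-valued (i.e. `[−∞,∞)`-valued) function is subaffine on `U` if, for every
affine function `a` and compact `K ⊆ U`, `u ≤ a` on `∂K` implies `u ≤ a` on `K`. -/
def IsSubaffine {m : ℕ} (U : Set (Fin m → ℝ)) (u : (Fin m → ℝ) → EReal) : Prop :=
  ∀ (a : (Fin m → ℝ) →ᵃ[ℝ] ℝ) (K : Set (Fin m → ℝ)), IsCompact K → K ⊆ U →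
    (∀ x ∈ frontier K, u x ≤ (a x : EReal)) → ∀ x ∈ K, u x ≤ (a x : EReal)

/-- `u` is of type `F` on `U` (i.e. `u ∈ F(U)`): `u` is `[−∞,∞)`-valued, upper
semicontinuous on `U`, and `u + v` is subaffine on `U` for every `C²` function `v`
whose Hessian lies in the dual subequation `F̃` at every point of `U`. -/
def IsTypeF {m : ℕ} (F : Set (Matrix (Fin m) (Fin m) ℝ)) (U : Set (Fin m → ℝ))
    (u : (Fin m → ℝ) → EReal) : Prop :=
  (∀ x ∈ U, u x ≠ ⊤) ∧ UpperSemicontinuousOn u U ∧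
    ∀ v : (Fin m → ℝ) → ℝ, ContDiffOn ℝ 2 v U →
      (∀ x ∈ U, hessianMatrix v x ∈ dualSub F) →
      IsSubaffine U (fun x => u x + ((v x : ℝ) : EReal))

/-- The lower-right `n×n` block `A⁺` of an `(n+1)×(n+1)` matrix. -/
def Aplus {n : ℕ} (A : Matrix (Fin (n+1)) (Fin (n+1)) ℝ) : Matrix (Fin n) (Fin n) ℝ :=
  Matrix.of fun i j => A i.succ j.succ

end

/-- concave minorant of arctan -/
noncomputable def sfun (s : ℝ) : ℝ := if 0 ≤ s then Real.arctan s else s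

noncomputable def sder (s : ℝ) : ℝ := if 0 ≤ s then 1 / (1 + s ^ 2) else 1

lemma sder_pos (s : ℝ) : 0 < sder s := by
  unfold sder; split_ifs <;> positivity

lemma arctan_le_self' {s : ℝ} (hs : 0 ≤ s) : Real.arctan s ≤ s := by
  have h : 0 ≤ Real.arctan s := Real.arctan_nonneg.2 hs
  calc Real.arctan s ≤ Real.tan (Real.arctan s) :=
        Real.le_tan h (Real.arctan_lt_pi_div_two s)
    _ = s := Real.tan_arctan s

lemma sfun_le_arctan (s : ℝ) : sfun s ≤ Real.arctan s := by
  unfold sfun; split_ifs with h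
  · exact le_rfl
  · have := arctan_le_self' (s := -s) (by linarith)
    rw [Real.arctan_neg] at this; linarith

lemma arctan_tangent {x y : ℝ} (hx : 0 ≤ x) (hy : 0 ≤ y) :
    Real.arctan y ≤ Real.arctan x + 1 / (1 + x ^ 2) * (y - x) := by
  have hd : ∀ z : ℝ, HasDerivAt Real.arctan (1 / (1 + z ^ 2)) z := Real.hasDerivAt_arctan
  rcases lt_trichotomy x y with h | h | h
  · obtain ⟨z, hz, hz'⟩ := exists_hasDerivAt_eq_slope Real.arctan (fun z => 1 / (1 + z ^ 2)) h
      (Real.continuous_arctan.continuousOn) (fun z _ => hd z)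
    have h1 : 1 / (1 + z ^ 2) ≤ 1 / (1 + x ^ 2) := by
      apply one_div_le_one_div_of_le (by positivity)
      nlinarith [hz.1]
    rw [hz', div_le_iff₀ (by linarith)] at h1
    linarith
  · subst h; simp
  · obtain ⟨z, hz, hz'⟩ := exists_hasDerivAt_eq_slope Real.arctan (fun z => 1 / (1 + z ^ 2)) h
      (Real.continuous_arctan.continuousOn) (fun z _ => hd z)
    have h1 : 1 / (1 + x ^ 2) ≤ 1 / (1 + z ^ 2) := by
      apply one_div_le_one_div_of_le (by positivity)
      nlinarith [hz.1, hz.2]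
    rw [hz', le_div_iff₀ (by linarith)] at h1
    linarith

lemma sfun_tangent (x y : ℝ) : sfun y ≤ sfun x + sder x * (y - x) := by
  unfold sfun sder
  by_cases hx : 0 ≤ x
  · by_cases hy : 0 ≤ y
    · simp only [hx, hy, if_true]; exact arctan_tangent hx hy
    · simp only [hx, hy, if_true, if_false]
      have h0 := arctan_tangent hx le_rfl
      rw [Real.arctan_zero] at h0
      have hy' : y < 0 := not_le.1 hy
      have h1 : 1 / (1 + x ^ 2) ≤ 1 := by
        rw [div_le_one (by positivity)]; nlinarith
      nlinarith
  · by_cases hy : 0 ≤ y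
    · simp only [hx, hy, if_true, if_false]
      have := arctan_le_self' hy
      linarith
    · simp only [hx, hy, if_false]; linarith

/-- the concave spectral function -/
noncomputable def PhiS {m : ℕ} (A : Matrix (Fin m) (Fin m) ℝ) : ℝ :=
  if h : A.IsHermitian then ∑ j, sfun (h.eigenvalues j) else 0

lemma isHermitian_of_isSymm {m : ℕ} {A : Matrix (Fin m) (Fin m) ℝ} (h : A.IsSymm) :
    A.IsHermitian := by
  rw [Matrix.IsHermitian, Matrix.conjTranspose_eq_transpose_of_trivial]; exact h

lemma isSymm_of_isHermitian {m : ℕ} {A : Matrix (Fin m) (Fin m) ℝ} (h : A.IsHermitian) :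
    A.IsSymm := by
  rw [Matrix.IsHermitian, Matrix.conjTranspose_eq_transpose_of_trivial] at h; exact h

/-- real spectral decomposition -/
lemma spectral_decomp {m : ℕ} {A : Matrix (Fin m) (Fin m) ℝ} (h : A.IsHermitian) :
    ∃ V : Matrix (Fin m) (Fin m) ℝ, V * Vᵀ = 1 ∧ Vᵀ * V = 1 ∧
      A = V * Matrix.diagonal h.eigenvalues * Vᵀ := by
  refine ⟨h.eigenvectorUnitary, ?_, ?_, ?_⟩
  · have := (Matrix.mem_unitaryGroup_iff).1 h.eigenvectorUnitary.2
    rwa [Matrix.star_eq_conjTranspose, Matrix.conjTranspose_eq_transpose_of_trivial] at this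
  · have := (Matrix.mem_unitaryGroup_iff').1 h.eigenvectorUnitary.2
    rwa [Matrix.star_eq_conjTranspose, Matrix.conjTranspose_eq_transpose_of_trivial] at this
  · have := h.spectral_theorem
    rw [Unitary.conjStarAlgAut_apply] at this
    rw [Matrix.star_eq_conjTranspose, Matrix.conjTranspose_eq_transpose_of_trivial] at this
    exact this

lemma support_lemma {m : ℕ} {P : Matrix (Fin m) (Fin m) ℝ} (hP : P.IsHermitian) :
    ∃ B : Matrix (Fin m) (Fin m) ℝ, B.PosSemidef ∧ (0 < m → 0 < B.trace) ∧
      ∀ A : Matrix (Fin m) (Fin m) ℝ, A.IsHermitian →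
        PhiS A ≤ PhiS P + (B * (A - P)).trace := by
  obtain ⟨U, hU1, hU2, hUP⟩ := spectral_decomp hP
  set p := hP.eigenvalues with hp
  refine ⟨U * Matrix.diagonal (fun i => sder (p i)) * Uᵀ, ?_, ?_, ?_⟩
  · have := (Matrix.PosSemidef.diagonal (n := Fin m) (d := fun i => sder (p i))
      (fun i => (sder_pos _).le)).mul_mul_conjTranspose_same U
    rwa [Matrix.conjTranspose_eq_transpose_of_trivial] at this
  · intro hm
    rw [Matrix.trace_mul_comm, ← Matrix.mul_assoc, hU2, Matrix.one_mul, Matrix.trace_diagonal]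
    haveI : Nonempty (Fin m) := ⟨⟨0, hm⟩⟩
    exact Finset.sum_pos (fun i _ => sder_pos _) Finset.univ_nonempty
  · intro A hA
    obtain ⟨V, hV1, hV2, hVA⟩ := spectral_decomp hA
    set α := hA.eigenvalues with hα
    set O := Vᵀ * U with hO
    have hO1 : O * Oᵀ = 1 := by
      rw [hO, Matrix.transpose_mul, Matrix.transpose_transpose, Matrix.mul_assoc,
        ← Matrix.mul_assoc U, hU1, Matrix.one_mul, hV2]
    have hO2 : Oᵀ * O = 1 := by
      rw [hO, Matrix.transpose_mul, Matrix.transpose_transpose, Matrix.mul_assoc,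
        ← Matrix.mul_assoc V, hV1, Matrix.one_mul, hU2]
    have r1 : ∀ k, ∑ i, O k i ^ 2 = 1 := by
      intro k
      have := congrFun (congrFun hO1 k) k
      simpa [Matrix.mul_apply, sq] using this
    have r2 : ∀ i, ∑ k, O k i ^ 2 = 1 := by
      intro k
      have := congrFun (congrFun hO2 k) k
      simpa [Matrix.mul_apply, sq] using this
    have htr : (U * Matrix.diagonal (fun i => sder (p i)) * Uᵀ * (A - P)).trace
        = ∑ i, sder (p i) * (∑ k, O k i ^ 2 * α k - p i) := by
      have e1 : (U * Matrix.diagonal (fun i => sder (p i)) * Uᵀ * (A - P)).trace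
          = (Matrix.diagonal (fun i => sder (p i)) *
            (Oᵀ * Matrix.diagonal α * O - Matrix.diagonal p)).trace := by
        rw [Matrix.mul_assoc, Matrix.mul_assoc, Matrix.trace_mul_comm U, Matrix.mul_assoc]
        congr 2
        rw [Matrix.mul_sub, Matrix.sub_mul]
        congr 1
        · rw [hVA, hO, Matrix.transpose_mul, Matrix.transpose_transpose]
          simp only [Matrix.mul_assoc]
        · rw [hUP]
          calc Uᵀ * (U * Matrix.diagonal p * Uᵀ) * U
              = (Uᵀ * U) * Matrix.diagonal p * (Uᵀ * U) := by simp only [Matrix.mul_assoc]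
            _ = _ := by rw [hU2]; simp
      rw [e1, Matrix.trace]
      refine Finset.sum_congr rfl fun i _ => ?_
      rw [Matrix.diag_apply, Matrix.diagonal_mul, Matrix.sub_apply, Matrix.diagonal_apply_eq,
        Matrix.mul_apply]
      congr 2
      refine Finset.sum_congr rfl fun k _ => ?_
      rw [Matrix.mul_diagonal, Matrix.transpose_apply]; ring
    rw [htr, PhiS, PhiS, dif_pos hA, dif_pos hP]
    calc ∑ k, sfun (α k) = ∑ k, (∑ i, O k i ^ 2) * sfun (α k) := by
          refine Finset.sum_congr rfl fun k _ => ?_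
          rw [r1, one_mul]
      _ = ∑ k, ∑ i, O k i ^ 2 * sfun (α k) := by simp only [Finset.sum_mul]
      _ ≤ ∑ k, ∑ i, O k i ^ 2 * (sfun (p i) + sder (p i) * (α k - p i)) := by
          refine Finset.sum_le_sum fun k _ => Finset.sum_le_sum fun i _ => ?_
          exact mul_le_mul_of_nonneg_left (sfun_tangent _ _) (sq_nonneg _)
      _ = ∑ i, ∑ k, O k i ^ 2 * (sfun (p i) + sder (p i) * (α k - p i)) := Finset.sum_comm
      _ = ∑ i, (sfun (p i) + sder (p i) * (∑ k, O k i ^ 2 * α k - p i)) := by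
          refine Finset.sum_congr rfl fun i _ => ?_
          calc ∑ k, O k i ^ 2 * (sfun (p i) + sder (p i) * (α k - p i))
              = ∑ k, (O k i ^ 2 * (sfun (p i) - sder (p i) * p i)
                  + sder (p i) * (O k i ^ 2 * α k)) :=
                Finset.sum_congr rfl fun k _ => by ring
            _ = _ := by
                rw [Finset.sum_add_distrib, ← Finset.sum_mul, ← Finset.mul_sum, r2]; ring
      _ = _ := by rw [Finset.sum_add_distrib]

lemma liftedAngle_eq {m : ℕ} {A : Matrix (Fin m) (Fin m) ℝ} (h : A.IsHermitian) :
    liftedAngle A = ∑ j, Real.arctan (h.eigenvalues j) := by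
  rw [liftedAngle, dif_pos h]

lemma PhiS_le_liftedAngle {m : ℕ} (A : Matrix (Fin m) (Fin m) ℝ) : PhiS A ≤ liftedAngle A := by
  unfold PhiS liftedAngle
  split_ifs
  · exact Finset.sum_le_sum fun i _ => sfun_le_arctan _
  · exact le_rfl

lemma liftedAngle_le {m : ℕ} (A : Matrix (Fin m) (Fin m) ℝ) : liftedAngle A ≤ m * (π / 2) := by
  unfold liftedAngle
  split_ifs
  · calc _ ≤ ∑ j : Fin m, π / 2 := Finset.sum_le_sum fun i _ => (Real.arctan_lt_pi_div_two _).le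
      _ = _ := by simp
  · positivity

lemma Fc_eig_nonneg {m : ℕ} {c : ℝ} (hc : ((m : ℝ) - 1) * (π / 2) ≤ c)
    {A : Matrix (Fin m) (Fin m) ℝ} (h : A ∈ Fc m c) (hA : A.IsHermitian) (j : Fin m) :
    0 ≤ hA.eigenvalues j := by
  by_contra hj
  push Not at hj
  have h2 := h.2
  rw [liftedAngle_eq hA, ← Finset.add_sum_erase _ _ (Finset.mem_univ j)] at h2
  have h3 : Real.arctan (hA.eigenvalues j) < 0 := Real.arctan_lt_zero.2 hj
  have h4 : ∑ i ∈ Finset.univ.erase j, Real.arctan (hA.eigenvalues i) ≤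
      ∑ i ∈ Finset.univ.erase j, π / 2 :=
    Finset.sum_le_sum fun i _ => (Real.arctan_lt_pi_div_two _).le
  rw [Finset.sum_const, Finset.card_erase_of_mem (Finset.mem_univ j), Finset.card_univ,
    Fintype.card_fin, nsmul_eq_mul, Nat.cast_sub (by have := j.2; omega)] at h4
  push_cast at h4
  linarith

lemma Fc_posSemidef {m : ℕ} {c : ℝ} (hc : ((m : ℝ) - 1) * (π / 2) ≤ c)
    {A : Matrix (Fin m) (Fin m) ℝ} (h : A ∈ Fc m c) : A.PosSemidef := by
  have hA := isHermitian_of_isSymm h.1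
  exact hA.posSemidef_iff_eigenvalues_nonneg.2 (fun j => Fc_eig_nonneg hc h hA j)

lemma mem_Fc_iff {m : ℕ} {c : ℝ} (hc : ((m : ℝ) - 1) * (π / 2) ≤ c)
    {A : Matrix (Fin m) (Fin m) ℝ} (hs : A.IsSymm) : A ∈ Fc m c ↔ c ≤ PhiS A := by
  have hA := isHermitian_of_isSymm hs
  constructor
  · intro h
    have h2 := h.2
    rw [liftedAngle_eq hA] at h2
    rw [PhiS, dif_pos hA]
    refine h2.trans (Finset.sum_le_sum fun j _ => ?_)
    rw [sfun, if_pos (Fc_eig_nonneg hc h hA j)]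
  · intro h
    exact ⟨hs, h.trans (PhiS_le_liftedAngle A)⟩

lemma trace_mul_psd_nonneg {m : ℕ} {B C : Matrix (Fin m) (Fin m) ℝ} (hB : B.PosSemidef)
    (hC : C.PosSemidef) : 0 ≤ (B * C).trace := by
  obtain ⟨V, hV1, hV2, hVA⟩ := spectral_decomp hB.1
  rw [hVA, Matrix.mul_assoc, Matrix.mul_assoc, Matrix.trace_mul_comm, Matrix.mul_assoc,
    Matrix.trace]
  refine Finset.sum_nonneg fun i _ => ?_
  rw [Matrix.diag_apply, Matrix.diagonal_mul]
  refine mul_nonneg (hB.eigenvalues_nonneg i) ?_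
  have := hC.conjTranspose_mul_mul_same V
  rw [Matrix.conjTranspose_eq_transpose_of_trivial] at this
  exact this.diag_nonneg

/-- Separation: a symmetric matrix outside `F_c`. -/
lemma Fc_separation {m : ℕ} {c : ℝ} (hc : ((m : ℝ) - 1) * (π / 2) ≤ c)
    (hc2 : c < m * (π / 2)) {P : Matrix (Fin m) (Fin m) ℝ} (hP : P.IsSymm) (hPF : P ∉ Fc m c) :
    ∃ B : Matrix (Fin m) (Fin m) ℝ, ∃ δ > 0, B.PosSemidef ∧ 0 < B.trace ∧
      ∀ A ∈ Fc m c, δ ≤ (B * (A - P)).trace := by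
  obtain ⟨B, hB, hBt, hBA⟩ := support_lemma (isHermitian_of_isSymm hP)
  have h0 : PhiS P < c := by
    by_contra h; push Not at h; exact hPF ((mem_Fc_iff hc hP).2 h)
  refine ⟨B, c - PhiS P, by linarith, hB, hBt ?_, ?_⟩
  · rcases Nat.eq_zero_or_pos m with h | h
    · exfalso; subst h
      apply hPF; refine ⟨hP, ?_⟩
      simp at hc2
      rw [liftedAngle_eq (isHermitian_of_isSymm hP)]; simp; exact hc2.le
    · exact h
  · intro A hA
    have := hBA A (isHermitian_of_isSymm hA.1)
    have := (mem_Fc_iff hc hA.1).1 hA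
    linarith

lemma Fc_mono {m : ℕ} {c : ℝ} (hc : ((m : ℝ) - 1) * (π / 2) ≤ c)
    {A A' : Matrix (Fin m) (Fin m) ℝ} (hA : A ∈ Fc m c) (hA' : A'.IsSymm)
    (h : (A' - A).PosSemidef) : A' ∈ Fc m c := by
  obtain ⟨B, hB, hBt, hBA⟩ := support_lemma (isHermitian_of_isSymm hA')
  have h1 := hBA A (isHermitian_of_isSymm hA.1)
  have h2 := trace_mul_psd_nonneg hB h
  have h3 : (B * (A - A')).trace = - (B * (A' - A)).trace := by
    rw [← Matrix.trace_neg, ← Matrix.mul_neg, neg_sub]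
  have h4 := (mem_Fc_iff hc hA.1).1 hA
  exact (mem_Fc_iff hc hA').2 (by linarith)

lemma Fc_strict {m : ℕ} {c κ : ℝ} (hc : ((m : ℝ) - 1) * (π / 2) ≤ c)
    (hc2 : c < m * (π / 2)) (hκ : 0 < κ)
    {A : Matrix (Fin m) (Fin m) ℝ} (hA : A ∈ Fc m c) :
    c < liftedAngle (A + κ • (1 : Matrix (Fin m) (Fin m) ℝ)) := by
  have hs : (A + κ • (1 : Matrix (Fin m) (Fin m) ℝ)).IsSymm := by
    apply Matrix.IsSymm.add hA.1
    apply Matrix.IsSymm.smul; exact Matrix.isSymm_one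
  rcases Nat.eq_zero_or_pos m with h | h
  · subst h
    simp at hc2
    rw [liftedAngle_eq (isHermitian_of_isSymm hs)]; simp; exact hc2
  · obtain ⟨B, hB, hBt, hBA⟩ := support_lemma (isHermitian_of_isSymm hs)
    have h1 := hBA A (isHermitian_of_isSymm hA.1)
    have h4 := (mem_Fc_iff hc hA.1).1 hA
    have h3 : (B * (A - (A + κ • (1 : Matrix (Fin m) (Fin m) ℝ)))).trace = - (κ * B.trace) := by
      rw [sub_add_cancel_left, Matrix.mul_neg, Matrix.trace_neg, Matrix.mul_smul, Matrix.mul_one,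
        Matrix.trace_smul, smul_eq_mul]
    have := mul_pos hκ (hBt h)
    have := PhiS_le_liftedAngle (A + κ • (1 : Matrix (Fin m) (Fin m) ℝ))
    linarith

lemma cmat_root_re_nonneg {n : ℕ} {A : Matrix (Fin (n+1)) (Fin (n+1)) ℝ} (hA : A.IsSymm)
    {z : ℂ} (hz : z ∈ (cmat A).charpoly.roots) : 0 ≤ z.re := by
  have h1 := Polynomial.isRoot_of_mem_roots hz
  rw [Polynomial.IsRoot, Matrix.eval_charpoly] at h1
  obtain ⟨v, hv, hv0⟩ := Matrix.exists_mulVec_eq_zero_iff.2 h1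
  have hH : (A.map (fun a => (a : ℂ))).IsHermitian := by
    ext i j
    simp [Matrix.conjTranspose_apply, hA.apply i j]
  have him := hH.im_star_dotProduct_mulVec_self v
  have h2 : star v ⬝ᵥ ((Matrix.scalar (Fin (n+1)) z - cmat A) *ᵥ v) = 0 := by
    rw [hv0]; simp
  rw [Matrix.sub_mulVec, dotProduct_sub, cmat, Matrix.add_mulVec, dotProduct_add,
    Matrix.smul_mulVec, dotProduct_smul] at h2
  have e1 : star v ⬝ᵥ (Matrix.scalar (Fin (n+1)) z *ᵥ v)
      = z * ((∑ i, Complex.normSq (v i) : ℝ) : ℂ) := by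
    simp only [Matrix.scalar_apply, dotProduct, Matrix.mulVec_diagonal, Pi.star_apply]
    push_cast
    rw [Finset.mul_sum]
    refine Finset.sum_congr rfl fun i _ => ?_
    rw [Complex.normSq_eq_conj_mul_self]
    simp only [RCLike.star_def]; ring
  have e2 : star v ⬝ᵥ (Inmat n *ᵥ v)
      = ((∑ i, (if i = 0 then 0 else Complex.normSq (v i)) : ℝ) : ℂ) := by
    simp only [Inmat, dotProduct, Matrix.mulVec_diagonal, Pi.star_apply]
    push_cast
    refine Finset.sum_congr rfl fun i _ => ?_
    split_ifs
    · simp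
    · rw [Complex.normSq_eq_conj_mul_self]
      simp only [RCLike.star_def]; ring
  rw [e1, e2] at h2
  have h3 := congrArg Complex.re h2
  have him' : (star v ⬝ᵥ (A.map (fun a => (a : ℂ))) *ᵥ v).im = 0 := him
  simp [him'] at h3
  have hpos : 0 < ∑ i, Complex.normSq (v i) := by
    obtain ⟨i, hi⟩ := Function.ne_iff.1 hv
    exact Finset.sum_pos' (fun i _ => Complex.normSq_nonneg _)
      ⟨i, Finset.mem_univ _, Complex.normSq_pos.2 hi⟩
  have hnn : 0 ≤ ∑ i, (if i = 0 then 0 else Complex.normSq (v i)) :=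
    Finset.sum_nonneg fun i _ => by split_ifs; exacts [le_rfl, Complex.normSq_nonneg _]
  by_contra hneg
  push Not at hneg
  have := mul_neg_of_neg_of_pos hneg hpos
  rw [Finset.mul_sum] at this
  rw [← Finset.mul_sum] at this
  linarith

lemma det_path {N : ℕ} (M : Matrix (Fin N) (Fin N) ℂ) (s : ℝ) :
    ((((1 - s : ℝ) : ℂ) • (1 : Matrix (Fin N) (Fin N) ℂ)) + (s : ℂ) • M).det
      = (M.charpoly.roots.map (fun z => ((1 - s : ℝ) : ℂ) + s * z)).prod := by
  have hcard : Multiset.card M.charpoly.roots = N := by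
    rw [← (IsAlgClosed.splits M.charpoly).natDegree_eq_card_roots, Matrix.charpoly_natDegree_eq_dim,
      Fintype.card_fin]
  by_cases hs : s = 0
  · subst hs; simp
  · have hs' : (s : ℂ) ≠ 0 := by exact_mod_cast hs
    have e1 : ((((1 - s : ℝ) : ℂ) • (1 : Matrix (Fin N) (Fin N) ℂ)) + (s : ℂ) • M)
        = (-(s : ℂ)) • (Matrix.scalar (Fin N) (-(((1 - s : ℝ) : ℂ) / s)) - M) := by
      ext i j
      by_cases hij : i = j
      · subst hij; simp; field_simp; ring
      · simp [hij]
    rw [e1, Matrix.det_smul, ← Matrix.eval_charpoly,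
      (IsAlgClosed.splits M.charpoly).eval_eq_prod_roots_of_monic (Matrix.charpoly_monic M)]
    rw [Fintype.card_fin]
    have e2 : (-(s : ℂ)) ^ N = (M.charpoly.roots.map (fun _ => (-(s : ℂ)))).prod := by
      rw [Multiset.map_const', Multiset.prod_replicate, hcard]
    rw [e2, ← Multiset.prod_map_mul]
    congr 1
    refine Multiset.map_congr rfl fun z _ => ?_
    field_simp
    push_cast
    ring

lemma arg_sum_angle (S : Multiset ℂ) (hS : ∀ z ∈ S, z ≠ 0) :
    (((S.map Complex.arg).sum : ℝ) : Real.Angle) = (Complex.arg S.prod : Real.Angle) := by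
  induction S using Multiset.induction_on with
  | empty => simp
  | cons a S ih =>
    have h1 : ∀ z ∈ S, z ≠ 0 := fun z hz => hS z (Multiset.mem_cons_of_mem hz)
    have h0 : S.prod ≠ 0 := fun h => h1 0 (Multiset.prod_eq_zero_iff.1 h) rfl
    rw [Multiset.map_cons, Multiset.sum_cons, Multiset.prod_cons, Real.Angle.coe_add, ih h1,
      Complex.arg_mul_coe_angle (hS a (Multiset.mem_cons_self a S)) h0]

lemma cont_arg_sum (S : Multiset ℂ) (T : Set ℝ)
    (hS : ∀ z ∈ S, ∀ s ∈ T, ((1 - s : ℝ) : ℂ) + s * z ∈ Complex.slitPlane) :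
    ContinuousOn (fun s : ℝ => ((S.map (fun z => ((1 - s : ℝ) : ℂ) + s * z)).map Complex.arg).sum)
      T := by
  induction S using Multiset.induction_on with
  | empty => simpa using continuousOn_const
  | cons a S ih =>
    simp only [Multiset.map_cons, Multiset.sum_cons]
    refine ContinuousOn.add ?_ (ih fun z hz => hS z (Multiset.mem_cons_of_mem hz))
    intro s hs
    have h := Complex.continuousAt_arg (hS a (Multiset.mem_cons_self a S) s hs)
    refine ContinuousAt.continuousWithinAt ?_
    exact ContinuousAt.comp (f := fun s : ℝ => ((1 - s : ℝ) : ℂ) + s * a) h (by fun_prop)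

lemma slit_path {z : ℂ} (hz : 0 ≤ z.re) (hz0 : z ≠ 0) {s : ℝ} (hs : s ∈ Set.Icc (0:ℝ) 1) :
    ((1 - s : ℝ) : ℂ) + s * z ∈ Complex.slitPlane := by
  rw [Complex.mem_slitPlane_iff]
  simp only [Complex.add_re, Complex.ofReal_re, Complex.mul_re, Complex.ofReal_im, zero_mul,
    sub_zero, Complex.add_im, Complex.mul_im, add_zero, zero_add]
  rcases eq_or_lt_of_le hs.2 with h | h
  · subst h
    rcases eq_or_lt_of_le hz with h' | h'
    · right
      intro h''
      apply hz0
      apply Complex.ext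
      · simpa using h'.symm
      · simpa using h''
    · left; simpa using h'
  · left
    have := mul_nonneg hs.1 hz
    linarith

lemma spaceTimeAngle_locConst {n : ℕ} (A : ℝ → Matrix (Fin (n+1)) (Fin (n+1)) ℝ)
    (hcont : Continuous A) (hsymm : ∀ σ, (A σ).IsSymm) (d : ℂ) (hd : d ≠ 0)
    (hdet : ∀ σ, (cmat (A σ)).det = d) (σ τ : ℝ) :
    spaceTimeAngle (A σ) = spaceTimeAngle (A τ) := by
  have hloc : IsLocallyConstant (fun σ => spaceTimeAngle (A σ)) := by
    rw [IsLocallyConstant.iff_eventually_eq]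
    intro σ₀
    set H : ℝ → ℝ → ℂ := fun σ s =>
      ((((1 - s : ℝ) : ℂ) • (1 : Matrix (Fin (n+1)) (Fin (n+1)) ℂ)) + (s : ℂ) • cmat (A σ)).det
      with hH
    have hcm : Continuous (fun σ => cmat (A σ)) := by
      unfold cmat
      have h1 : Continuous (fun σ => (A σ).map (fun a => (a : ℂ))) :=
        hcont.matrix_map Complex.continuous_ofReal
      exact continuous_const.add (h1.const_smul Complex.I)
    have hHc : Continuous (fun p : ℝ × ℝ => H p.1 p.2) := by
      simp only [hH]
      refine Continuous.matrix_det ?_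
      refine continuous_matrix fun i j => ?_
      have h2 : Continuous (fun p : ℝ × ℝ => cmat (A p.1) i j) :=
        (hcm.comp continuous_fst).matrix_elem i j
      simp only [Matrix.add_apply, Matrix.smul_apply, smul_eq_mul]
      fun_prop
    have hroot : ∀ σ, ∀ z ∈ (cmat (A σ)).charpoly.roots, ∀ s ∈ Set.Icc (0:ℝ) 1,
        ((1 - s : ℝ) : ℂ) + s * z ∈ Complex.slitPlane := by
      intro σ z hz s hs
      refine slit_path (cmat_root_re_nonneg (hsymm σ) hz) ?_ hs
      rintro rfl
      have h1 := Polynomial.isRoot_of_mem_roots hz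
      rw [Polynomial.IsRoot, Matrix.eval_charpoly] at h1
      simp [Matrix.det_neg] at h1
      exact hd ((hdet σ) ▸ h1)
    have hne : ∀ σ, ∀ s ∈ Set.Icc (0:ℝ) 1, H σ s ≠ 0 := by
      intro σ s hs
      simp only [hH]
      rw [det_path]
      intro h0
      rw [Multiset.prod_eq_zero_iff, Multiset.mem_map] at h0
      obtain ⟨z, hz, hz0⟩ := h0
      have := hroot σ z hz s hs
      rw [hz0] at this
      exact Complex.slitPlane_ne_zero this rfl
    have hev : ∀ᶠ σ in nhds σ₀, ∀ s ∈ Set.Icc (0:ℝ) 1, H σ s / H σ₀ s ∈ Complex.slitPlane := by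
      refine isCompact_Icc.eventually_forall_of_forall_eventually ?_
      intro s hs
      have hc1 : ContinuousAt (fun p : ℝ × ℝ => H p.1 p.2 / H σ₀ p.2) (σ₀, s) := by
        refine ContinuousAt.div hHc.continuousAt ?_ (hne σ₀ s hs)
        exact (hHc.comp (continuous_const.prodMk continuous_snd)).continuousAt
      refine hc1.eventually_mem ?_
      refine Complex.isOpen_slitPlane.mem_nhds ?_
      simp only
      rw [div_self (hne σ₀ s hs)]
      exact Complex.one_mem_slitPlane
    filter_upwards [hev] with σ hσ
    set R := fun σ => (cmat (A σ)).charpoly.roots with hR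
    set G : ℝ → ℝ → ℝ := fun σ s =>
      (((R σ).map (fun z => ((1 - s : ℝ) : ℂ) + s * z)).map Complex.arg).sum with hG
    have hGc : ∀ σ, ContinuousOn (G σ) (Set.Icc 0 1) := fun σ => cont_arg_sum _ _ (hroot σ)
    have hGa : ∀ σ, ∀ s ∈ Set.Icc (0:ℝ) 1,
        ((G σ s : ℝ) : Real.Angle) = (Complex.arg (H σ s) : Real.Angle) := by
      intro σ s hs
      simp only [hG, hH]
      rw [arg_sum_angle, det_path]
      intro z hz
      obtain ⟨y, hy, rfl⟩ := Multiset.mem_map.1 hz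
      exact Complex.slitPlane_ne_zero (hroot σ y hy s hs)
    set φ : ℝ → ℝ := fun s => G σ s - G σ₀ s - Complex.arg (H σ s / H σ₀ s) with hφ
    have hφc : ContinuousOn φ (Set.Icc 0 1) := by
      refine ((hGc σ).sub (hGc σ₀)).sub ?_
      intro s hs
      refine ContinuousAt.continuousWithinAt ?_
      refine ContinuousAt.comp (f := fun s => H σ s / H σ₀ s)
        (Complex.continuousAt_arg (hσ s hs)) ?_
      refine ContinuousAt.div ?_ ?_ (hne σ₀ s hs)
      · exact (hHc.comp (continuous_const.prodMk continuous_id)).continuousAt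
      · exact (hHc.comp (continuous_const.prodMk continuous_id)).continuousAt
    have hφm : Set.MapsTo φ (Set.Icc 0 1) (AddSubgroup.zmultiples (2 * π) : Set ℝ) := by
      intro s hs
      have h0 : ((φ s : ℝ) : Real.Angle) = 0 := by
        simp only [hφ]
        rw [Real.Angle.coe_sub, Real.Angle.coe_sub, hGa _ s hs, hGa _ s hs,
          Complex.arg_div_coe_angle (hne σ s hs) (hne σ₀ s hs), sub_self]
      obtain ⟨k, hk⟩ := Real.Angle.coe_eq_zero_iff.1 h0
      rw [← hk]
      exact AddSubgroup.zsmul_mem_zmultiples _ _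
    have hdisc : IsDiscrete (AddSubgroup.zmultiples (2 * π) : Set ℝ) := by
      rw [isDiscrete_iff_discreteTopology]
      exact inferInstanceAs (DiscreteTopology (AddSubgroup.zmultiples (2 * π)))
    have h01 := isPreconnected_Icc.constant_of_mapsTo hdisc hφc hφm
      (Set.right_mem_Icc.2 zero_le_one) (Set.left_mem_Icc.2 zero_le_one)
    have hφ0 : φ 0 = 0 := by
      simp [hφ, hG, hH]
    have hφ1 : φ 1 = G σ 1 - G σ₀ 1 := by
      simp only [hφ, hH]
      simp [hdet, hd]
    have hG1 : ∀ σ, G σ 1 = spaceTimeAngle (A σ) := by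
      intro σ
      rw [spaceTimeAngle, if_neg (by rw [hdet]; exact hd)]
      simp [hG, hR]
    rw [hφ0, hφ1, hG1, hG1] at h01
    linarith
  exact hloc.apply_eq_of_preconnectedSpace σ τ

/-- block diagonal matrix diag(a, S) -/
noncomputable def blk {n : ℕ} (a : ℝ) (S : Matrix (Fin n) (Fin n) ℝ) : Matrix (Fin (n+1)) (Fin (n+1)) ℝ :=
  Matrix.of fun i j => Fin.cases (motive := fun _ => ℝ)
    (Fin.cases (motive := fun _ => ℝ) a (fun _ => 0) j)
    (fun i => Fin.cases (motive := fun _ => ℝ) 0 (fun j => S i j) j) i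

@[simp] lemma blk_zero_zero {n : ℕ} (a : ℝ) (S : Matrix (Fin n) (Fin n) ℝ) : blk a S 0 0 = a := rfl
@[simp] lemma blk_zero_succ {n : ℕ} (a : ℝ) (S : Matrix (Fin n) (Fin n) ℝ) (j : Fin n) :
    blk a S 0 j.succ = 0 := rfl
@[simp] lemma blk_succ_zero {n : ℕ} (a : ℝ) (S : Matrix (Fin n) (Fin n) ℝ) (j : Fin n) :
    blk a S j.succ 0 = 0 := rfl
@[simp] lemma blk_succ_succ {n : ℕ} (a : ℝ) (S : Matrix (Fin n) (Fin n) ℝ) (i j : Fin n) :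
    blk a S i.succ j.succ = S i j := rfl

lemma blk_isSymm {n : ℕ} {a : ℝ} {S : Matrix (Fin n) (Fin n) ℝ} (hS : S.IsSymm) :
    (blk a S).IsSymm := by
  ext i j
  refine Fin.cases ?_ (fun i => ?_) i <;> refine Fin.cases ?_ (fun j => ?_) j <;>
    simp [Matrix.transpose_apply, hS.apply]

lemma charpoly_one_add {n : ℕ} {S : Matrix (Fin n) (Fin n) ℝ} (hS : S.IsHermitian) :
    ((1 : Matrix (Fin n) (Fin n) ℂ) + Complex.I • S.map (fun a => (a : ℂ))).charpoly
      = ∏ j, (Polynomial.X - Polynomial.C (1 + Complex.I * (hS.eigenvalues j : ℂ))) := by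
  obtain ⟨V, hV1, hV2, hVA⟩ := spectral_decomp hS
  set lam := hS.eigenvalues with hlam
  set Vc : Matrix (Fin n) (Fin n) ℂ := V.map (Complex.ofRealHom) with hVc
  have h1 : Vc * Vcᵀ = 1 := by
    have := congrArg (fun M : Matrix (Fin n) (Fin n) ℝ => M.map Complex.ofRealHom) hV1
    simpa [Matrix.map_mul, Matrix.transpose_map] using this
  have h2 : Vcᵀ * Vc = 1 := by
    have := congrArg (fun M : Matrix (Fin n) (Fin n) ℝ => M.map Complex.ofRealHom) hV2
    simpa [Matrix.map_mul, Matrix.transpose_map] using this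
  have h3 : S.map (fun a => (a : ℂ)) = Vc * Matrix.diagonal (fun j => (lam j : ℂ)) * Vcᵀ := by
    have := congrArg (fun M : Matrix (Fin n) (Fin n) ℝ => M.map Complex.ofRealHom) hVA
    simp only [Matrix.map_mul, Matrix.transpose_map] at this
    rw [Matrix.diagonal_map (by simp)] at this
    exact this
  have h4 : (1 : Matrix (Fin n) (Fin n) ℂ) + Complex.I • S.map (fun a => (a : ℂ))
      = Vc * (Matrix.diagonal (fun j => 1 + Complex.I * (lam j : ℂ))) * Vcᵀ := by
    have : (Matrix.diagonal (fun j => 1 + Complex.I * (lam j : ℂ)))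
      = 1 + Complex.I • Matrix.diagonal (fun j => (lam j : ℂ)) := by
      ext i j
      by_cases hij : i = j
      · subst hij; simp
      · simp [hij]
    rw [this, Matrix.mul_add, Matrix.add_mul, Matrix.mul_one, h1, h3, Matrix.mul_smul,
      Matrix.smul_mul]
  rw [h4, Matrix.charpoly_mul_comm, ← Matrix.mul_assoc, h2, Matrix.one_mul,
    Matrix.charpoly_diagonal]

lemma cmat_blk_charpoly {n : ℕ} (a : ℝ) (S : Matrix (Fin n) (Fin n) ℝ) :
    (cmat (blk a S)).charpoly = (Polynomial.X - Polynomial.C (Complex.I * a)) *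
      ((1 : Matrix (Fin n) (Fin n) ℂ) + Complex.I • S.map (fun a => (a : ℂ))).charpoly := by
  rw [Matrix.charpoly, Matrix.det_succ_row_zero, Fin.sum_univ_succ]
  rw [Finset.sum_eq_zero, add_zero]
  · have e : (cmat (blk a S)).charmatrix.submatrix Fin.succ (Fin.succAbove 0)
        = ((1 : Matrix (Fin n) (Fin n) ℂ) + Complex.I • S.map (fun a => (a : ℂ))).charmatrix := by
      ext1 i j
      by_cases hij : i = j
      · subst hij; simp [Matrix.charmatrix_apply_eq, cmat, Inmat]
      · simp [Matrix.charmatrix_apply_ne, hij, cmat, Inmat]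
    rw [e, Matrix.charpoly]
    simp [cmat, Inmat, Matrix.charmatrix_apply_eq]
  · intro j _
    have e0 : (cmat (blk a S)).charmatrix 0 j.succ = 0 := by
      rw [Matrix.charmatrix_apply_ne _ _ _ (Fin.succ_ne_zero j).symm]
      simp [cmat, Inmat, Matrix.diagonal_apply_ne _ (Fin.succ_ne_zero j).symm]
    rw [e0]; ring

lemma roots_prod_fin {K : Type*} [Field K] {n : ℕ} (f : Fin n → K) :
    (∏ j, (Polynomial.X - Polynomial.C (f j))).roots = Multiset.map f Finset.univ.val := by
  have := Polynomial.roots_multiset_prod_X_sub_C (Multiset.map f Finset.univ.val)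
  rwa [Multiset.map_map] at this

lemma arg_one_add (l : ℝ) : Complex.arg (1 + Complex.I * l) = Real.arctan l := by
  have h1 : |Complex.arg (1 + Complex.I * l)| < π / 2 := by
    rw [Complex.abs_arg_lt_pi_div_two_iff]; left; simp
  have h2 : Real.tan (Complex.arg (1 + Complex.I * l)) = l := by
    rw [Complex.tan_arg]; simp
  conv_rhs => rw [← h2]
  rw [Real.arctan_tan (abs_lt.1 h1).1 (abs_lt.1 h1).2]

lemma blk_facts {n : ℕ} {a : ℝ} (ha : a ≠ 0) {S : Matrix (Fin n) (Fin n) ℝ} (hS : S.IsSymm) :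
    (cmat (blk a S)).det ≠ 0 ∧
      spaceTimeAngle (blk a S) = Complex.arg (Complex.I * a) + liftedAngle S := by
  have hH := isHermitian_of_isSymm hS
  have hcp := cmat_blk_charpoly a S
  rw [charpoly_one_add hH] at hcp
  have hdet : (cmat (blk a S)).det ≠ 0 := by
    rw [Matrix.det_eq_sign_charpoly_coeff, Polynomial.coeff_zero_eq_eval_zero, hcp]
    refine mul_ne_zero (pow_ne_zero _ (by norm_num)) ?_
    rw [Polynomial.eval_mul, Polynomial.eval_prod]
    refine mul_ne_zero (by simpa using ha) (Finset.prod_ne_zero_iff.2 fun i _ => ?_)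
    simp only [Polynomial.eval_sub, Polynomial.eval_X, Polynomial.eval_C]
    intro h
    have := congrArg Complex.re h
    simp at this
  refine ⟨hdet, ?_⟩
  rw [spaceTimeAngle, if_neg hdet, hcp, Polynomial.roots_mul, Polynomial.roots_X_sub_C,
    roots_prod_fin, Multiset.map_add, Multiset.sum_add, liftedAngle_eq hH]
  · rw [Multiset.map_map, Multiset.map_singleton, Multiset.sum_singleton]
    congr 1
    have e : ∀ f : Fin n → ℝ, (Multiset.map f Finset.univ.val).sum = ∑ j, f j := fun f => rfl
    rw [e]
    exact Finset.sum_congr rfl fun j _ => arg_one_add _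
  · rw [← charpoly_one_add hH]
    exact mul_ne_zero (Polynomial.X_sub_C_ne_zero _) (Matrix.charpoly_monic _).ne_zero

/-- Schur complement -/
noncomputable def schur {n : ℕ} (A : Matrix (Fin (n+1)) (Fin (n+1)) ℝ) : Matrix (Fin n) (Fin n) ℝ :=
  Matrix.of fun i j => A i.succ j.succ - A i.succ 0 * A 0 j.succ / A 0 0

/-- elementary matrix with first row (1, r) -/
noncomputable def elm {n : ℕ} (r : Fin n → ℝ) : Matrix (Fin (n+1)) (Fin (n+1)) ℝ :=
  Matrix.of fun i j => Fin.cases (motive := fun _ => ℝ)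
    (Fin.cases (motive := fun _ => ℝ) 1 (fun j => r j) j)
    (fun i => Fin.cases (motive := fun _ => ℝ) 0 (fun j => if i = j then 1 else 0) j) i

lemma sta {n : ℕ} {A : Matrix (Fin (n+1)) (Fin (n+1)) ℝ} (hA : A.IsSymm) (ha : A 0 0 ≠ 0) :
    spaceTimeAngle A = Complex.arg (Complex.I * (A 0 0 : ℝ)) + liftedAngle (schur A) := by
  set r : Fin n → ℝ := fun j => A 0 j.succ / A 0 0 with hr
  have hsc : (schur A).IsSymm := by
    ext i j
    simp only [Matrix.transpose_apply, schur, Matrix.of_apply]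
    rw [hA.apply i.succ j.succ, hA.apply 0 j.succ, hA.apply i.succ 0]; ring
  set P : ℝ → Matrix (Fin (n+1)) (Fin (n+1)) ℝ := fun σ =>
    (elm (σ • r))ᵀ * blk (A 0 0) (schur A) * elm (σ • r) with hP
  have hP1 : P 1 = A := by
    ext i j
    simp only [hP, one_smul]
    refine Fin.cases ?_ (fun i => ?_) i <;> refine Fin.cases ?_ (fun j => ?_) j <;>
      simp [Matrix.mul_apply, Fin.sum_univ_succ, elm, schur, hr]
    · field_simp
    · field_simp; exact hA.apply _ _
    · field_simp
      rw [hA.apply i.succ 0]; ring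
  have hP0 : P 0 = blk (A 0 0) (schur A) := by
    ext i j
    simp only [hP, zero_smul]
    refine Fin.cases ?_ (fun i => ?_) i <;> refine Fin.cases ?_ (fun j => ?_) j <;>
      simp [Matrix.mul_apply, Fin.sum_univ_succ, elm]
  have hcont : Continuous P := by
    have he : Continuous (fun σ : ℝ => elm (σ • r)) := by
      refine continuous_matrix fun i j => ?_
      refine Fin.cases ?_ (fun i => ?_) i <;> refine Fin.cases ?_ (fun j => ?_) j <;>
        simp [elm] <;> fun_prop
    exact (he.matrix_transpose.matrix_mul continuous_const).matrix_mul he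
  have hsymm : ∀ σ, (P σ).IsSymm := by
    intro σ
    simp only [hP, Matrix.IsSymm, Matrix.transpose_mul, Matrix.transpose_transpose]
    rw [(blk_isSymm hsc).eq, Matrix.mul_assoc]
  have hcm : ∀ σ, cmat (P σ) = ((elm (σ • r))ᵀ.map Complex.ofRealHom) *
      cmat (blk (A 0 0) (schur A)) * ((elm (σ • r)).map Complex.ofRealHom) := by
    intro σ
    have h1 : ((elm (σ • r))ᵀ.map Complex.ofRealHom) * Inmat n *
        ((elm (σ • r)).map Complex.ofRealHom) = Inmat n := by
      ext i j
      refine Fin.cases ?_ (fun i => ?_) i <;> refine Fin.cases ?_ (fun j => ?_) j <;>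
        simp [Matrix.mul_apply, Fin.sum_univ_succ, elm, Inmat, Matrix.diagonal_apply,
          Fin.succ_ne_zero, (Fin.succ_ne_zero _).symm, apply_ite Complex.ofReal]
      exact if_congr eq_comm rfl rfl
    rw [cmat, cmat, Matrix.mul_add, Matrix.add_mul, h1, Matrix.mul_smul, Matrix.smul_mul]
    congr 2
    change (P σ).map Complex.ofRealHom = _
    simp only [hP, Matrix.map_mul]
    rfl
  have hed : ∀ σ : ℝ, (elm (σ • r)).det = 1 := by
    intro σ
    rw [Matrix.det_of_isUpperTriangular]
    · rw [Fin.prod_univ_succ]; simp [elm]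
    · intro i j hij
      revert hij
      refine Fin.cases ?_ (fun i => ?_) i <;> refine Fin.cases ?_ (fun j => ?_) j <;>
        simp [elm]
      intro h h2; omega
  have hdet : ∀ σ, (cmat (P σ)).det = (cmat (blk (A 0 0) (schur A))).det := by
    intro σ
    rw [hcm, Matrix.det_mul, Matrix.det_mul]
    have e1 : ((elm (σ • r)).map Complex.ofRealHom).det = 1 := by
      rw [← RingHom.mapMatrix_apply, ← RingHom.map_det, hed]; simp
    have e2 : ((elm (σ • r))ᵀ.map Complex.ofRealHom).det = 1 := by
      rw [← RingHom.mapMatrix_apply, ← RingHom.map_det, Matrix.det_transpose, hed]; simp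
    rw [e1, e2]; ring
  have hb := blk_facts ha hsc
  rw [← hb.2, ← hP0, ← hP1]
  rw [hP1]
  have := spaceTimeAngle_locConst P hcont hsymm _ hb.1 hdet 1 0
  rw [hP1] at this
  exact this

lemma liftedAngle_neg {m : ℕ} {S : Matrix (Fin m) (Fin m) ℝ} (hS : S.IsSymm) :
    liftedAngle (-S) = - liftedAngle S := by
  have hH := isHermitian_of_isSymm hS
  have hN : (-S).IsHermitian := hH.neg
  obtain ⟨V, hV1, hV2, hVA⟩ := spectral_decomp hH
  have h4 : -S = V * (Matrix.diagonal (fun j => - hH.eigenvalues j)) * Vᵀ := by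
    have : (Matrix.diagonal (fun j => - hH.eigenvalues j)) = - Matrix.diagonal hH.eigenvalues := by
      rw [Matrix.diagonal_neg]
    rw [this, Matrix.mul_neg, Matrix.neg_mul, ← hVA]
  have h5 : (-S).charpoly = ∏ j, (Polynomial.X - Polynomial.C (- hH.eigenvalues j)) := by
    rw [h4, Matrix.charpoly_mul_comm, ← Matrix.mul_assoc, hV2, Matrix.one_mul,
      Matrix.charpoly_diagonal]
  have h6 := hN.roots_charpoly_eq_eigenvalues
  rw [h5, roots_prod_fin] at h6
  have h7 := congrArg (fun M : Multiset ℝ => (M.map Real.arctan).sum) h6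
  rw [liftedAngle_eq hH, liftedAngle_eq hN]
  simp only [Multiset.map_map, Function.comp_def] at h7
  simp only [Real.arctan_neg] at h7
  have e : ∀ f : Fin m → ℝ, (Multiset.map f Finset.univ.val).sum = ∑ j, f j := fun f => rfl
  simp only [e, Finset.sum_neg_distrib] at h7
  exact h7.symm

lemma arg_I_mul_pos {a : ℝ} (ha : 0 < a) : Complex.arg (Complex.I * a) = π / 2 := by
  rw [mul_comm, Complex.arg_real_mul _ ha, Complex.arg_I]

lemma arg_I_mul_neg {a : ℝ} (ha : a < 0) : Complex.arg (Complex.I * a) = -(π / 2) := by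
  have : Complex.I * (a : ℂ) = ((-a : ℝ) : ℂ) * (-Complex.I) := by push_cast; ring
  rw [this, Complex.arg_real_mul _ (by linarith), Complex.arg_neg_I]

lemma schur_isSymm {n : ℕ} {A : Matrix (Fin (n+1)) (Fin (n+1)) ℝ} (hA : A.IsSymm) :
    (schur A).IsSymm := by
  ext i j
  simp only [Matrix.transpose_apply, schur, Matrix.of_apply]
  rw [hA.apply i.succ j.succ, hA.apply 0 j.succ, hA.apply i.succ 0]; ring

lemma notMem_calF_neg {n : ℕ} {c : ℝ} (hc : n * (π / 2) ≤ c)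
    {A : Matrix (Fin (n+1)) (Fin (n+1)) ℝ} (ha : A 0 0 < 0) : A ∉ calF n c := by
  rintro ⟨hA, h⟩
  rw [sta hA ha.ne, arg_I_mul_neg ha] at h
  have := liftedAngle_le (schur A)
  have := Real.pi_pos
  linarith

lemma notMem_calF_schur {n : ℕ} {c : ℝ}
    {A : Matrix (Fin (n+1)) (Fin (n+1)) ℝ} (ha : 0 < A 0 0) (hS : schur A ∉ Fc n (c - π / 2)) :
    A ∉ calF n c := by
  rintro ⟨hA, h⟩
  rw [sta hA ha.ne', arg_I_mul_pos ha] at h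
  exact hS ⟨schur_isSymm hA, by linarith⟩

lemma notMem_calF_blk {n : ℕ} {c κ : ℝ} (hκ : 0 < κ)
    {S : Matrix (Fin n) (Fin n) ℝ} (hS : S.IsSymm) (h : c - π / 2 < liftedAngle S) :
    -(blk κ S) ∉ calF n (-c) := by
  have e : -(blk κ S) = blk (-κ) (-S) := by
    ext i j
    refine Fin.cases ?_ (fun i => ?_) i <;> refine Fin.cases ?_ (fun j => ?_) j <;> simp
  rw [e]
  rintro ⟨-, h'⟩
  rw [(blk_facts (by linarith : -κ ≠ 0) hS.neg).2, arg_I_mul_neg (by linarith),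
    liftedAngle_neg hS] at h'
  linarith

lemma mem_dualSub {m : ℕ} {F : Set (Matrix (Fin m) (Fin m) ℝ)} {A : Matrix (Fin m) (Fin m) ℝ}
    (hA : A.IsSymm) (h : -A ∉ F) : A ∈ dualSub F :=
  ⟨hA, fun h' => h (h'.2.self_of_nhds h'.1)⟩

lemma psd_of_small {m : ℕ} {κ : ℝ} {E : Matrix (Fin m) (Fin m) ℝ}
    (hE : E.IsSymm) (h : ∀ i j, |E i j| ≤ κ / (m + 1)) (hκ : 0 < κ) :
    (E + κ • (1 : Matrix (Fin m) (Fin m) ℝ)).PosSemidef := by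
  have hs : (E + κ • (1 : Matrix (Fin m) (Fin m) ℝ)).IsSymm :=
    hE.add (Matrix.isSymm_one.smul κ)
  refine Matrix.PosSemidef.of_dotProduct_mulVec_nonneg (isHermitian_of_isSymm hs) fun x => ?_
  rw [Matrix.add_mulVec, dotProduct_add, Matrix.smul_mulVec, Matrix.one_mulVec, dotProduct_smul]
  simp only [star_trivial, smul_eq_mul]
  have e1 : x ⬝ᵥ E *ᵥ x = ∑ i, ∑ j, x i * (E i j * x j) := by
    simp only [dotProduct, Matrix.mulVec, Finset.mul_sum]
  have e2 : x ⬝ᵥ x = ∑ i, x i ^ 2 := by simp only [dotProduct, sq]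
  have h1 : ∀ i j, -(κ / (m + 1)) * ((x i ^ 2 + x j ^ 2) / 2) ≤ x i * (E i j * x j) := by
    intro i j
    have h2 := (h i j)
    have h3 : |x i * (E i j * x j)| ≤ κ / (m + 1) * ((x i ^ 2 + x j ^ 2) / 2) := by
      rw [abs_mul, abs_mul]
      have h4 : |x i| * |x j| ≤ (x i ^ 2 + x j ^ 2) / 2 := by
        rw [← sq_abs (x i), ← sq_abs (x j)]
        nlinarith [sq_nonneg (|x i| - |x j|)]
      calc |x i| * (|E i j| * |x j|) = |E i j| * (|x i| * |x j|) := by ring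
        _ ≤ _ := mul_le_mul h2 h4 (by positivity) (by positivity)
    have := neg_le_of_abs_le h3
    linarith
  have h5 : ∑ i : Fin m, ∑ j : Fin m, -(κ / (m + 1)) * ((x i ^ 2 + x j ^ 2) / 2)
      = - (κ / (m + 1)) * (m * ∑ i, x i ^ 2) := by
    simp only [← Finset.mul_sum, ← Finset.sum_div, Finset.sum_add_distrib, Finset.sum_const,
      Finset.card_univ, Fintype.card_fin, nsmul_eq_mul]
    ring
  have h6 := Finset.sum_le_sum fun i (_ : i ∈ Finset.univ) =>
    Finset.sum_le_sum fun j (_ : j ∈ Finset.univ) => h1 i j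
  rw [h5] at h6
  rw [e1, e2]
  have h7 : 0 ≤ ∑ i, x i ^ 2 := Finset.sum_nonneg fun i _ => sq_nonneg _
  have h8 : κ / (m + 1) * (m * ∑ i, x i ^ 2) ≤ κ * ∑ i, x i ^ 2 := by
    rw [← mul_assoc]
    refine mul_le_mul_of_nonneg_right ?_ h7
    rw [div_mul_eq_mul_div, div_le_iff₀ (by positivity)]
    nlinarith
  linarith

lemma Fc_symInterior {m : ℕ} {c κ : ℝ} (hc : ((m : ℝ) - 1) * (π / 2) ≤ c) (hκ : 0 < κ)
    {A : Matrix (Fin m) (Fin m) ℝ} (hA : A ∈ Fc m c) :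
    A + κ • (1 : Matrix (Fin m) (Fin m) ℝ) ∈ symInterior (Fc m c) := by
  refine ⟨hA.1.add (Matrix.isSymm_one.smul κ), ?_⟩
  have hev : ∀ᶠ B : Matrix (Fin m) (Fin m) ℝ in nhds (A + κ • (1 : Matrix (Fin m) (Fin m) ℝ)),
      ∀ i j, |(B - (A + κ • (1 : Matrix (Fin m) (Fin m) ℝ))) i j| ≤ κ / (m + 1) := by
    rw [Filter.eventually_all]; intro i
    rw [Filter.eventually_all]; intro j
    have hcont : Continuous fun B : Matrix (Fin m) (Fin m) ℝ =>
        |(B - (A + κ • (1 : Matrix (Fin m) (Fin m) ℝ))) i j| := by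
      have : Continuous fun B : Matrix (Fin m) (Fin m) ℝ => B i j :=
        continuous_id.matrix_elem i j
      simp only [Matrix.sub_apply]
      fun_prop
    have := hcont.tendsto (A + κ • (1 : Matrix (Fin m) (Fin m) ℝ))
    simp only [sub_self, Matrix.zero_apply, abs_zero] at this
    have hp : 0 < κ / (m + 1) := by positivity
    exact (this.eventually (gt_mem_nhds hp)).mono fun B hB => le_of_lt hB
  filter_upwards [hev] with B hB hBs
  refine Fc_mono hc hA hBs ?_
  have := psd_of_small (E := B - (A + κ • (1 : Matrix (Fin m) (Fin m) ℝ)))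
    (hBs.sub (hA.1.add (Matrix.isSymm_one.smul κ))) hB hκ
  convert this using 1
  abel

lemma hessianMatrix_apply {m : ℕ} (v : (Fin m → ℝ) → ℝ) (x : Fin m → ℝ) (i j : Fin m) :
    hessianMatrix v x i j = fderiv ℝ (fderiv ℝ v) x (Pi.single i 1) (Pi.single j 1) := by
  simp [hessianMatrix, iteratedFDeriv_two_apply]

lemma hessianMatrix_isSymm {m : ℕ} {v : (Fin m → ℝ) → ℝ} {x : Fin m → ℝ}
    (hv : ContDiffAt ℝ 2 v x) : (hessianMatrix v x).IsSymm := by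
  ext i j
  rw [Matrix.transpose_apply, hessianMatrix_apply, hessianMatrix_apply]
  exact (hv.isSymmSndFDerivAt (by simp)).eq _ _

lemma vec_eq_sum_single {m : ℕ} (y : Fin m → ℝ) : y = ∑ i, y i • (Pi.single i (1:ℝ) : Fin m → ℝ) := by
  ext k; simp [Finset.sum_apply, Pi.single_apply]

lemma fderiv_fderiv_eq {m : ℕ} (v : (Fin m → ℝ) → ℝ) (x y z : Fin m → ℝ) :
    fderiv ℝ (fderiv ℝ v) x y z = y ⬝ᵥ hessianMatrix v x *ᵥ z := by
  conv_lhs => rw [vec_eq_sum_single y, vec_eq_sum_single z]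
  simp only [map_sum, map_smul, _root_.sum_apply, _root_.smul_apply,
    dotProduct, Matrix.mulVec, Finset.mul_sum, hessianMatrix_apply, smul_eq_mul]
  rw [Finset.sum_comm]
  refine Finset.sum_congr rfl fun i _ => Finset.sum_congr rfl fun j _ => by ring

lemma norm_sq_le_dot {m : ℕ} (y : Fin m → ℝ) : ‖y‖ * ‖y‖ ≤ y ⬝ᵥ y := by
  have hyy : 0 ≤ y ⬝ᵥ y := Finset.sum_nonneg fun i _ => mul_self_nonneg _
  have h : ‖y‖ ≤ √(y ⬝ᵥ y) := by
    refine (pi_norm_le_iff_of_nonneg (Real.sqrt_nonneg _)).2 fun i => ?_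
    refine Real.le_sqrt_of_sq_le ?_
    rw [Real.norm_eq_abs, sq_abs, sq]
    exact Finset.single_le_sum (f := fun i => y i * y i) (fun j _ => mul_self_nonneg _)
      (Finset.mem_univ i)
  calc _ ≤ √(y ⬝ᵥ y) * √(y ⬝ᵥ y) := mul_self_le_mul_self (norm_nonneg _) h
    _ = _ := Real.mul_self_sqrt hyy

lemma taylor2 {m : ℕ} {v : (Fin m → ℝ) → ℝ} {x₁ : Fin m → ℝ}
    (hv : ContDiffAt ℝ 2 v x₁) {s : ℝ} (hs : 0 < s) :
    ∀ᶠ x in nhds x₁, |v x - (v x₁ + fderiv ℝ v x₁ (x - x₁)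
      + (1 / 2) * ((x - x₁) ⬝ᵥ hessianMatrix v x₁ *ᵥ (x - x₁)))| ≤ s * ((x - x₁) ⬝ᵥ (x - x₁)) := by
  set L := fderiv ℝ (fderiv ℝ v) x₁ with hL
  have hsym : ∀ a b, L a b = L b a := fun a b => (hv.isSymmSndFDerivAt (by simp)).eq a b
  have hd : HasFDerivAt (fderiv ℝ v) L x₁ := by
    have : ContDiffAt ℝ 1 (fderiv ℝ v) x₁ := hv.fderiv_right (by norm_num)
    exact (this.differentiableAt (by norm_num)).hasFDerivAt
  have hlo := hd.isLittleO.def hs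
  have hdiff : ∀ᶠ x in nhds x₁, DifferentiableAt ℝ v x := by
    have := hv.eventually (by simp)
    exact this.mono fun x hx => hx.differentiableAt (by norm_num)
  obtain ⟨r, hr, hball⟩ := Metric.eventually_nhds_iff_ball.1 (hlo.and hdiff)
  filter_upwards [Metric.ball_mem_nhds x₁ hr] with x hx
  set R : (Fin m → ℝ) → ℝ := fun z => v z - (v x₁ + fderiv ℝ v x₁ (z - x₁)
      + (1 / 2) * (L (z - x₁) (z - x₁))) with hR
  have hRd : ∀ z ∈ Metric.ball x₁ r, HasFDerivAt R
      (fderiv ℝ v z - (fderiv ℝ v x₁ + L (z - x₁))) z := by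
    intro z hz
    have h1 : HasFDerivAt v (fderiv ℝ v z) z := (hball z hz).2.hasFDerivAt
    have hid : HasFDerivAt (fun z : Fin m → ℝ => z - x₁) (ContinuousLinearMap.id ℝ _) z :=
      (hasFDerivAt_id z).sub_const x₁
    have h2 : HasFDerivAt (fun z => fderiv ℝ v x₁ (z - x₁)) (fderiv ℝ v x₁) z := by
      exact (fderiv ℝ v x₁).hasFDerivAt.comp z hid
    have h3 : HasFDerivAt (fun z => L (z - x₁)) L z := by
      exact L.hasFDerivAt.comp z hid
    have h4 := h3.clm_apply hid
    have h5 := h1.sub ((h2.const_add (v x₁)).add (h4.const_mul (1/2)))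
    refine h5.congr_fderiv ?_
    ext w
    have := hsym z w
    have := hsym x₁ w
    simp
    linarith
  have hx' : ‖x - x₁‖ < r := by simpa [dist_eq_norm] using hx
  have hmv := (convex_ball x₁ (r)).inter (convex_closedBall x₁ ‖x - x₁‖)
  have := hmv.norm_image_sub_le_of_norm_hasFDerivWithin_le (f := R)
    (f' := fun z => fderiv ℝ v z - (fderiv ℝ v x₁ + L (z - x₁))) (C := s * ‖x - x₁‖)
    (x := x₁) (y := x)
    (fun z hz => (hRd z hz.1).hasFDerivWithinAt) ?_ ⟨Metric.mem_ball_self hr, by simp⟩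
    ⟨hx, by simp [dist_eq_norm]⟩
  · have h0 : R x₁ = 0 := by simp [hR]
    rw [h0, sub_zero, Real.norm_eq_abs] at this
    rw [← fderiv_fderiv_eq]
    calc _ ≤ _ := this
      _ = s * (‖x - x₁‖ * ‖x - x₁‖) := by ring
      _ ≤ _ := mul_le_mul_of_nonneg_left (norm_sq_le_dot _) hs.le
  · intro z hz
    have h1 := (hball z hz.1).1
    have h2 : ‖z - x₁‖ ≤ ‖x - x₁‖ := by simpa [dist_eq_norm] using hz.2
    rw [← sub_sub]
    calc _ ≤ _ := h1
      _ ≤ _ := mul_le_mul_of_nonneg_left h2 hs.le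

lemma localMax_hess {m : ℕ} {v : (Fin m → ℝ) → ℝ} {x₁ : Fin m → ℝ}
    (hv : ContDiffAt ℝ 2 v x₁) (hmax : IsLocalMax v x₁) : (-(hessianMatrix v x₁)).PosSemidef := by
  have hs := hessianMatrix_isSymm hv
  refine Matrix.PosSemidef.of_dotProduct_mulVec_nonneg (isHermitian_of_isSymm hs.neg) fun y => ?_
  rw [Matrix.neg_mulVec, dotProduct_neg, star_trivial]
  by_contra hneg
  push Not at hneg
  have hpos : 0 < y ⬝ᵥ hessianMatrix v x₁ *ᵥ y := by linarith
  set q := y ⬝ᵥ hessianMatrix v x₁ *ᵥ y with hq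
  have hyy : 0 ≤ y ⬝ᵥ y := Finset.sum_nonneg fun i _ => mul_self_nonneg _
  set s := q / (4 * (y ⬝ᵥ y + 1)) with hsdef
  have hsp : 0 < s := by positivity
  have h1 := (taylor2 hv hsp).and hmax
  have hc : Tendsto (fun σ : ℝ => x₁ + σ • y) (nhds 0) (nhds x₁) := by
    have : Continuous (fun σ : ℝ => x₁ + σ • y) := by fun_prop
    simpa using this.tendsto 0
  have h2 := hc.eventually h1
  have h3 : ∀ᶠ σ : ℝ in nhdsWithin 0 (Set.Ioi 0), 0 < σ := eventually_mem_nhdsWithin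
  obtain ⟨σ, ⟨hσ1, hσ2⟩, hσ⟩ := ((h2.filter_mono nhdsWithin_le_nhds).and h3).exists
  rw [hmax.fderiv_eq_zero] at hσ1
  simp only [add_sub_cancel_left, _root_.zero_apply, add_zero, Matrix.mulVec_smul,
    dotProduct_smul, smul_dotProduct, smul_eq_mul, ← hq] at hσ1
  have h4 := neg_le_of_abs_le hσ1
  have h5 : s * (σ * (σ * (y ⬝ᵥ y))) ≤ σ * (σ * (q / 4)) := by
    have : s * (y ⬝ᵥ y) ≤ q / 4 := by
      rw [hsdef, div_mul_eq_mul_div, div_le_div_iff₀ (by positivity) (by norm_num)]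
      nlinarith
    calc _ = σ * (σ * (s * (y ⬝ᵥ y))) := by ring
      _ ≤ _ := by gcongr
  have h6 : 0 < σ * (σ * q) := by positivity
  linarith

namespace MvPolynomial

lemma hasFDerivAt_eval {m : ℕ} (p : MvPolynomial (Fin m) ℝ) (x : Fin m → ℝ) :
    HasFDerivAt (fun x => eval x p)
      (∑ i, eval x (pderiv i p) • (ContinuousLinearMap.proj i : (Fin m → ℝ) →L[ℝ] ℝ)) x := by
  induction p using MvPolynomial.induction_on with
  | C a => simpa using hasFDerivAt_const a x
  | add p q hp hq =>
    have := hp.add hq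
    simp only [map_add, add_smul, Finset.sum_add_distrib]
    exact this
  | mul_X p j hp =>
    have hX : HasFDerivAt (fun x : Fin m → ℝ => x j)
      (ContinuousLinearMap.proj j : (Fin m → ℝ) →L[ℝ] ℝ) x := hasFDerivAt_apply j x
    have := hp.mul hX
    simp only [map_mul, eval_X]
    refine this.congr_fderiv ?_
    ext w
    simp [Derivation.leibniz, pderiv_X, Pi.single_apply, add_mul, Finset.sum_add_distrib,
      Finset.mul_sum, apply_ite]
    refine Finset.sum_congr rfl fun i _ => by ring

lemma contDiff_eval {m : ℕ} (p : MvPolynomial (Fin m) ℝ) {k : WithTop ℕ∞} :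
    ContDiff ℝ k (fun x => eval x p) := by
  induction p using MvPolynomial.induction_on with
  | C a => simpa using contDiff_const
  | add p q hp hq => simpa using hp.add hq
  | mul_X p j hp =>
    simp only [map_mul, eval_X]
    exact hp.mul (contDiff_apply ℝ ℝ j)

lemma hessianMatrix_eval {m : ℕ} (p : MvPolynomial (Fin m) ℝ) (x : Fin m → ℝ) (i j : Fin m) :
    hessianMatrix (fun x => eval x p) x i j = eval x (pderiv i (pderiv j p)) := by
  have h0 : ∀ (q : MvPolynomial (Fin m) ℝ) x k,
      fderiv ℝ (fun x => eval x q) x (Pi.single k 1) = eval x (pderiv k q) := by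
    intro q x k
    rw [(hasFDerivAt_eval q x).fderiv]
    simp [Pi.single_apply]
  have h1 : fderiv ℝ (fun y => fderiv ℝ (fun x => eval x p) y (Pi.single j 1)) x (Pi.single i 1)
      = eval x (pderiv i (pderiv j p)) := by
    rw [← h0]; congr 1; congr 1; ext y; exact h0 _ _ _
  have h2 : DifferentiableAt ℝ (fderiv ℝ (fun x => eval x p)) x := by
    have : ContDiff ℝ 1 (fderiv ℝ (fun x => eval x p)) :=
      (contDiff_eval (k := 2) p).fderiv_right (by norm_num)
    exact this.differentiable (by norm_num) x
  rw [hessianMatrix_apply, ← h1, fderiv_clm_apply h2 (differentiableAt_const _)]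
  simp

end MvPolynomial

/-- squared Euclidean distance -/
def sqd {m : ℕ} (y x : Fin m → ℝ) : ℝ := (x - y) ⬝ᵥ (x - y)

lemma sqd_nonneg {m : ℕ} (y x : Fin m → ℝ) : 0 ≤ sqd y x := by
  unfold sqd dotProduct
  exact Finset.sum_nonneg fun i _ => mul_self_nonneg _

lemma sqd_self {m : ℕ} (y : Fin m → ℝ) : sqd y y = 0 := by simp [sqd]

lemma sqd_pos {m : ℕ} {y x : Fin m → ℝ} (h : x ≠ y) : 0 < sqd y x := by
  have := norm_sq_le_dot (x - y)
  have h2 : 0 < ‖x - y‖ := norm_pos_iff.2 (sub_ne_zero.2 h)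
  exact lt_of_lt_of_le (by positivity) this

lemma continuous_sqd {m : ℕ} (y : Fin m → ℝ) : Continuous (sqd y) := by
  unfold sqd dotProduct; fun_prop

/-- closed Euclidean ball -/
def eball {m : ℕ} (y : Fin m → ℝ) (r : ℝ) : Set (Fin m → ℝ) := {x | sqd y x ≤ r ^ 2}
/-- Euclidean sphere -/
def esph {m : ℕ} (y : Fin m → ℝ) (r : ℝ) : Set (Fin m → ℝ) := {x | sqd y x = r ^ 2}

lemma isClosed_eball {m : ℕ} (y : Fin m → ℝ) (r : ℝ) : IsClosed (eball y r) :=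
  isClosed_le (continuous_sqd y) continuous_const

lemma isClosed_esph {m : ℕ} (y : Fin m → ℝ) (r : ℝ) : IsClosed (esph y r) :=
  isClosed_eq (continuous_sqd y) continuous_const

lemma norm_le_of_sqd_le {m : ℕ} {y x : Fin m → ℝ} {r : ℝ} (hr : 0 ≤ r) (h : sqd y x ≤ r ^ 2) :
    ‖x - y‖ ≤ r := by
  have := norm_sq_le_dot (x - y)
  rw [sqd] at h
  exact abs_le_of_sq_le_sq' (by nlinarith) hr |>.2

lemma eball_subset {m : ℕ} {y : Fin m → ℝ} {r : ℝ} (hr : 0 ≤ r) :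
    eball y r ⊆ Metric.closedBall y r := by
  intro x hx
  rw [Metric.mem_closedBall, dist_eq_norm]
  exact norm_le_of_sqd_le hr hx

lemma isCompact_eball {m : ℕ} (y : Fin m → ℝ) {r : ℝ} (hr : 0 ≤ r) : IsCompact (eball y r) :=
  (isCompact_closedBall y r).of_isClosed_subset (isClosed_eball y r) (eball_subset hr)

lemma esph_subset_eball {m : ℕ} (y : Fin m → ℝ) (r : ℝ) : esph y r ⊆ eball y r :=
  fun _ hx => le_of_eq hx

lemma isCompact_esph {m : ℕ} (y : Fin m → ℝ) {r : ℝ} (hr : 0 ≤ r) : IsCompact (esph y r) :=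
  (isCompact_eball y hr).of_isClosed_subset (isClosed_esph y r) (esph_subset_eball y r)

lemma frontier_eball_subset {m : ℕ} (y : Fin m → ℝ) (r : ℝ) :
    frontier (eball y r) ⊆ esph y r :=
  frontier_le_subset_eq (continuous_sqd y) continuous_const

lemma self_mem_eball {m : ℕ} (y : Fin m → ℝ) (r : ℝ) : y ∈ eball y r := by
  simp only [eball, Set.mem_ofPred_eq, sqd_self]; positivity

namespace MvPolynomial

/-- the polynomial |x-y|^2 -/
noncomputable def PSq {m : ℕ} (y : Fin m → ℝ) : MvPolynomial (Fin m) ℝ :=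
  ∑ i, (X i - C (y i)) ^ 2

lemma eval_PSq {m : ℕ} (y x : Fin m → ℝ) : eval x (PSq y) = sqd y x := by
  simp [PSq, sqd, dotProduct, sq]

lemma pderiv_pderiv_PSq {m : ℕ} (y : Fin m → ℝ) (i j : Fin m) :
    pderiv i (pderiv j (PSq y)) = if i = j then C 2 else 0 := by
  have h1 : pderiv j (PSq y) = 2 * (X j - C (y j)) := by
    simp [PSq, pderiv_X, Pi.single_apply]
  rw [h1]
  have : (2 : MvPolynomial (Fin m) ℝ) = C 2 := (map_ofNat C 2).symm
  rw [this, pderiv_C_mul]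
  by_cases h : i = j
  · subst h; simp
  · simp [h, pderiv_X, Ne.symm h]

/-- constant coefficient second order operator -/
noncomputable def Lop {m : ℕ} (B : Matrix (Fin m) (Fin m) ℝ) :
    MvPolynomial (Fin m) ℝ →ₗ[ℝ] MvPolynomial (Fin m) ℝ :=
  ∑ i, ∑ j, B i j • ((pderiv i).toLinearMap ∘ₗ (pderiv j).toLinearMap)

lemma Lop_apply {m : ℕ} (B : Matrix (Fin m) (Fin m) ℝ) (p : MvPolynomial (Fin m) ℝ) :
    Lop B p = ∑ i, ∑ j, B i j • pderiv i (pderiv j p) := by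
  simp [Lop, LinearMap.sum_apply]

lemma hess_eval_isSymm {m : ℕ} (p : MvPolynomial (Fin m) ℝ) (x : Fin m → ℝ) :
    (hessianMatrix (fun x => eval x p) x).IsSymm :=
  hessianMatrix_isSymm (contDiff_eval p).contDiffAt

lemma eval_Lop {m : ℕ} (B : Matrix (Fin m) (Fin m) ℝ) (p : MvPolynomial (Fin m) ℝ)
    (x : Fin m → ℝ) :
    eval x (Lop B p) = (B * hessianMatrix (fun x => eval x p) x).trace := by
  rw [Lop_apply, Matrix.trace]
  simp only [map_sum, smul_eval, Matrix.diag_apply, Matrix.mul_apply]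
  refine Finset.sum_congr rfl fun i _ => Finset.sum_congr rfl fun j _ => ?_
  rw [← (hess_eval_isSymm p x).apply, hessianMatrix_eval]

lemma Lop_PSq {m : ℕ} (B : Matrix (Fin m) (Fin m) ℝ) (y : Fin m → ℝ) :
    Lop B (PSq y) = C (2 * B.trace) := by
  rw [Lop_apply]
  simp only [pderiv_pderiv_PSq, Matrix.trace, Matrix.diag_apply, smul_ite, smul_zero,
    Finset.sum_ite_eq, Finset.mem_univ, if_true, Finset.mul_sum, map_sum]
  refine Finset.sum_congr rfl fun i _ => ?_
  rw [smul_eq_C_mul, ← C_mul, mul_comm]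

lemma Lop_max {m : ℕ} {B : Matrix (Fin m) (Fin m) ℝ} (hB : B.PosSemidef) (ht : 0 < B.trace)
    {p : MvPolynomial (Fin m) ℝ} (hp : ∀ x, 0 ≤ eval x (Lop B p)) {y : Fin m → ℝ} {r : ℝ}
    (hr : 0 ≤ r) {M : ℝ} (hM : ∀ x ∈ esph y r, eval x p ≤ M) :
    ∀ x ∈ eball y r, eval x p ≤ M := by
  intro x hx
  have key : ∀ ε : ℝ, 0 < ε → eval x p ≤ M + ε * r ^ 2 := by
    intro ε hε
    set q := p + C ε * PSq y with hq
    have hqe : ∀ x, eval x q = eval x p + ε * sqd y x := by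
      intro x; simp [hq, eval_PSq]
    obtain ⟨z, hz, hzmax⟩ := (isCompact_eball y hr).exists_isMaxOn ⟨x, hx⟩
      ((contDiff_eval (k := 2) q).continuous.continuousOn)
    have hzs : z ∈ esph y r := by
      by_contra hzn
      have hlt : sqd y z < r ^ 2 := lt_of_le_of_ne hz hzn
      have hnh : eball y r ∈ nhds z :=
        Filter.mem_of_superset ((isOpen_lt (continuous_sqd y) continuous_const).mem_nhds hlt)
          (fun w (hw : sqd y w < r ^ 2) => show sqd y w ≤ r ^ 2 from hw.le)
      have hloc : IsLocalMax (fun x => eval x q) z := hzmax.isLocalMax hnh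
      have h1 := trace_mul_psd_nonneg hB (localMax_hess (contDiff_eval q).contDiffAt hloc)
      rw [Matrix.mul_neg, Matrix.trace_neg, ← eval_Lop] at h1
      have h2 : Lop B q = Lop B p + C (ε * (2 * B.trace)) := by
        rw [hq, map_add, ← smul_eq_C_mul, map_smul, Lop_PSq, smul_eq_C_mul, ← C_mul]
      rw [h2, map_add, eval_C] at h1
      have := hp z
      have : 0 < ε * (2 * B.trace) := by positivity
      linarith
    have h3 : eval x q ≤ eval z q := hzmax hx
    rw [hqe, hqe] at h3
    have h4 := hM z hzs
    have h5 : sqd y z = r ^ 2 := hzs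
    rw [h5] at h3
    have := mul_nonneg hε.le (sqd_nonneg y x)
    linarith
  by_contra hcon
  push Not at hcon
  have hr2 : 0 ≤ r ^ 2 := sq_nonneg r
  have := key ((eval x p - M) / (2 * (r ^ 2 + 1))) (by apply div_pos <;> linarith)
  have h7 : (eval x p - M) / (2 * (r ^ 2 + 1)) * r ^ 2 ≤ (eval x p - M) / 2 := by
    rw [div_mul_eq_mul_div, div_le_div_iff₀ (by positivity) (by norm_num)]
    nlinarith
  linarith

lemma totalDegree_pderiv_le {m : ℕ} (i : Fin m) (p : MvPolynomial (Fin m) ℝ) {k : ℕ}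
    (h : p.totalDegree ≤ k + 1) : (pderiv i p).totalDegree ≤ k := by
  rw [totalDegree, Finset.sup_le_iff]
  intro s hs
  rw [mem_support_iff, coeff_pderiv] at hs
  have h1 := (le_totalDegree (mem_support_iff.2 (left_ne_zero_of_mul hs))).trans h
  rw [Finsupp.sum_add_index' (fun _ => rfl) (fun _ _ _ => rfl)] at h1
  simpa using h1

lemma totalDegree_Lop_le {m : ℕ} (B : Matrix (Fin m) (Fin m) ℝ) (p : MvPolynomial (Fin m) ℝ) {k : ℕ}
    (h : p.totalDegree ≤ k + 2) : (Lop B p).totalDegree ≤ k := by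
  rw [Lop_apply]
  refine totalDegree_finsetSum_le fun i _ => totalDegree_finsetSum_le fun j _ => ?_
  exact (totalDegree_smul_le _ _).trans (totalDegree_pderiv_le _ _ (totalDegree_pderiv_le _ _ h))

lemma totalDegree_PSq_le {m : ℕ} (y : Fin m → ℝ) : (PSq y).totalDegree ≤ 2 := by
  refine totalDegree_finsetSum_le fun i _ => ?_
  refine (totalDegree_pow _ _).trans ?_
  have : (X i - C (y i) : MvPolynomial (Fin m) ℝ).totalDegree ≤ 1 := by
    refine (totalDegree_sub _ _).trans ?_
    simp
  omega

/-- Dirichlet problem on balls for polynomial data -/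
lemma dirichlet {m : ℕ} {B : Matrix (Fin m) (Fin m) ℝ} (hB : B.PosSemidef) (ht : 0 < B.trace)
    (y : Fin m → ℝ) {r : ℝ} (hr : 0 < r) (p : MvPolynomial (Fin m) ℝ) :
    ∃ h : MvPolynomial (Fin m) ℝ, Lop B h = 0 ∧ ∀ x ∈ esph y r, eval x h = eval x p := by
  set k := p.totalDegree with hk
  set φ : MvPolynomial (Fin m) ℝ := C (r ^ 2) - PSq y with hφ
  have hφe : ∀ x, eval x φ = r ^ 2 - sqd y x := by intro x; simp [hφ, eval_PSq]
  have hφd : φ.totalDegree ≤ 2 := by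
    refine (totalDegree_sub _ _).trans ?_
    rw [totalDegree_C]
    simpa using totalDegree_PSq_le y
  set V := restrictTotalDegree (Fin m) ℝ k with hV
  set T0 : MvPolynomial (Fin m) ℝ →ₗ[ℝ] MvPolynomial (Fin m) ℝ :=
    Lop B ∘ₗ LinearMap.mulLeft ℝ φ with hT0
  have hT0a : ∀ q, T0 q = Lop B (φ * q) := fun q => rfl
  have hmap : ∀ q ∈ V, T0 q ∈ V := by
    intro q hq
    rw [hV, mem_restrictTotalDegree] at *
    rw [hT0a]
    refine totalDegree_Lop_le B _ ((totalDegree_mul _ _).trans ?_)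
    omega
  set T : V →ₗ[ℝ] V := T0.restrict hmap with hT
  have hinj : Function.Injective T := by
    rw [← LinearMap.ker_eq_bot, LinearMap.ker_eq_bot']
    rintro ⟨q, hq⟩ hq0
    have h0 : Lop B (φ * q) = 0 := by
      have := congrArg Subtype.val hq0
      simpa [hT, hT0a] using this
    have hle : ∀ x ∈ eball y r, eval x (φ * q) ≤ 0 := by
      refine Lop_max hB ht (fun x => by rw [h0]; simp) hr.le fun x hx => ?_
      rw [map_mul, hφe, show sqd y x = r ^ 2 from hx]; simp
    have hge : ∀ x ∈ eball y r, eval x (-(φ * q)) ≤ 0 := by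
      refine Lop_max hB ht (fun x => by rw [map_neg, h0]; simp) hr.le fun x hx => ?_
      rw [map_neg, map_mul, hφe, show sqd y x = r ^ 2 from hx]; simp
    have hz : ∀ x, sqd y x < r ^ 2 → eval x q = 0 := by
      intro x hx
      have h1 := hle x hx.le
      have h2 := hge x hx.le
      rw [map_neg] at h2
      have h3 : eval x (φ * q) = 0 := by linarith
      rw [map_mul, hφe] at h3
      exact (mul_eq_zero.1 h3).resolve_left (by linarith)
    have hnh : {x | sqd y x < r ^ 2} ∈ nhds y :=
      (isOpen_lt (continuous_sqd y) continuous_const).mem_nhds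
        (show sqd y y < r ^ 2 by rw [sqd_self]; positivity)
    obtain ⟨ρ, hρ, hρs⟩ := Metric.mem_nhds_iff.1 hnh
    apply Subtype.ext
    refine funext_set (fun i => Metric.ball (y i) ρ) (fun i => ?_) fun x hx => ?_
    · exact infinite_of_mem_nhds (y i) (Metric.ball_mem_nhds (y i) hρ)
    · rw [hz x (hρs ?_)]
      · simp
      · rw [ball_pi _ hρ]; exact hx
  obtain ⟨⟨s, hs⟩, hss⟩ := (LinearMap.injective_iff_surjective.1 hinj)
    ⟨Lop B p, by
      rw [hV, mem_restrictTotalDegree]; exact totalDegree_Lop_le B p (by omega)⟩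
  have h0 : Lop B (φ * s) = Lop B p := by
    have := congrArg Subtype.val hss
    simpa [hT, hT0a] using this
  refine ⟨p - φ * s, by rw [map_sub, h0, sub_self], fun x hx => ?_⟩
  rw [map_sub, map_mul, hφe, show sqd y x = r ^ 2 from hx]; simp

lemma weierstrass {m : ℕ} {K : Set (Fin m → ℝ)} (hK : IsCompact K) {f : (Fin m → ℝ) → ℝ}
    (hf : ContinuousOn f K) {ε : ℝ} (hε : 0 < ε) :
    ∃ p : MvPolynomial (Fin m) ℝ, ∀ x ∈ K, |eval x p - f x| < ε := by
  have : CompactSpace K := isCompact_iff_compactSpace.1 hK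
  set Φ : MvPolynomial (Fin m) ℝ →ₐ[ℝ] C(K, ℝ) :=
    aeval (fun i => (⟨fun x => x.1 i, (continuous_apply i).comp continuous_subtype_val⟩ : C(K, ℝ))) with hΦ
  have hΦa : ∀ p (x : K), Φ p x = eval x.1 p := by
    intro p x
    induction p using MvPolynomial.induction_on with
    | C a => simp [hΦ]
    | add p q hp hq => simp [hp, hq]
    | mul_X p j hp => simp [hp]; simp [hΦ]
  have hsep : Φ.range.SeparatesPoints := by
    intro x y hxy
    obtain ⟨i, hi⟩ := Function.ne_iff.1 (Subtype.coe_ne_coe.2 hxy)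
    exact ⟨Φ (X i), ⟨Φ (X i), ⟨X i, rfl⟩, rfl⟩, by simpa [hΦa] using hi⟩
  obtain ⟨⟨g, hg⟩, hgf⟩ := ContinuousMap.exists_mem_subalgebra_near_continuous_of_separatesPoints
    Φ.range hsep (fun x : K => f x.1) (continuousOn_iff_continuous_domRestrict.1 hf) ε hε
  obtain ⟨p, rfl⟩ := hg
  refine ⟨p, fun x hx => ?_⟩
  have := hgf ⟨x, hx⟩
  simp only [] at this
  rw [← hΦa p ⟨x, hx⟩, ← Real.norm_eq_abs]
  exact this

end MvPolynomial

lemma hessianMatrix_neg {m : ℕ} (v : (Fin m → ℝ) → ℝ) (x : Fin m → ℝ) :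
    hessianMatrix (fun x => - v x) x = - hessianMatrix v x := by
  ext i j
  simp only [hessianMatrix, Matrix.of_apply, Matrix.neg_apply]
  have : (fun x => - v x) = -v := rfl
  rw [this, iteratedFDeriv_neg]
  rfl

lemma ereal_add_neg_le {a : EReal} {b c : ℝ} : a + ((-b : ℝ) : EReal) ≤ (c : EReal) ↔
    a ≤ ((b + c : ℝ) : EReal) := by
  induction a with
  | bot => simp
  | top =>
    rw [EReal.top_add_coe]
    constructor <;> intro h
    · exact absurd (top_le_iff.1 h) (EReal.coe_ne_top c)
    · exact absurd (top_le_iff.1 h) (EReal.coe_ne_top (b + c))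
  | coe a => rw [← EReal.coe_add, EReal.coe_le_coe_iff, EReal.coe_le_coe_iff]; constructor <;> intro h <;> linarith

lemma typeF_cmp {m : ℕ} {G : Set (Matrix (Fin m) (Fin m) ℝ)} {U : Set (Fin m → ℝ)}
    {V : (Fin m → ℝ) → EReal} (hV : IsTypeF G U V) {Ψ : (Fin m → ℝ) → ℝ}
    (hΨ : ContDiff ℝ 2 Ψ) (hΨG : ∀ x ∈ U, hessianMatrix Ψ x ∉ G) {K : Set (Fin m → ℝ)}
    (hK : IsCompact K) (hKU : K ⊆ U) (hfr : ∀ x ∈ frontier K, V x ≤ (Ψ x : EReal)) :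
    ∀ x ∈ K, V x ≤ (Ψ x : EReal) := by
  have h1 := hV.2.2 (fun x => - Ψ x) hΨ.neg.contDiffOn (fun x hx => by
    rw [hessianMatrix_neg]
    refine mem_dualSub (hessianMatrix_isSymm hΨ.contDiffAt).neg ?_
    rw [neg_neg]; exact hΨG x hx) 0 K hK hKU
  simp only [ereal_add_neg_le] at h1
  simpa using h1 (by simpa using hfr)

lemma pen {m : ℕ} {U K : Set (Fin m → ℝ)} {V : (Fin m → ℝ) → EReal}
    (hV : UpperSemicontinuousOn V U) (hVt : ∀ x ∈ U, V x ≠ ⊤) (hK : IsCompact K) (hKU : K ⊆ U)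
    {Ψ ρ : (Fin m → ℝ) → ℝ} (hΨ : Continuous Ψ) (hρ : Continuous ρ) (hρ0 : ∀ x, 0 ≤ ρ x)
    (hcmp : ∀ N : ℝ, 0 < N → (∀ x ∈ frontier K, V x ≤ ((Ψ x + N * ρ x : ℝ) : EReal)) →
      ∀ x ∈ K, V x ≤ ((Ψ x + N * ρ x : ℝ) : EReal))
    (hfr : ∀ x ∈ frontier K, ρ x = 0 → V x < (Ψ x : EReal)) :
    ∀ x ∈ K, ρ x = 0 → V x ≤ (Ψ x : EReal) := by
  have hsub : frontier K ⊆ K := hK.isClosed.frontier_subset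
  have hfc : IsCompact (frontier K) := hK.of_isClosed_subset isClosed_frontier hsub
  have key : ∃ N : ℝ, 0 < N ∧ ∀ x ∈ frontier K, V x ≤ ((Ψ x + N * ρ x : ℝ) : EReal) := by
    refine hfc.induction_on (p := fun s => ∃ N : ℝ, 0 < N ∧ ∀ x ∈ s,
      V x ≤ ((Ψ x + N * ρ x : ℝ) : EReal)) ⟨1, one_pos, by simp⟩ ?_ ?_ ?_
    · rintro s t hst ⟨N, hN, h⟩
      exact ⟨N, hN, fun x hx => h x (hst hx)⟩
    · rintro s t ⟨N, hN, h⟩ ⟨M, hM, h'⟩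
      refine ⟨max N M, lt_max_of_lt_left hN, ?_⟩
      rintro x (hx | hx)
      · refine (h x hx).trans (EReal.coe_le_coe_iff.2 ?_)
        have := mul_le_mul_of_nonneg_right (le_max_left N M) (hρ0 x)
        linarith
      · refine (h' x hx).trans (EReal.coe_le_coe_iff.2 ?_)
        have := mul_le_mul_of_nonneg_right (le_max_right N M) (hρ0 x)
        linarith
    · intro x hx
      have : ∃ N : ℝ, 0 < N ∧ V x < ((Ψ x + N * ρ x : ℝ) : EReal) := by
        rcases eq_or_lt_of_le (hρ0 x) with h | h
        · refine ⟨1, one_pos, ?_⟩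
          rw [← h]; simpa using hfr x hx h.symm
        · obtain ⟨c, hc⟩ : ∃ c : ℝ, V x < (c : EReal) := by
            obtain ⟨c, hc, -⟩ := EReal.lt_iff_exists_real_btwn.1
              (lt_top_iff_ne_top.2 (hVt x (hKU (hsub hx))))
            exact ⟨c, hc⟩
          refine ⟨max 1 ((c - Ψ x) / ρ x), lt_max_of_lt_left one_pos, hc.trans_le ?_⟩
          refine EReal.coe_le_coe_iff.2 ?_
          have h1 := mul_le_mul_of_nonneg_right (le_max_right 1 ((c - Ψ x) / ρ x)) h.le
          rw [div_mul_cancel₀ _ h.ne'] at h1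
          linarith
      obtain ⟨N, hN, hlt⟩ := this
      obtain ⟨c, hc1, hc2⟩ := EReal.lt_iff_exists_real_btwn.1 hlt
      have h1 := hV x (hKU (hsub hx)) c hc1
      have hcont : Continuous fun x => Ψ x + N * ρ x := by fun_prop
      have h2 : ∀ᶠ y in nhds x, c < Ψ y + N * ρ y :=
        hcont.continuousAt.eventually (lt_mem_nhds (EReal.coe_lt_coe_iff.1 hc2))
      have h1' := h1.filter_mono (nhdsWithin_mono x (hsub.trans hKU))
      refine ⟨{y | V y ≤ ((Ψ y + N * ρ y : ℝ) : EReal)}, ?_, N, hN, fun y hy => hy⟩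
      filter_upwards [h1', h2.filter_mono nhdsWithin_le_nhds] with y hy1 hy2
      exact hy1.le.trans (EReal.coe_le_coe_iff.2 hy2.le)
  obtain ⟨N, hN, hNf⟩ := key
  intro x hx hx0
  have := hcmp N hN hNf x hx
  simpa [hx0] using this

lemma ereal_le_of_eps {a : EReal} {b C : ℝ} (hC : 0 ≤ C)
    (h : ∀ ε : ℝ, 0 < ε → a ≤ ((b + ε * C : ℝ) : EReal)) : a ≤ (b : EReal) := by
  by_contra hcon
  push Not at hcon
  obtain ⟨c, hc1, hc2⟩ := EReal.lt_iff_exists_real_btwn.1 hcon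
  have hbc : b < c := EReal.coe_lt_coe_iff.1 hc1
  have h1 := hc2.trans_le (h ((c - b) / (C + 1)) (by apply div_pos <;> linarith))
  have h2 : c < b + (c - b) / (C + 1) * C := EReal.coe_lt_coe_iff.1 h1
  have h3 : (c - b) / (C + 1) * C ≤ c - b := by
    rw [div_mul_eq_mul_div, div_le_iff₀ (by positivity)]
    nlinarith
  linarith

namespace MvPolynomial

lemma conv_seg {m : ℕ} {G : Set (Matrix (Fin m) (Fin m) ℝ)} {U : Set (Fin m → ℝ)}
    (hU : IsOpen U) {V : (Fin m → ℝ) → EReal} (hV : IsTypeF G U V) {y z : Fin m → ℝ}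
    (hyz : y ≠ z) (hseg : segment ℝ y z ⊆ U)
    (hG : ∀ A : Matrix (Fin m) (Fin m) ℝ, A.IsSymm → (z - y) ⬝ᵥ A *ᵥ (z - y) < 0 → A ∉ G)
    {α β : ℝ} (hα : V y ≤ (α : EReal)) (hβ : V z ≤ (β : EReal)) {s : ℝ} (hs : s ∈ Set.Icc (0:ℝ) 1) :
    V (y + s • (z - y)) ≤ ((α + s * (β - α) : ℝ) : EReal) := by
  set d := z - y with hd
  have hdd : 0 < d ⬝ᵥ d := sqd_pos (y := y) (x := z) hyz.symm
  set D := d ⬝ᵥ d with hD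
  set e : Fin m → ℝ := fun i => d i / D with he
  have hed : ∑ i, e i * d i = 1 := by
    have h1 : ∑ i, e i * d i = (∑ i, d i * d i) / D := by
      rw [Finset.sum_div]; exact Finset.sum_congr rfl fun i _ => by simp only [he]; ring
    rw [h1]; exact div_self hdd.ne'
  set σ : MvPolynomial (Fin m) ℝ := ∑ i, C (e i) * (X i - C (y i)) with hσ
  have hσp : ∀ j, pderiv j σ = C (e j) := by
    intro j
    simp only [hσ, map_sum, pderiv_C_mul, map_sub, pderiv_C, sub_zero, pderiv_X]
    simp [Pi.single_apply]
  have hσ2 : ∀ i j, pderiv i (pderiv j (σ ^ 2)) = C (2 * e i * e j) := by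
    intro i j
    have h2 : (2 : MvPolynomial (Fin m) ℝ) = C 2 := (map_ofNat C 2).symm
    rw [pderiv_pow, hσp]
    simp only [Nat.cast_ofNat, Nat.add_one_sub_one, pow_one]
    rw [h2, mul_assoc, pderiv_C_mul, mul_comm, Derivation.leibniz]
    simp only [hσp, pderiv_C, smul_zero, zero_add, smul_eq_mul, add_zero]
    simp only [mul_zero, zero_add]
    rw [← C_mul, ← C_mul]; congr 1; ring
  have hσe : ∀ x, eval x σ = ∑ i, e i * (x i - y i) := by intro x; simp [hσ]
  set ρ : MvPolynomial (Fin m) ℝ := PSq y - C D * σ ^ 2 with hρ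
  have hρe : ∀ x, eval x ρ = (x - (y + eval x σ • d)) ⬝ᵥ (x - (y + eval x σ • d)) := by
    intro x
    have h1 : (x - y) ⬝ᵥ d = eval x σ * D := by
      rw [hσe, Finset.sum_mul, dotProduct]
      refine Finset.sum_congr rfl fun i _ => ?_
      simp only [he, Pi.sub_apply]; field_simp
    have h2 : x - (y + eval x σ • d) = (x - y) - eval x σ • d := by abel
    have h3 : ∀ (a : Fin m → ℝ) (t : ℝ), (a - t • d) ⬝ᵥ (a - t • d) =
        a ⬝ᵥ a - 2 * t * (a ⬝ᵥ d) + t ^ 2 * (d ⬝ᵥ d) := by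
      intro a t
      rw [sub_dotProduct, dotProduct_sub, dotProduct_sub, smul_dotProduct, smul_dotProduct,
        dotProduct_smul, dotProduct_smul, dotProduct_comm d a]
      simp only [smul_eq_mul]; ring
    rw [h2, h3, h1, ← hD]
    simp only [hρ, map_sub, eval_PSq, map_mul, eval_C, map_pow, smul_eq_mul, sqd]
    ring
  have hρ0 : ∀ x, 0 ≤ eval x ρ := fun x => by
    rw [hρe]; exact Finset.sum_nonneg fun i _ => mul_self_nonneg _
  -- compact neighbourhood
  have hsegc : IsCompact (segment ℝ y z) := by
    rw [segment_eq_image']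
    exact isCompact_Icc.image (by fun_prop)
  obtain ⟨η, hη, hηU⟩ := hsegc.exists_cthickening_subset_open hU hseg
  set K : Set (Fin m → ℝ) := {x | 0 ≤ eval x σ} ∩ ({x | eval x σ ≤ 1} ∩ {x | eval x ρ ≤ η ^ 2})
    with hKdef
  have hcσ : Continuous fun x => eval x σ := (contDiff_eval (k := 2) σ).continuous
  have hcρ : Continuous fun x => eval x ρ := (contDiff_eval (k := 2) ρ).continuous
  have hKsub : K ⊆ Metric.cthickening η (segment ℝ y z) := by
    rintro x ⟨h1, h2, h3⟩
    refine Metric.mem_cthickening_of_dist_le x (y + eval x σ • d) η _ ?_ ?_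
    · rw [segment_eq_image']; exact ⟨eval x σ, ⟨h1, h2⟩, rfl⟩
    · rw [dist_eq_norm]
      refine norm_le_of_sqd_le hη.le ?_
      rw [sqd, ← hρe]; exact h3
  have hKc : IsCompact K := by
    refine (hsegc.cthickening (r := η)).of_isClosed_subset ?_ hKsub
    exact (isClosed_le continuous_const hcσ).inter ((isClosed_le hcσ continuous_const).inter
      (isClosed_le hcρ continuous_const))
  have hKfr : ∀ x ∈ frontier K, eval x ρ = 0 → x = y ∨ x = z := by
    intro x hx hx0
    have hxe : x = y + eval x σ • d := by
      by_contra hne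
      have := sqd_pos hne
      rw [sqd, ← hρe] at this; linarith
    have h1 : eval x σ = 0 ∨ eval x σ = 1 := by
      by_contra hcon
      push Not at hcon
      have hxK : x ∈ K := hKc.isClosed.frontier_subset hx
      refine hx.2 (mem_interior_iff_mem_nhds.2 ?_)
      have ha : ∀ᶠ w in nhds x, 0 < eval w σ :=
        hcσ.continuousAt.eventually (lt_mem_nhds (lt_of_le_of_ne hxK.1 (Ne.symm hcon.1)))
      have hb : ∀ᶠ w in nhds x, eval w σ < 1 :=
        hcσ.continuousAt.eventually (gt_mem_nhds (lt_of_le_of_ne hxK.2.1 hcon.2))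
      have hc : ∀ᶠ w in nhds x, eval w ρ < η ^ 2 :=
        hcρ.continuousAt.eventually (gt_mem_nhds (by show eval x ρ < η ^ 2; rw [hx0]; positivity))
      filter_upwards [ha, hb, hc] with w h1 h2 h3
      exact ⟨h1.le, h2.le, h3.le⟩
    rcases h1 with h | h
    · left; rw [hxe, h]; simp
    · right; rw [hxe, h]; simp [hd]
  have hσpt : ∀ s : ℝ, eval (y + s • d) σ = s := by
    intro s
    rw [hσe]
    have : ∑ i, e i * ((y + s • d) i - y i) = s * ∑ i, e i * d i := by
      rw [Finset.mul_sum]; refine Finset.sum_congr rfl fun i _ => ?_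
      simp; ring
    rw [this, hed, mul_one]
  have hσy : eval y σ = 0 := by simpa using hσpt 0
  have hσz : eval z σ = 1 := by
    have := hσpt 1
    rwa [one_smul, hd, add_sub_cancel] at this
  refine ereal_le_of_eps (C := 2) (by norm_num) fun ε hε => ?_
  set Ψ : MvPolynomial (Fin m) ℝ := C α + C (β - α) * σ + C (2 * ε) - C ε * σ ^ 2 with hΨ
  have hΨe : ∀ x, eval x Ψ = α + (β - α) * eval x σ + 2 * ε - ε * eval x σ ^ 2 := by
    intro x; simp [hΨ]
  have hcΨ : Continuous fun x => eval x Ψ := (contDiff_eval (k := 2) Ψ).continuous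
  have main := pen hV.2.1 hV.1 hKc (hKsub.trans hηU) hcΨ hcρ hρ0 ?_ ?_ (y + s • d) ?_ ?_
  · refine main.trans (EReal.coe_le_coe_iff.2 ?_)
    rw [hΨe, hσpt]
    have := mul_nonneg hε.le (sq_nonneg s)
    linarith
  · intro N hN
    have e1 : ∀ x, eval x Ψ + N * eval x ρ = eval x (Ψ + C N * ρ) := by intro x; simp
    simp only [e1]
    refine typeF_cmp hV (contDiff_eval _) (fun x _ => ?_) hKc (hKsub.trans hηU)
    refine hG _ (hess_eval_isSymm _ x) ?_
    have hH : hessianMatrix (fun x => eval x (Ψ + C N * ρ)) x =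
        (2 * N) • (1 : Matrix (Fin m) (Fin m) ℝ) - (2 * ε + 2 * N * D) • Matrix.vecMulVec e e := by
      ext i j
      rw [hessianMatrix_eval]
      obtain ⟨γ, hγ⟩ : ∃ γ, γ = β - α := ⟨_, rfl⟩
      rw [hΨ, ← hγ]
      simp only [hρ, map_add, map_sub, pderiv_C, pderiv_C_mul, hσp, hσ2, pderiv_pderiv_PSq,
        mul_zero, zero_add, add_zero, zero_sub, map_mul, eval_C, map_neg, apply_ite (eval x),
        map_zero, Matrix.sub_apply, Matrix.smul_apply, Matrix.one_apply, Matrix.vecMulVec_apply,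
        smul_eq_mul]
      split_ifs <;> ring
    rw [hH, Matrix.sub_mulVec, Matrix.smul_mulVec, Matrix.smul_mulVec, Matrix.one_mulVec,
      dotProduct_sub, dotProduct_smul, dotProduct_smul, Matrix.vecMulVec_mulVec]
    have h5 : e ⬝ᵥ d = 1 := hed
    have h6 : d ⬝ᵥ e = 1 := by rw [dotProduct_comm]; exact h5
    rw [h5]
    simp only [MulOpposite.op_one, one_smul, h6, smul_eq_mul, ← hD]
    have : N * D * (1 - 1) = 0 := by ring
    nlinarith
  · intro x hx hx0
    rcases hKfr x hx hx0 with rfl | rfl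
    · refine hα.trans_lt (EReal.coe_lt_coe_iff.2 ?_)
      rw [hΨe, hσy]; linarith
    · refine hβ.trans_lt (EReal.coe_lt_coe_iff.2 ?_)
      rw [hΨe, hσz]; linarith
  · refine ⟨?_, ?_, ?_⟩
    · show 0 ≤ eval (y + s • d) σ; rw [hσpt]; exact hs.1
    · show eval (y + s • d) σ ≤ (1:ℝ); rw [hσpt]; exact hs.2
    · show eval (y + s • d) ρ ≤ η ^ 2
      rw [hρe, hσpt]; simp; positivity
  · rw [hρe, hσpt]; simp

end MvPolynomial

/-- open cylinder -/
def cyl {n : ℕ} (D : Set (Fin n → ℝ)) : Set (Fin (n+1) → ℝ) :=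
  {y : Fin (n+1) → ℝ | y 0 ∈ Set.Ioo (0:ℝ) 1 ∧ Fin.tail y ∈ D}

lemma continuous_tail {n : ℕ} : Continuous (fun y : Fin (n+1) → ℝ => (Fin.tail y : Fin n → ℝ)) :=
  continuous_pi fun i => continuous_apply _

lemma continuous_cons {n : ℕ} :
    Continuous (fun p : ℝ × (Fin n → ℝ) => (Fin.cons p.1 p.2 : Fin (n+1) → ℝ)) := by
  refine continuous_pi fun i => ?_
  refine Fin.cases ?_ (fun j => ?_) i
  · simpa using continuous_fst
  · exact (continuous_apply j).comp continuous_snd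

lemma isOpen_cyl {n : ℕ} {D : Set (Fin n → ℝ)} (hD : IsOpen D) : IsOpen (cyl D) :=
  (isOpen_Ioo.preimage (continuous_apply 0)).inter (hD.preimage continuous_tail)

lemma cons_mem_cyl {n : ℕ} {D : Set (Fin n → ℝ)} {s : ℝ} {x : Fin n → ℝ}
    (hs : s ∈ Set.Ioo (0:ℝ) 1) (hx : x ∈ D) : (Fin.cons s x : Fin (n+1) → ℝ) ∈ cyl D :=
  ⟨by simpa using hs, by simpa using hx⟩

lemma dist_cons_le {n : ℕ} (s t : ℝ) (x : Fin n → ℝ) :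
    dist (Fin.cons s x : Fin (n+1) → ℝ) (Fin.cons t x) ≤ |s - t| := by
  refine (dist_pi_le_iff (abs_nonneg _)).2 fun i => ?_
  refine Fin.cases ?_ (fun j => ?_) i
  · simp [Real.dist_eq]
  · simp

lemma conv_t {n : ℕ} {c : ℝ} (hc : n * (π / 2) ≤ c) {D : Set (Fin n → ℝ)} (hD : IsOpen D)
    {u : (Fin (n+1) → ℝ) → ℝ} (hu : IsTypeF (calF n c) (cyl D) (fun y => (u y : EReal)))
    {x : Fin n → ℝ} (hx : x ∈ D) {s t : ℝ} (hs : s ∈ Set.Ioo (0:ℝ) 1) (ht : t ∈ Set.Ioo (0:ℝ) 1)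
    {a : ℝ} (ha : a ∈ Set.Icc (0:ℝ) 1) :
    u (Fin.cons (s + a * (t - s)) x) ≤
      u (Fin.cons s x) + a * (u (Fin.cons t x) - u (Fin.cons s x)) := by
  by_cases hst : s = t
  · subst hst; simp
  have e0 : (Fin.cons t x : Fin (n+1) → ℝ) - Fin.cons s x = Fin.cons (t - s) (0 : Fin n → ℝ) := by
    ext i; refine Fin.cases ?_ (fun j => ?_) i <;> simp
  have e1 : ∀ b : ℝ, (Fin.cons s x : Fin (n+1) → ℝ) + b • Fin.cons (t - s) (0 : Fin n → ℝ) =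
      Fin.cons (s + b * (t - s)) x := by
    intro b; ext i; refine Fin.cases ?_ (fun j => ?_) i <;> simp
  have h := MvPolynomial.conv_seg (isOpen_cyl hD) hu (y := Fin.cons s x) (z := Fin.cons t x)
    (fun h => hst (by simpa using congrFun h 0)) ?_ ?_ le_rfl le_rfl ha
  · rw [e0, e1] at h
    exact EReal.coe_le_coe_iff.1 h
  · rw [segment_eq_image']
    rintro _ ⟨b, hb, rfl⟩
    show (Fin.cons s x : Fin (n+1) → ℝ) + b • ((Fin.cons t x : Fin (n+1) → ℝ) - Fin.cons s x) ∈ cyl D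
    rw [e0, e1]
    refine cons_mem_cyl ?_ hx
    have := (convex_Ioo (0:ℝ) 1).add_smul_sub_mem hs ht hb
    simpa using this
  · intro A hA hneg
    rw [e0] at hneg
    refine notMem_calF_neg hc ?_
    simp only [dotProduct, Matrix.mulVec, Fin.sum_univ_succ, Fin.cons_zero, Fin.cons_succ] at hneg
    simp at hneg
    have : 0 < (t - s) ^ 2 := by have := sub_ne_zero.2 (Ne.symm hst); positivity
    by_contra hcon
    push Not at hcon
    nlinarith

namespace MvPolynomial

lemma pderiv_zero_rename {n : ℕ} (p : MvPolynomial (Fin n) ℝ) :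
    pderiv (0 : Fin (n+1)) (rename Fin.succ p) = 0 := by
  refine pderiv_eq_zero_of_notMem_vars fun h => ?_
  obtain ⟨i, -, hi⟩ := mem_vars_rename _ _ h
  exact Fin.succ_ne_zero i hi

lemma eval_rename_tail {n : ℕ} (p : MvPolynomial (Fin n) ℝ) (y : Fin (n+1) → ℝ) :
    eval y (rename Fin.succ p) = eval (Fin.tail y) p := by
  rw [eval_rename]; rfl

/-- hessian of the test function -/
lemma hess_test {n : ℕ} (q h : MvPolynomial (Fin n) ℝ) (τ N : ℝ) (y : Fin (n+1) → ℝ)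
    (A : Matrix (Fin (n+1)) (Fin (n+1)) ℝ)
    (hA : A = hessianMatrix (fun y => eval y (rename Fin.succ q + C τ * X 0 +
      C N * (X 0 - rename Fin.succ h) ^ 2)) y) (hN : 0 < N) :
    A 0 0 = 2 * N ∧ schur A = hessianMatrix (fun x => eval x q) (Fin.tail y) -
      (2 * N * (y 0 - eval (Fin.tail y) h)) • hessianMatrix (fun x => eval x h) (Fin.tail y) := by
  set σ : MvPolynomial (Fin (n+1)) ℝ := X 0 - rename Fin.succ h with hσ
  have hσ0 : pderiv 0 σ = 1 := by
    rw [hσ, map_sub, pderiv_zero_rename, pderiv_X_self, sub_zero]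
  have hσs : ∀ i : Fin n, pderiv i.succ σ = - rename Fin.succ (pderiv i h) := by
    intro i
    rw [hσ, map_sub, pderiv_rename (Fin.succ_injective n), pderiv_X_of_ne (Fin.succ_ne_zero i).symm,
      zero_sub]
  have hsq : ∀ i j : Fin (n+1), pderiv i (pderiv j (σ ^ 2)) =
      2 * (pderiv i σ * pderiv j σ + σ * pderiv i (pderiv j σ)) := by
    intro i j
    have h2 : (2 : MvPolynomial (Fin (n+1)) ℝ) = C 2 := (map_ofNat C 2).symm
    rw [pderiv_pow]
    simp only [Nat.cast_ofNat, Nat.add_one_sub_one, pow_one]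
    rw [h2, mul_assoc, pderiv_C_mul, Derivation.leibniz]
    simp only [smul_eq_mul]; ring
  have e2 : eval y (2 : MvPolynomial (Fin (n+1)) ℝ) = 2 := map_ofNat _ 2
  have hX : ∀ j : Fin (n+1), ∀ i, pderiv i (pderiv j (X 0 : MvPolynomial (Fin (n+1)) ℝ)) = 0 := by
    intro j i
    rw [pderiv_X, Pi.single_apply]; split_ifs <;> simp
  have hval : ∀ i j, A i j = eval y (pderiv i (pderiv j (rename Fin.succ q))) +
      N * (2 * (eval y (pderiv i σ) * eval y (pderiv j σ) + eval y σ * eval y (pderiv i (pderiv j σ)))) := by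
    intro i j
    rw [hA, hessianMatrix_eval]
    simp only [map_add, pderiv_C_mul, hX, hsq, mul_zero, add_zero, map_mul, eval_C, e2]
  have hσe : eval y σ = y 0 - eval (Fin.tail y) h := by
    rw [hσ, map_sub, eval_X, eval_rename_tail]
  have h00 : A 0 0 = 2 * N := by
    rw [hval, pderiv_zero_rename, hσ0]; simp [mul_comm]
  refine ⟨h00, ?_⟩
  ext i j
  have a1 : A i.succ 0 = - (2 * N * eval (Fin.tail y) (pderiv i h)) := by
    rw [hval, pderiv_zero_rename, hσ0, hσs]; simp [eval_rename_tail]; ring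
  have a2 : A 0 j.succ = - (2 * N * eval (Fin.tail y) (pderiv j h)) := by
    rw [hval, pderiv_rename (Fin.succ_injective n), pderiv_zero_rename, hσ0, hσs, Derivation.map_neg,
      pderiv_zero_rename]
    simp [eval_rename_tail]; ring
  have a3 : A i.succ j.succ = eval (Fin.tail y) (pderiv i (pderiv j q)) +
      N * (2 * (eval (Fin.tail y) (pderiv i h) * eval (Fin.tail y) (pderiv j h)
        - (y 0 - eval (Fin.tail y) h) * eval (Fin.tail y) (pderiv i (pderiv j h)))) := by
    rw [hval, pderiv_rename (Fin.succ_injective n), pderiv_rename (Fin.succ_injective n), hσs, hσs,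
      Derivation.map_neg, pderiv_rename (Fin.succ_injective n), hσe]
    simp only [map_neg, eval_rename_tail]; ring
  simp only [schur, Matrix.of_apply, Matrix.sub_apply, Matrix.smul_apply, smul_eq_mul]
  rw [a1, a2, a3, h00, hessianMatrix_eval, hessianMatrix_eval]
  field_simp
  ring

end MvPolynomial

namespace MvPolynomial

lemma minprin_core {n : ℕ} {c : ℝ} (hc : n * (π / 2) ≤ c) (hc2 : c - π / 2 < n * (π / 2))
    {D : Set (Fin n → ℝ)} (hD : IsOpen D)
    {u : (Fin (n+1) → ℝ) → ℝ} (huc : ContinuousOn u (cyl D))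
    (hu : IsTypeF (calF n c) (cyl D) (fun y => (u y : EReal)))
    {q : MvPolynomial (Fin n) ℝ} {P : Matrix (Fin n) (Fin n) ℝ}
    (hq : ∀ x, hessianMatrix (fun x => eval x q) x = P) (hP : P ∉ Fc n (c - π / 2))
    {x₁ : Fin n → ℝ} {r : ℝ} (hr : 0 < r) (hball : eball x₁ r ⊆ D) {τ : ℝ}
    {p : MvPolynomial (Fin n) ℝ}
    (hp : ∀ x ∈ esph x₁ r, eval x p ∈ Set.Ioo (0:ℝ) 1 ∧
      u (Fin.cons (eval x p) x) - τ * eval x p < eval x q) :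
    ∃ t ∈ Set.Ioo (0:ℝ) 1, u (Fin.cons t x₁) - τ * t ≤ eval x₁ q := by
  have hPs : P.IsSymm := by rw [← hq x₁]; exact hess_eval_isSymm q x₁
  obtain ⟨B, δ, hδ, hB, hBt, hsep⟩ := Fc_separation (by linarith) hc2 hPs hP
  obtain ⟨h, hL, hhp⟩ := dirichlet hB hBt x₁ hr p
  have hcont : ∀ q : MvPolynomial (Fin n) ℝ, Continuous fun x => eval x q :=
    fun q => (contDiff_eval (k := 2) q).continuous
  have hcont' : ∀ q : MvPolynomial (Fin (n+1)) ℝ, Continuous fun x => eval x q :=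
    fun q => (contDiff_eval (k := 2) q).continuous
  -- bounds for h
  obtain ⟨η, hη, hηs⟩ : ∃ η : ℝ, 0 < η ∧ ∀ x ∈ esph x₁ r, η ≤ eval x h ∧ eval x h ≤ 1 - η := by
    have hi : IsCompact ((fun x => eval x h) '' esph x₁ r) :=
      (isCompact_esph x₁ hr.le).image (hcont h)
    obtain ⟨η, hη, hs⟩ := hi.exists_cthickening_subset_open (t := Set.Ioo (0:ℝ) 1) isOpen_Ioo (by
      rintro _ ⟨x, hx, rfl⟩
      show eval x h ∈ Set.Ioo (0:ℝ) 1
      rw [hhp x hx]; exact (hp x hx).1)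
    refine ⟨η, hη, fun x hx => ⟨?_, ?_⟩⟩
    · have := (hs (Metric.mem_cthickening_of_dist_le (eval x h - η) (eval x h) η _
        ⟨x, hx, rfl⟩ (by rw [Real.dist_eq]; simp [abs_of_pos hη]))).1
      linarith
    · have := (hs (Metric.mem_cthickening_of_dist_le (eval x h + η) (eval x h) η _
        ⟨x, hx, rfl⟩ (by rw [Real.dist_eq]; simp [abs_of_pos hη]))).2
      linarith
  have hηb : ∀ x ∈ eball x₁ r, η ≤ eval x h ∧ eval x h ≤ 1 - η := by
    intro x hx
    refine ⟨?_, Lop_max hB hBt (p := h) (by simp [hL]) hr.le (fun x hx => (hηs x hx).2) x hx⟩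
    have := Lop_max hB hBt (p := -h) (by simp [hL]) hr.le (M := -η)
      (fun x hx => by have := (hηs x hx).1; simp; linarith) x hx
    simp at this; linarith
  set h' : MvPolynomial (Fin (n+1)) ℝ := rename Fin.succ h with hh'
  set q' : MvPolynomial (Fin (n+1)) ℝ := rename Fin.succ q with hq'
  set σ : MvPolynomial (Fin (n+1)) ℝ := X 0 - h' with hσ
  have hσe : ∀ y, eval y σ = y 0 - eval (Fin.tail y) h := by
    intro y; rw [hσ, map_sub, eval_X, hh', eval_rename_tail]
  set ρ : MvPolynomial (Fin (n+1)) ℝ := σ ^ 2 with hρ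
  have hρe : ∀ y, eval y ρ = (y 0 - eval (Fin.tail y) h) ^ 2 := by
    intro y; rw [hρ, map_pow, hσe]
  set Ψ : MvPolynomial (Fin (n+1)) ℝ := q' + C τ * X 0 with hΨ
  have hΨe : ∀ y, eval y Ψ = eval (Fin.tail y) q + τ * y 0 := by
    intro y; simp [hΨ, hq', eval_rename_tail]
  set K : Set (Fin (n+1) → ℝ) := {y | sqd x₁ (Fin.tail y) ≤ r ^ 2} ∩ {y | eval y ρ ≤ (η / 2) ^ 2}
    with hK
  have hcs : Continuous fun y : Fin (n+1) → ℝ => sqd x₁ (Fin.tail y) :=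
    (continuous_sqd x₁).comp continuous_tail
  have hKU : ∀ y ∈ K, y 0 ∈ Set.Ioo (0:ℝ) 1 ∧ Fin.tail y ∈ eball x₁ r := by
    rintro y ⟨h1, h2⟩
    have h3 := hηb _ h1
    have h2' : (y 0 - eval (Fin.tail y) h) ^ 2 ≤ (η / 2) ^ 2 := by rw [← hρe]; exact h2
    have h4 := abs_le_of_sq_le_sq' h2' (by positivity)
    refine ⟨⟨by linarith, by linarith⟩, h1⟩
  have hKU' : K ⊆ cyl D := fun y hy => ⟨(hKU y hy).1, hball (hKU y hy).2⟩
  have hKc : IsCompact K := by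
    have hbig : IsCompact ((fun p : ℝ × (Fin n → ℝ) => (Fin.cons p.1 p.2 : Fin (n+1) → ℝ)) ''
        (Set.Icc (0:ℝ) 1 ×ˢ eball x₁ r)) :=
      (isCompact_Icc.prod (isCompact_eball x₁ hr.le)).image continuous_cons
    refine hbig.of_isClosed_subset ((isClosed_le hcs continuous_const).inter
      (isClosed_le (hcont' ρ) continuous_const)) ?_
    intro y hy
    exact ⟨(y 0, Fin.tail y), ⟨Set.Ioo_subset_Icc_self (hKU y hy).1, (hKU y hy).2⟩,
      Fin.cons_self_tail y⟩
  have hcen : eval (Fin.cons (eval x₁ h) x₁ : Fin (n+1) → ℝ) ρ = 0 := by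
    rw [hρe]; simp
  have main := pen hu.2.1 hu.1 hKc hKU' (hcont' Ψ) (hcont' ρ)
    (fun y => by rw [hρe]; positivity) ?_ ?_ (Fin.cons (eval x₁ h) x₁) ?_ hcen
  · have hb := hηb x₁ (self_mem_eball x₁ r)
    refine ⟨eval x₁ h, ⟨by linarith, by linarith⟩, ?_⟩
    have := EReal.coe_le_coe_iff.1 main
    rw [hΨe] at this
    simp at this
    linarith
  · intro N hN
    have e1 : ∀ y, eval y Ψ + N * eval y ρ = eval y (Ψ + C N * ρ) := by intro y; simp
    simp only [e1]
    refine typeF_cmp hu (contDiff_eval _) (fun y _ => ?_) hKc hKU'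
    obtain ⟨h00, hS⟩ := hess_test q h τ N y _ rfl hN
    refine notMem_calF_schur (by rw [h00]; positivity) ?_
    intro hmem
    rw [hS] at hmem
    have h5 := hsep _ hmem
    rw [hq, sub_sub_cancel_left, Matrix.mul_neg, Matrix.mul_smul, Matrix.trace_neg,
      Matrix.trace_smul, ← eval_Lop, hL] at h5
    simp at h5
    linarith
  · intro y hy hy0
    have hyK := hKc.isClosed.frontier_subset hy
    have hy0' : y 0 = eval (Fin.tail y) h := by
      rw [hρe] at hy0
      have := pow_eq_zero_iff (two_ne_zero) |>.1 hy0
      linarith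
    have hys : Fin.tail y ∈ esph x₁ r := by
      by_contra hcon
      have hlt : sqd x₁ (Fin.tail y) < r ^ 2 := lt_of_le_of_ne hyK.1 hcon
      refine hy.2 (mem_interior_iff_mem_nhds.2 ?_)
      have ha : ∀ᶠ w : Fin (n+1) → ℝ in nhds y, sqd x₁ (Fin.tail w) < r ^ 2 :=
        hcs.continuousAt.eventually (gt_mem_nhds hlt)
      have hb : ∀ᶠ w in nhds y, eval w ρ < (η / 2) ^ 2 :=
        (hcont' ρ).continuousAt.eventually (gt_mem_nhds (by
          show eval y ρ < (η / 2) ^ 2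
          rw [hy0]; positivity))
      filter_upwards [ha, hb] with w h1 h2
      exact ⟨h1.le, h2.le⟩
    refine EReal.coe_lt_coe_iff.2 ?_
    have h6 := (hp _ hys).2
    rw [← hhp _ hys, ← hy0', Fin.cons_self_tail] at h6
    rw [hΨe]; linarith
  · refine ⟨?_, ?_⟩
    · show sqd x₁ (Fin.tail (Fin.cons (eval x₁ h) x₁ : Fin (n+1) → ℝ)) ≤ r ^ 2
      rw [Fin.tail_cons]; exact self_mem_eball x₁ r
    · show eval (Fin.cons (eval x₁ h) x₁ : Fin (n+1) → ℝ) ρ ≤ (η / 2) ^ 2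
      rw [hcen]; positivity

lemma minprin {n : ℕ} {c : ℝ} (hc : n * (π / 2) ≤ c) (hc2 : c - π / 2 < n * (π / 2))
    {D : Set (Fin n → ℝ)} (hD : IsOpen D)
    {u : (Fin (n+1) → ℝ) → ℝ} (huc : ContinuousOn u (cyl D))
    (hu : IsTypeF (calF n c) (cyl D) (fun y => (u y : EReal)))
    {q : MvPolynomial (Fin n) ℝ} {P : Matrix (Fin n) (Fin n) ℝ}
    (hq : ∀ x, hessianMatrix (fun x => eval x q) x = P) (hP : P ∉ Fc n (c - π / 2))
    {x₁ : Fin n → ℝ} {r : ℝ} (hr : 0 < r) (hball : eball x₁ r ⊆ D) {τ : ℝ}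
    (hsel : ∀ x ∈ esph x₁ r, ∃ s ∈ Set.Ioo (0:ℝ) 1, u (Fin.cons s x) - τ * s < eval x q) :
    ∃ t ∈ Set.Ioo (0:ℝ) 1, u (Fin.cons t x₁) - τ * t ≤ eval x₁ q := by
  set Z : Set (Fin (n+1) → ℝ) := cyl D ∩ {y | u y - τ * y 0 - eval (Fin.tail y) q < 0} with hZ
  have hcq : Continuous fun x => eval x q := (contDiff_eval (k := 2) q).continuous
  have hZo : IsOpen Z := by
    have h1 : ContinuousOn (fun y : Fin (n+1) → ℝ => u y - τ * y 0 - eval (Fin.tail y) q) (cyl D) :=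
      (huc.sub (continuous_const.mul (continuous_apply 0)).continuousOn).sub
        (hcq.comp continuous_tail).continuousOn
    exact h1.isOpen_inter_preimage (isOpen_cyl hD) isOpen_Iio
  have hSD : ∀ x ∈ esph x₁ r, x ∈ D := fun x hx => hball (esph_subset_eball _ _ hx)
  have hmemZ : ∀ (s : ℝ) (x : Fin n → ℝ), x ∈ D →
      ((Fin.cons s x : Fin (n+1) → ℝ) ∈ Z ↔ s ∈ Set.Ioo (0:ℝ) 1 ∧ u (Fin.cons s x) - τ * s < eval x q) := by
    intro s x hx
    constructor
    · rintro ⟨⟨h1, -⟩, h2⟩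
      have h2' : u (Fin.cons s x) - τ * (Fin.cons s x : Fin (n+1) → ℝ) 0 -
        eval (Fin.tail (Fin.cons s x : Fin (n+1) → ℝ)) q < 0 := h2
      simp only [Fin.cons_zero, Fin.tail_cons] at h1 h2'
      exact ⟨h1, by linarith⟩
    · rintro ⟨h1, h2⟩
      refine ⟨cons_mem_cyl h1 hx, ?_⟩
      show u (Fin.cons s x) - τ * (Fin.cons s x : Fin (n+1) → ℝ) 0 -
        eval (Fin.tail (Fin.cons s x : Fin (n+1) → ℝ)) q < 0
      simp only [Fin.cons_zero, Fin.tail_cons]; linarith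
  have hconv : ∀ x : esph x₁ r, Convex ℝ {s : ℝ | (Fin.cons s x.1 : Fin (n+1) → ℝ) ∈ Z} := by
    rintro ⟨x, hx⟩
    intro s hs t ht a b ha hb hab
    have hs' := (hmemZ _ x (hSD x hx)).1 hs
    have ht' := (hmemZ _ x (hSD x hx)).1 ht
    refine (hmemZ _ x (hSD x hx)).2 ⟨(convex_Ioo (0:ℝ) 1) hs'.1 ht'.1 ha hb hab, ?_⟩
    have h1 := conv_t hc hD hu (hSD x hx) hs'.1 ht'.1 (a := b) ⟨hb, by linarith⟩
    have e : a • s + b • t = s + b * (t - s) := by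
      simp only [smul_eq_mul]; rw [← eq_sub_iff_add_eq] at hab; rw [hab]; ring
    rw [e]
    have ea : a = 1 - b := by linarith
    have h2 := hs'.2
    have h3 := ht'.2
    rcases eq_or_lt_of_le hb with h0 | h0
    · rw [← h0] at h1 ⊢; simp at h1 ⊢; linarith
    · have : 0 ≤ a * (eval x q - (u (Fin.cons s x) - τ * s)) := mul_nonneg ha (by linarith)
      have : 0 < b * (eval x q - (u (Fin.cons t x) - τ * t)) := mul_pos h0 (by linarith)
      rw [ea] at *
      nlinarith
  have hloc : ∀ x : esph x₁ r, ∃ s : ℝ, ∀ᶠ y in nhds x,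
      s ∈ {s : ℝ | (Fin.cons s y.1 : Fin (n+1) → ℝ) ∈ Z} := by
    rintro ⟨x, hx⟩
    obtain ⟨s, hs⟩ := hsel x hx
    refine ⟨s, ?_⟩
    have h1 : (Fin.cons s x : Fin (n+1) → ℝ) ∈ Z := (hmemZ _ x (hSD x hx)).2 hs
    have h2 : Continuous fun y : esph x₁ r => (Fin.cons s y.1 : Fin (n+1) → ℝ) :=
      continuous_cons.comp (continuous_const.prodMk continuous_subtype_val)
    exact h2.continuousAt.eventually (hZo.mem_nhds h1)
  obtain ⟨f, hf⟩ := exists_continuous_forall_mem_convex_of_local_const (X := esph x₁ r) (E := ℝ)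
    (t := fun x => {s : ℝ | (Fin.cons s x.1 : Fin (n+1) → ℝ) ∈ Z}) hconv hloc
  · set φ : (Fin n → ℝ) → ℝ := Function.extend Subtype.val f 0 with hφ
    have hφv : ∀ x : esph x₁ r, φ x.1 = f x := fun x => Subtype.val_injective.extend_apply _ _ _
    have hφc : ContinuousOn φ (esph x₁ r) := by
      rw [continuousOn_iff_continuous_domRestrict]
      have : (esph x₁ r).domRestrict φ = f := by ext x; exact hφv x
      rw [this]; exact f.continuous
    have hφZ : ∀ x ∈ esph x₁ r, (Fin.cons (φ x) x : Fin (n+1) → ℝ) ∈ Z := by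
      intro x hx
      have := hf ⟨x, hx⟩
      rw [hφv ⟨x, hx⟩]; exact this
    have hgc : IsCompact ((fun x => (Fin.cons (φ x) x : Fin (n+1) → ℝ)) '' esph x₁ r) := by
      refine (isCompact_esph x₁ hr.le).image_of_continuousOn ?_
      exact continuous_cons.comp_continuousOn (hφc.prodMk continuousOn_id)
    obtain ⟨η, hη, hs⟩ := hgc.exists_cthickening_subset_open hZo (by
      rintro _ ⟨x, hx, rfl⟩; exact hφZ x hx)
    obtain ⟨p, hp⟩ := weierstrass (isCompact_esph x₁ hr.le) hφc hη
    refine minprin_core hc hc2 hD huc hu hq hP hr hball (p := p) fun x hx => ?_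
    refine (hmemZ _ x (hSD x hx)).1 (hs ?_)
    exact Metric.mem_cthickening_of_dist_le _ (Fin.cons (φ x) x) η _ ⟨x, hx, rfl⟩
      ((dist_cons_le _ _ _).trans (hp x hx).le)

end MvPolynomial

namespace MvPolynomial

lemma quadPoly {m : ℕ} (b : ℝ) (ℓ : (Fin m → ℝ) →ₗ[ℝ] ℝ) {H : Matrix (Fin m) (Fin m) ℝ}
    (hH : H.IsSymm) (y : Fin m → ℝ) :
    ∃ q : MvPolynomial (Fin m) ℝ,
      (∀ x, eval x q = b + ℓ (x - y) + (1/2) * ((x - y) ⬝ᵥ H *ᵥ (x - y))) ∧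
      ∀ x, hessianMatrix (fun x => eval x q) x = H := by
  set Y : Fin m → MvPolynomial (Fin m) ℝ := fun k => X k - C (y k) with hY
  have hYe : ∀ x k, eval x (Y k) = (x - y) k := by intro x k; simp [hY]
  have hYd : ∀ i k, pderiv i (Y k) = C (if i = k then 1 else 0) := by
    intro i k
    simp only [hY, map_sub, pderiv_X, pderiv_C, sub_zero, Pi.single_apply]
    by_cases h : k = i
    · simp [h]
    · simp [h, Ne.symm h]
  have h1 : ∀ i j, pderiv i (pderiv j (∑ k, C (ℓ (Pi.single k 1)) * Y k)) = 0 := by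
    intro i j
    simp only [map_sum, pderiv_C_mul, hYd, ← C_mul, pderiv_C, Finset.sum_const_zero, mul_zero]
  have h2 : ∀ i j, pderiv i (pderiv j (∑ k, ∑ l, C (H k l) * (Y k * Y l))) = C (2 * H i j) := by
    intro i j
    have : ∀ k l, pderiv i (pderiv j (Y k * Y l)) = C ((if i = k then 1 else 0) * (if j = l then 1 else 0)
        + (if i = l then 1 else 0) * (if j = k then 1 else 0)) := by
      intro k l
      rw [Derivation.leibniz, hYd, hYd, map_add, smul_eq_mul, smul_eq_mul, mul_comm, pderiv_C_mul,
        mul_comm (Y l), pderiv_C_mul, hYd, hYd, ← C_mul, ← C_mul, ← C_add]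
      congr 1; ring
    simp only [map_sum, pderiv_C_mul, this]
    simp only [← C_mul, ← map_sum]
    congr 1
    have e : ∀ k l : Fin m, H k l * ((if i = k then 1 else 0) * (if j = l then 1 else 0)
        + (if i = l then 1 else 0) * (if j = k then 1 else 0)) =
        (if j = l then (if i = k then H k l else 0) else 0) +
        (if i = l then (if j = k then H k l else 0) else 0) := by
      intro k l; split_ifs <;> simp <;> ring
    simp only [e, Finset.sum_add_distrib, Finset.sum_ite_eq, Finset.mem_univ, if_true]
    rw [hH.apply i j]; ring
  refine ⟨C b + ∑ k, C (ℓ (Pi.single k 1)) * Y k + C (1/2) * ∑ k, ∑ l, C (H k l) * (Y k * Y l), ?_, ?_⟩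
  · intro x
    simp only [map_add, map_mul, eval_C, map_sum, hYe]
    congr 1
    · congr 1
      have hv := congrArg ℓ (pi_eq_sum_univ' (x - y))
      rw [hv, map_sum]
      refine Finset.sum_congr rfl fun k _ => ?_
      rw [map_smul, smul_eq_mul, mul_comm]
    · congr 1
      simp only [dotProduct, Matrix.mulVec, Finset.mul_sum]
      refine Finset.sum_congr rfl fun k _ => Finset.sum_congr rfl fun l _ => by ring
  · intro x
    ext i j
    rw [hessianMatrix_eval]
    simp only [map_add, pderiv_C_mul, h1, h2, pderiv_C, map_zero, zero_add, map_mul, eval_C]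
    ring

end MvPolynomial

open MvPolynomial in
lemma typeF_of_quad {n : ℕ} {c : ℝ} (hc : ((n : ℝ) - 1) * (π / 2) ≤ c)
    {D : Set (Fin n → ℝ)} {w : (Fin n → ℝ) → ℝ} (hw : UpperSemicontinuousOn w D)
    (H : ∀ (q : MvPolynomial (Fin n) ℝ) (P : Matrix (Fin n) (Fin n) ℝ),
      (∀ x, hessianMatrix (fun x => eval x q) x = P) → P ∉ Fc n c → ∀ (x₁ : Fin n → ℝ) (r : ℝ),
      0 < r → eball x₁ r ⊆ D → (∀ x ∈ esph x₁ r, w x < eval x q) → w x₁ ≤ eval x₁ q) :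
    IsTypeF (Fc n c) D (fun x => (w x : EReal)) := by
  refine ⟨fun x _ => EReal.coe_ne_top _, ?_, ?_⟩
  · intro x hx b hb
    obtain ⟨d, hd1, hd2⟩ := EReal.lt_iff_exists_real_btwn.1 hb
    filter_upwards [hw x hx d (EReal.coe_lt_coe_iff.1 hd1)] with y hy
    exact (EReal.coe_lt_coe_iff.2 hy).trans hd2
  · intro v hv hvH a K hK hKD hfr x₀ hx₀
    simp only [← EReal.coe_add, EReal.coe_le_coe_iff] at hfr ⊢
    by_contra hcon
    push Not at hcon
    obtain ⟨R, hR⟩ := (hK.image (continuous_sqd x₀)).bddAbove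
    have hR' : ∀ x ∈ K, sqd x₀ x ≤ R := fun x hx => hR ⟨x, hx, rfl⟩
    have hR0 : 0 ≤ R := by simpa [sqd_self] using hR' x₀ hx₀
    set m₀ := w x₀ + v x₀ - a x₀ with hm₀
    have hm0 : 0 < m₀ := by linarith
    set κ := m₀ / (2 * (R + 1)) with hκd
    have hκ : 0 < κ := by positivity
    have hκR : κ * R < m₀ := by
      rw [hκd, div_mul_eq_mul_div, div_lt_iff₀ (by positivity)]; nlinarith
    have hac : Continuous a := AffineMap.continuous_of_finiteDimensional a
    have husc : UpperSemicontinuousOn (fun x => w x + (v x - a x + κ * sqd x₀ x)) K := by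
      refine (hw.mono hKD).add (ContinuousOn.upperSemicontinuousOn ?_)
      exact ((hv.continuousOn.mono hKD).sub hac.continuousOn).add
        (continuous_const.mul (continuous_sqd x₀)).continuousOn
    obtain ⟨x₁, hx₁, hmax⟩ := husc.exists_isMaxOn ⟨x₀, hx₀⟩ hK
    have hmax' : ∀ x ∈ K, w x + (v x - a x + κ * sqd x₀ x) ≤
      w x₁ + (v x₁ - a x₁ + κ * sqd x₀ x₁) := fun x hx => hmax hx
    have hx1i : x₁ ∈ interior K := by
      by_contra hni
      have hf : x₁ ∈ frontier K := ⟨subset_closure hx₁, hni⟩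
      have h1 := hfr x₁ hf
      have h2 := hmax' x₀ hx₀
      rw [sqd_self] at h2
      have h3 := mul_le_mul_of_nonneg_left (hR' x₁ hx₁) hκ.le
      linarith
    have hDn : D ∈ nhds x₁ := mem_of_superset (mem_interior_iff_mem_nhds.1 hx1i) hKD
    have hvat : ContDiffAt ℝ 2 v x₁ := hv.contDiffAt hDn
    have hT := taylor2 hvat (s := κ / 4) (by positivity)
    obtain ⟨r, hr, hball⟩ := Metric.nhds_basis_closedBall.mem_iff.1
      (inter_mem hT (mem_interior_iff_mem_nhds.1 hx1i))
    have hball' := (eball_subset hr.le (y := x₁)).trans hball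
    set Hv := hessianMatrix v x₁ with hHv
    have hHs : Hv.IsSymm := hessianMatrix_isSymm hvat
    have hone : (1 : Matrix (Fin n) (Fin n) ℝ).IsSymm := Matrix.isSymm_one
    set ℓ : (Fin n → ℝ) →ₗ[ℝ] ℝ := -(fderiv ℝ v x₁ : (Fin n → ℝ) →ₗ[ℝ] ℝ) + a.linear -
      (2 * κ) • ∑ i, (x₁ - x₀) i • LinearMap.proj i with hℓ
    have hℓe : ∀ d, ℓ d = - fderiv ℝ v x₁ d + a.linear d - 2 * κ * (d ⬝ᵥ (x₁ - x₀)) := by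
      intro d
      simp [hℓ, LinearMap.sum_apply, dotProduct, mul_comm]
    obtain ⟨q, hqe, hqH⟩ := quadPoly (w x₁ - κ / 8 * r ^ 2) ℓ
      (H := -Hv - κ • 1) (hHs.neg.sub (hone.smul κ)) x₁
    have hsq : ∀ x, sqd x₀ x = sqd x₀ x₁ + 2 * ((x - x₁) ⬝ᵥ (x₁ - x₀)) + sqd x₁ x := by
      intro x
      simp only [sqd, dotProduct, Finset.mul_sum, ← Finset.sum_add_distrib]
      refine Finset.sum_congr rfl fun i _ => ?_
      simp; ring
    have hPF : (-Hv - κ • 1) ∉ Fc n c := by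
      intro hmem
      have := Fc_symInterior hc hκ hmem
      rw [sub_add_cancel] at this
      exact (hvH x₁ (hKD hx₁)).2 this
    have hlast := H q _ hqH hPF x₁ r hr (fun x hx => hKD (hball' hx).2) ?_
    · rw [hqe] at hlast
      simp at hlast
      have : 0 < κ / 8 * r ^ 2 := by positivity
      linarith
    · intro x hx
      have hxb := hball' (esph_subset_eball _ _ hx)
      have h1 := hmax' x hxb.2
      have h2a : |v x - (v x₁ + (fderiv ℝ v x₁) (x - x₁) + 1 / 2 * (x - x₁) ⬝ᵥ Hv *ᵥ (x - x₁))| ≤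
        κ / 4 * (x - x₁) ⬝ᵥ (x - x₁) := hxb.1
      have h2 := (abs_le.1 h2a).1
      have h3 : (x - x₁) ⬝ᵥ (x - x₁) = r ^ 2 := hx
      have h4 : a x = a x₁ + a.linear (x - x₁) := by
        have := a.map_vadd x₁ (x - x₁)
        simp at this
        rw [map_sub]; linarith
      rw [hqe, hℓe]
      rw [Matrix.sub_mulVec, Matrix.neg_mulVec, Matrix.smul_mulVec, Matrix.one_mulVec,
        dotProduct_sub _ (-(Hv *ᵥ (x - x₁))), dotProduct_neg, dotProduct_smul, h3, smul_eq_mul]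
      rw [hsq x, sqd, sqd, h3] at h1
      rw [h3] at h2
      have h5 : 0 < κ * r ^ 2 := by positivity
      nlinarith

/-- closed cylinder -/
def ccyl {n : ℕ} (D : Set (Fin n → ℝ)) : Set (Fin (n+1) → ℝ) :=
  {y : Fin (n+1) → ℝ | y 0 ∈ Set.Icc (0:ℝ) 1 ∧ Fin.tail y ∈ closure D}

lemma cons_mem_ccyl {n : ℕ} {D : Set (Fin n → ℝ)} {s : ℝ} {x : Fin n → ℝ}
    (hs : s ∈ Set.Icc (0:ℝ) 1) (hx : x ∈ closure D) : (Fin.cons s x : Fin (n+1) → ℝ) ∈ ccyl D :=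
  ⟨by simpa using hs, by simpa using hx⟩

lemma cyl_subset_ccyl {n : ℕ} (D : Set (Fin n → ℝ)) : cyl D ⊆ ccyl D :=
  fun _ hy => ⟨Set.Ioo_subset_Icc_self hy.1, subset_closure hy.2⟩

lemma frontier_ccyl_side {n : ℕ} {D : Set (Fin n → ℝ)} {s : ℝ} (hs : s = 0 ∨ s = 1)
    {x : Fin n → ℝ} (hx : x ∈ closure D) : (Fin.cons s x : Fin (n+1) → ℝ) ∈ frontier (ccyl D) := by
  have hs' : s ∈ Set.Icc (0:ℝ) 1 := by rcases hs with rfl | rfl <;> simp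
  refine ⟨subset_closure (cons_mem_ccyl hs' hx), fun hi => ?_⟩
  have hc : Continuous fun s : ℝ => (Fin.cons s x : Fin (n+1) → ℝ) :=
    continuous_cons.comp (continuous_id.prodMk continuous_const)
  have h1 : ∀ᶠ a in nhds s, (Fin.cons a x : Fin (n+1) → ℝ) ∈ ccyl D :=
    hc.continuousAt.eventually (mem_interior_iff_mem_nhds.1 hi)
  have h2 : ∀ᶠ a in nhds s, a ∈ Set.Icc (0:ℝ) 1 := by
    filter_upwards [h1] with a ha
    simpa using ha.1
  have h3 : s ∈ interior (Set.Icc (0:ℝ) 1) := mem_interior_iff_mem_nhds.2 h2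
  rw [interior_Icc] at h3
  rcases hs with rfl | rfl
  · exact lt_irrefl _ h3.1
  · exact lt_irrefl _ h3.2

lemma frontier_ccyl_lat {n : ℕ} {D : Set (Fin n → ℝ)} (hD : IsOpen D) (hDc : Convex ℝ D)
    (hDn : D.Nonempty) {s : ℝ} (hs : s ∈ Set.Icc (0:ℝ) 1)
    {x : Fin n → ℝ} (hx : x ∈ frontier D) : (Fin.cons s x : Fin (n+1) → ℝ) ∈ frontier (ccyl D) := by
  refine ⟨subset_closure (cons_mem_ccyl hs hx.1), fun hi => hx.2 ?_⟩
  have hc : Continuous fun x : Fin n → ℝ => (Fin.cons s x : Fin (n+1) → ℝ) :=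
    continuous_cons.comp (continuous_const.prodMk continuous_id)
  have h1 : ∀ᶠ a in nhds x, (Fin.cons s a : Fin (n+1) → ℝ) ∈ ccyl D :=
    hc.continuousAt.eventually (mem_interior_iff_mem_nhds.1 hi)
  have h2 : ∀ᶠ a in nhds x, a ∈ closure D := by
    filter_upwards [h1] with a ha
    simpa using ha.2
  have h3 : x ∈ interior (closure D) := mem_interior_iff_mem_nhds.2 h2
  rwa [hDc.interior_closure_eq_interior_of_nonempty_interior (by rwa [hD.interior_eq])] at h3

/-- partial Legendre transform -/
noncomputable def wt {n : ℕ} (u : (Fin (n+1) → ℝ) → ℝ) (τ : ℝ) (x : Fin n → ℝ) : ℝ :=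
  sInf ((fun s => u (Fin.cons s x) - τ * s) '' Set.Icc (0:ℝ) 1)

section
variable {n : ℕ} {D : Set (Fin n → ℝ)} {u : (Fin (n+1) → ℝ) → ℝ}

lemma cont_slice (huc : ContinuousOn u (ccyl D)) {x : Fin n → ℝ} (hx : x ∈ closure D) :
    ContinuousOn (fun s => u (Fin.cons s x)) (Set.Icc (0:ℝ) 1) := by
  refine huc.comp (Continuous.continuousOn ?_) (fun s hs => cons_mem_ccyl hs hx)
  exact continuous_cons.comp (continuous_id.prodMk continuous_const)

lemma wt_le (huc : ContinuousOn u (ccyl D)) (τ : ℝ) {x : Fin n → ℝ} (hx : x ∈ closure D)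
    {s : ℝ} (hs : s ∈ Set.Icc (0:ℝ) 1) : wt u τ x ≤ u (Fin.cons s x) - τ * s := by
  have hc : ContinuousOn (fun s => u (Fin.cons s x) - τ * s) (Set.Icc (0:ℝ) 1) :=
    (cont_slice huc hx).sub (by fun_prop)
  exact csInf_le (isCompact_Icc.image_of_continuousOn hc).bddBelow ⟨s, hs, rfl⟩

lemma wt_attained (huc : ContinuousOn u (ccyl D)) (τ : ℝ) {x : Fin n → ℝ} (hx : x ∈ closure D) :
    ∃ s ∈ Set.Icc (0:ℝ) 1, wt u τ x = u (Fin.cons s x) - τ * s := by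
  have hc : ContinuousOn (fun s => u (Fin.cons s x) - τ * s) (Set.Icc (0:ℝ) 1) :=
    (cont_slice huc hx).sub (by fun_prop)
  obtain ⟨s, hs, h⟩ := (isCompact_Icc.image_of_continuousOn hc).sInf_mem
    ((Set.nonempty_Icc.2 zero_le_one).image _)
  exact ⟨s, hs, h.symm⟩

lemma wt_lt (huc : ContinuousOn u (ccyl D)) {τ : ℝ} {x : Fin n → ℝ} (hx : x ∈ closure D)
    {b : ℝ} (hb : wt u τ x < b) : ∃ s ∈ Set.Ioo (0:ℝ) 1, u (Fin.cons s x) - τ * s < b := by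
  by_contra hcon
  push Not at hcon
  have hc : ContinuousOn (fun s => u (Fin.cons s x) - τ * s) (Set.Icc (0:ℝ) 1) :=
    (cont_slice huc hx).sub (by fun_prop)
  have hcl : closure (Set.Ioo (0:ℝ) 1) = Set.Icc 0 1 := closure_Ioo zero_ne_one
  obtain ⟨s, hs, h⟩ := wt_attained huc τ hx
  have := le_on_closure (f := fun _ => b) (g := fun s => u (Fin.cons s x) - τ * s)
    (s := Set.Ioo (0:ℝ) 1) hcon continuousOn_const (by rwa [hcl]) (by rw [hcl]; exact hs)
  have h2 : b ≤ u (Fin.cons s x) - τ * s := this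
  linarith

lemma wt_usc (huc : ContinuousOn u (ccyl D)) (τ : ℝ) :
    UpperSemicontinuousOn (wt u τ) (closure D) := by
  intro x hx b hb
  obtain ⟨s, hs, h⟩ := wt_attained huc τ hx
  have hc : ContinuousOn (fun x => u (Fin.cons s x) - τ * s) (closure D) := by
    refine (huc.comp (Continuous.continuousOn ?_) (fun x hx => cons_mem_ccyl hs hx)).sub
      continuousOn_const
    exact continuous_cons.comp (continuous_const.prodMk continuous_id)
  have h1 : ∀ᶠ y in nhdsWithin x (closure D), u (Fin.cons s y) - τ * s < b :=
    (hc x hx).eventually (gt_mem_nhds (show u (Fin.cons s x) - τ * s < b by rw [← h]; exact hb))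
  filter_upwards [h1, self_mem_nhdsWithin] with y hy hyD
  exact (wt_le huc τ hyD hs).trans_lt hy

lemma wt_typeF {c : ℝ} (hc : n * (π / 2) ≤ c) (hc2 : c - π / 2 < n * (π / 2)) (hD : IsOpen D)
    (huc : ContinuousOn u (ccyl D))
    (hu : IsTypeF (calF n c) (cyl D) (fun y => (u y : EReal))) (τ : ℝ) :
    IsTypeF (Fc n (c - π / 2)) D (fun x => (wt u τ x : EReal)) := by
  refine typeF_of_quad (by linarith) ((wt_usc huc τ).mono subset_closure) ?_
  intro q P hq hP x₁ r hr hball hlt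
  obtain ⟨t, ht, h⟩ := MvPolynomial.minprin hc hc2 hD (huc.mono (cyl_subset_ccyl D)) hu hq hP hr hball
    (τ := τ) (fun x hx => wt_lt huc (subset_closure (hball (esph_subset_eball _ _ hx))) (hlt x hx))
  exact (wt_le huc τ (subset_closure (hball (self_mem_eball x₁ r))) (Set.Ioo_subset_Icc_self ht)).trans h

lemma wt_limsup (huc : ContinuousOn u (ccyl D)) (τ : ℝ) {y : Fin n → ℝ} (hy : y ∈ closure D) :
    limsup (fun x => (wt u τ x : EReal)) (nhdsWithin y D) ≤ (wt u τ y : EReal) := by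
  by_contra hcon
  push Not at hcon
  obtain ⟨b, hb1, hb2⟩ := EReal.lt_iff_exists_real_btwn.1 hcon
  refine absurd hb2 (not_lt.2 (limsup_le_of_le (by isBoundedDefault) ?_))
  have := (wt_usc huc τ y hy b (EReal.coe_lt_coe_iff.1 hb1)).filter_mono
    (nhdsWithin_mono y subset_closure)
  filter_upwards [this] with x hx
  exact EReal.coe_le_coe_iff.2 hx.le

end

lemma legendre1d {f : ℝ → ℝ} (hf : ContinuousOn f (Set.Icc (0:ℝ) 1))
    (hcv : ConvexOn ℝ (Set.Ioo (0:ℝ) 1) f) {t b : ℝ} (ht : t ∈ Set.Icc (0:ℝ) 1) (hb : b < f t) :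
    ∃ τ : ℝ, ∀ s ∈ Set.Icc (0:ℝ) 1, b ≤ f s - τ * s + τ * t := by
  set E := {p : ℝ × ℝ | p.1 ∈ Set.Ioo (0:ℝ) 1 ∧ f p.1 ≤ p.2} with hE
  have hEc : Convex ℝ E := hcv.convex_epigraph
  have hnot : (t, b) ∉ closure E := by
    intro h
    have h1 : closure E ⊆ {p : ℝ × ℝ | p.1 ∈ Set.Icc (0:ℝ) 1 ∧ f p.1 ≤ p.2} :=
      closure_minimal (fun p hp => ⟨Set.Ioo_subset_Icc_self hp.1, hp.2⟩) (isClosed_Icc.epigraph hf)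
    have h2 : f t ≤ b := (h1 h).2
    linarith
  obtain ⟨φ, U, h1, h2⟩ := geometric_hahn_banach_point_closed hEc.closure isClosed_closure hnot
  set α := φ (1, 0) with hα
  set β := φ (0, 1) with hβ
  have hφ : ∀ s y : ℝ, φ (s, y) = α * s + β * y := by
    intro s y
    have : (s, y) = s • ((1:ℝ), (0:ℝ)) + y • ((0:ℝ), (1:ℝ)) := by simp
    rw [this, map_add, map_smul, map_smul, smul_eq_mul, smul_eq_mul]; ring
  have hcl : closure (Set.Ioo (0:ℝ) 1) = Set.Icc 0 1 := closure_Ioo zero_ne_one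
  have h3 : ∀ s ∈ Set.Icc (0:ℝ) 1, U ≤ α * s + β * f s := by
    intro s hs
    refine le_on_closure (f := fun _ => U) (g := fun s => α * s + β * f s)
      (s := Set.Ioo (0:ℝ) 1) ?_ continuousOn_const ?_ (by rw [hcl]; exact hs)
    · intro s hs
      have := h2 (s, f s) (subset_closure ⟨hs, le_rfl⟩)
      rw [hφ] at this; exact this.le
    · rw [hcl]; exact (by fun_prop : ContinuousOn (fun s => α * s) _).add (continuousOn_const.mul hf)
  rw [hφ] at h1
  have h4 := h3 t ht
  have hβ0 : 0 < β := by
    by_contra hcon; push Not at hcon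
    nlinarith
  refine ⟨-α / β, fun s hs => ?_⟩
  have h5 := h3 s hs
  have h6 : β * b ≤ β * (f s - -α / β * s + -α / β * t) := by
    have : β * (f s - -α / β * s + -α / β * t) = β * f s + α * s - α * t := by field_simp; ring
    rw [this]; linarith
  exact le_of_mul_le_mul_left h6 hβ0

lemma wt_legendre {n : ℕ} {D : Set (Fin n → ℝ)} {u : (Fin (n+1) → ℝ) → ℝ} {c : ℝ}
    (hc : n * (π / 2) ≤ c) (hD : IsOpen D) (huc : ContinuousOn u (ccyl D))
    (hu : IsTypeF (calF n c) (cyl D) (fun y => (u y : EReal))) {x : Fin n → ℝ} (hx : x ∈ D)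
    {t b : ℝ} (ht : t ∈ Set.Icc (0:ℝ) 1) (hb : b < u (Fin.cons t x)) :
    ∃ τ : ℝ, b ≤ wt u τ x + τ * t := by
  have hcv : ConvexOn ℝ (Set.Ioo (0:ℝ) 1) (fun s => u (Fin.cons s x)) := by
    refine ⟨convex_Ioo 0 1, ?_⟩
    intro s hs t ht a b ha hb hab
    have h1 := conv_t hc hD hu hx hs ht (a := b) ⟨hb, by linarith⟩
    have ea : a = 1 - b := by linarith
    have e : a • s + b • t = s + b * (t - s) := by
      simp only [smul_eq_mul, ea]; ring
    show u (Fin.cons (a • s + b • t) x) ≤ a • u (Fin.cons s x) + b • u (Fin.cons t x)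
    rw [e]
    simp only [smul_eq_mul, ea]; linarith
  obtain ⟨τ, hτ⟩ := legendre1d (cont_slice huc (subset_closure hx)) hcv ht hb
  refine ⟨τ, ?_⟩
  obtain ⟨s, hs, h⟩ := wt_attained huc τ (subset_closure hx)
  rw [h]; exact hτ s hs

lemma hessianMatrix_comp_sub {m : ℕ} (f : (Fin m → ℝ) → ℝ) (y x : Fin m → ℝ) :
    hessianMatrix (fun x => f (x - y)) x = hessianMatrix f (x - y) := by
  ext i j
  simp only [hessianMatrix, Matrix.of_apply]
  rw [iteratedFDeriv_comp_sub]

namespace MvPolynomial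

lemma ball_cmp {n : ℕ} {c : ℝ} {D : Set (Fin n → ℝ)} {w : (Fin n → ℝ) → ℝ}
    (hw : IsTypeF (Fc n c) D (fun x => (w x : EReal)))
    {B : Matrix (Fin n) (Fin n) ℝ} {γ : ℝ}
    (hsep : ∀ A ∈ Fc n c, 2 * γ * B.trace < (B * A).trace) {y : Fin n → ℝ} {r : ℝ} (hr : 0 < r)
    (hball : eball y r ⊆ D) {h : MvPolynomial (Fin n) ℝ} (hh : Lop B h = 0)
    (hle : ∀ ξ ∈ esph (0 : Fin n → ℝ) r, w (y + ξ) ≤ eval ξ h) :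
    w y ≤ eval 0 h - γ * r ^ 2 := by
  set p : MvPolynomial (Fin n) ℝ := h + C γ * (PSq 0 - C (r ^ 2)) with hp
  have hpe : ∀ x, eval x p = eval x h + γ * (sqd 0 x - r ^ 2) := by
    intro x; simp [hp, eval_PSq]
  have hcd : ContDiff ℝ 2 (fun x => eval (x - y) p) :=
    (contDiff_eval p).comp (contDiff_id.sub contDiff_const)
  have hLp : Lop B p = C (2 * γ * B.trace) := by
    rw [hp, map_add, hh, zero_add, ← smul_eq_C_mul, map_smul, map_sub, Lop_PSq]
    have : Lop B (C (r ^ 2)) = 0 := by simp [Lop_apply]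
    rw [this, sub_zero, smul_eq_C_mul, ← C_mul]; congr 1; ring
  have hsq : ∀ x, sqd y x = sqd 0 (x - y) := by intro x; simp [sqd]
  have main := typeF_cmp hw hcd ?_ (isCompact_eball y hr.le) hball ?_ y (self_mem_eball y r)
  · have := EReal.coe_le_coe_iff.1 main
    rw [hpe] at this
    simp only [sub_self, sqd_self] at this
    linarith
  · intro x _ hmem
    rw [hessianMatrix_comp_sub (fun x => eval x p)] at hmem
    have := hsep _ hmem
    rw [← eval_Lop, hLp, eval_C] at this
    exact lt_irrefl _ this
  · intro x hx
    have hx' := frontier_eball_subset y r hx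
    have hs : sqd 0 (x - y) = r ^ 2 := by rw [← hsq]; exact hx'
    refine EReal.coe_le_coe_iff.2 ?_
    have := hle (x - y) hs
    rw [add_sub_cancel] at this
    rw [hpe, hs]; linarith

/-- restriction to the sphere -/
noncomputable def resE {n : ℕ} (r : ℝ) : MvPolynomial (Fin n) ℝ →ₗ[ℝ] C(esph (0 : Fin n → ℝ) r, ℝ) where
  toFun p := ⟨fun x => eval x.1 p, (contDiff_eval (k := 2) p).continuous.comp continuous_subtype_val⟩
  map_add' p q := by ext x; simp
  map_smul' a p := by ext x; simp [smul_eval]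

lemma resE_apply {n : ℕ} (r : ℝ) (p : MvPolynomial (Fin n) ℝ) (x : esph (0 : Fin n → ℝ) r) :
    resE r p x = eval x.1 p := rfl

lemma exists_functional {n : ℕ} {B : Matrix (Fin n) (Fin n) ℝ} (hB : B.PosSemidef) (ht : 0 < B.trace)
    {r : ℝ} (hr : 0 < r) [CompactSpace (esph (0 : Fin n → ℝ) r)] :
    ∃ Λ : StrongDual ℝ C(esph (0 : Fin n → ℝ) r, ℝ), (∀ f, |Λ f| ≤ ‖f‖) ∧
      ∀ h : MvPolynomial (Fin n) ℝ, Lop B h = 0 → Λ (resE r h) = eval 0 h := by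
  set V : Submodule ℝ (MvPolynomial (Fin n) ℝ) := LinearMap.ker (Lop B) with hV
  set R : V →ₗ[ℝ] C(esph (0 : Fin n → ℝ) r, ℝ) := (resE r) ∘ₗ V.subtype with hR
  set ev : V →ₗ[ℝ] ℝ := (aeval (0 : Fin n → ℝ)).toLinearMap ∘ₗ V.subtype with hev
  have hevv : ∀ v : V, ev v = eval 0 v.1 := by
    intro v; simp [hev, aeval_def, eval₂_eq_eval_map]
  have hmax : ∀ v : V, |ev v| ≤ ‖R v‖ := by
    intro v
    have hv : Lop B v.1 = 0 := v.2
    have hb : ∀ x ∈ esph (0 : Fin n → ℝ) r, |eval x v.1| ≤ ‖R v‖ := by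
      intro x hx
      exact (R v).norm_coe_le_norm ⟨x, hx⟩
    rw [hevv, abs_le]
    constructor
    · have := Lop_max hB ht (p := -v.1) (by simp [hv]) hr.le (M := ‖R v‖)
        (fun x hx => by have := (abs_le.1 (hb x hx)).1; simp; linarith) 0 (self_mem_eball 0 r)
      simp at this ⊢; linarith
    · exact Lop_max hB ht (p := v.1) (by simp [hv]) hr.le (M := ‖R v‖)
        (fun x hx => (abs_le.1 (hb x hx)).2) 0 (self_mem_eball 0 r)
  have hker : LinearMap.ker R ≤ LinearMap.ker ev := by
    intro v hv
    have h1 := hmax v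
    rw [LinearMap.mem_ker.1 hv, norm_zero] at h1
    exact LinearMap.mem_ker.2 (abs_nonpos_iff.1 h1)
  set f0 : LinearMap.range R →ₗ[ℝ] ℝ :=
    ((LinearMap.ker R).liftQ ev hker) ∘ₗ (R.quotKerEquivRange.symm : _ →ₗ[ℝ] _) with hf0
  have hf0v : ∀ v : V, f0 ⟨R v, v, rfl⟩ = ev v := by
    intro v
    have : R.quotKerEquivRange.symm ⟨R v, v, rfl⟩ = (LinearMap.ker R).mkQ v :=
      R.quotKerEquivRange_symm_apply_image v _
    simp only [hf0, LinearMap.comp_apply, LinearEquiv.coe_coe]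
    rw [this, Submodule.mkQ_apply, Submodule.liftQ_apply]
  have hbd : ∀ x, ‖f0 x‖ ≤ 1 * ‖x‖ := by
    rintro ⟨_, v, rfl⟩
    rw [hf0v, one_mul, Real.norm_eq_abs]; exact hmax v
  obtain ⟨g, hg1, hg2⟩ := exists_extension_norm_eq (LinearMap.range R) (f0.mkContinuous 1 hbd)
  refine ⟨g, fun f => ?_, fun h hh => ?_⟩
  · have h1 : ‖g‖ ≤ 1 := by
      rw [hg2]
      exact ContinuousLinearMap.opNorm_le_bound _ zero_le_one fun x => hbd x
    have h2 := g.le_opNorm f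
    rw [Real.norm_eq_abs] at h2
    refine h2.trans ?_
    have := mul_le_mul_of_nonneg_right h1 (norm_nonneg f)
    linarith
  · have h1 : g (R ⟨h, hh⟩) = f0 ⟨R ⟨h, hh⟩, _, rfl⟩ := hg1 ⟨R ⟨h, hh⟩, _, rfl⟩
    rw [hf0v, hevv] at h1
    exact h1

lemma mean_value {n : ℕ} {c : ℝ} {D : Set (Fin n → ℝ)} {w : (Fin n → ℝ) → ℝ}
    (hw : IsTypeF (Fc n c) D (fun x => (w x : EReal)))
    {B : Matrix (Fin n) (Fin n) ℝ} (hB : B.PosSemidef) (ht : 0 < B.trace) {γ : ℝ}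
    (hsep : ∀ A ∈ Fc n c, 2 * γ * B.trace < (B * A).trace) {r : ℝ} (hr : 0 < r)
    [CompactSpace (esph (0 : Fin n → ℝ) r)]
    {Λ : StrongDual ℝ C(esph (0 : Fin n → ℝ) r, ℝ)} (hΛ : ∀ f, |Λ f| ≤ ‖f‖)
    (hΛh : ∀ h : MvPolynomial (Fin n) ℝ, Lop B h = 0 → Λ (resE r h) = eval 0 h)
    {y : Fin n → ℝ} (hball : eball y r ⊆ D) {f : C(esph (0 : Fin n → ℝ) r, ℝ)}
    (hf : ∀ ξ : esph (0 : Fin n → ℝ) r, f ξ = w (y + ξ.1)) :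
    w y + γ * r ^ 2 ≤ Λ f := by
  refine le_of_forall_pos_le_add fun ε hε => ?_
  set f' : (Fin n → ℝ) → ℝ := Function.extend Subtype.val f 0 with hf'
  have hfv : ∀ x : esph (0 : Fin n → ℝ) r, f' x.1 = f x :=
    fun x => Subtype.val_injective.extend_apply _ _ _
  have hfc : ContinuousOn f' (esph (0 : Fin n → ℝ) r) := by
    rw [continuousOn_iff_continuous_domRestrict]
    have : (esph (0 : Fin n → ℝ) r).domRestrict f' = f := by ext x; exact hfv x
    rw [this]; exact f.continuous
  obtain ⟨p, hp⟩ := weierstrass (isCompact_esph 0 hr.le) hfc (half_pos hε)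
  obtain ⟨h, hh, hhp⟩ := dirichlet hB ht 0 hr p
  have hclose : ∀ ξ : esph (0 : Fin n → ℝ) r, |eval ξ.1 h - f ξ| < ε / 2 := by
    intro ξ; rw [hhp _ ξ.2, ← hfv]; exact hp _ ξ.2
  have h1 := ball_cmp hw hsep hr hball (h := h + C (ε / 2)) (by
      rw [map_add, hh, zero_add]; simp [Lop_apply]) (fun ξ hξ => by
      have := (abs_lt.1 (hclose ⟨ξ, hξ⟩)).1
      rw [hf] at this
      simp; linarith)
  have h2 : |Λ (resE r h - f)| ≤ ε / 2 := by
    refine (hΛ _).trans ((ContinuousMap.norm_le _ (half_pos hε).le).2 fun ξ => ?_)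
    rw [ContinuousMap.sub_apply, resE_apply]; exact (hclose ξ).le
  rw [map_sub, hΛh h hh] at h2
  have := (abs_le.1 h2).2
  rw [map_add, eval_C] at h1
  linarith

end MvPolynomial

namespace MvPolynomial

lemma conv_mean {n : ℕ} {r : ℝ} [CompactSpace (esph (0 : Fin n → ℝ) r)]
    (Λ : StrongDual ℝ C(esph (0 : Fin n → ℝ) r, ℝ))
    {ρ wt' W : (Fin n → ℝ) → ℝ} (hρ : Continuous ρ) (hρs : HasCompactSupport ρ)
    (hρ0 : ∀ z, 0 ≤ ρ z) (hρ1 : ∫ z, ρ z = 1) (hw : Continuous wt')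
    (hW : ∀ x, W x = ∫ z, ρ z * wt' (x - z)) {x₁ : Fin n → ℝ} {b : ℝ}
    (hmv : ∀ z, ρ z ≠ 0 → ∀ f : C(esph (0 : Fin n → ℝ) r, ℝ),
      (∀ ξ : esph (0 : Fin n → ℝ) r, f ξ = wt' (x₁ - z + ξ.1)) → wt' (x₁ - z) + b ≤ Λ f)
    {F : C(esph (0 : Fin n → ℝ) r, ℝ)}
    (hF : ∀ ξ : esph (0 : Fin n → ℝ) r, F ξ = W (x₁ + ξ.1)) :
    W x₁ + b ≤ Λ F := by
  set f2 : C((Fin n → ℝ) × esph (0 : Fin n → ℝ) r, ℝ) :=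
    ⟨fun p => wt' (x₁ - p.1 + p.2.1), by fun_prop⟩ with hf2
  set G : (Fin n → ℝ) → C(esph (0 : Fin n → ℝ) r, ℝ) := fun z => ρ z • f2.curry z with hG
  have hGc : Continuous G := hρ.smul f2.curry.continuous
  have hGs : HasCompactSupport G := hρs.smul_right
  have hGi : MeasureTheory.Integrable G MeasureTheory.volume :=
    hGc.integrable_of_hasCompactSupport hGs
  have hFG : F = ∫ z, G z := by
    ext ξ
    have h1 := (ContinuousMap.evalCLM ℝ ξ).integral_comp_comm hGi
    rw [hF, hW]
    have h2 : (∫ z, G z) ξ = ContinuousMap.evalCLM ℝ ξ (∫ z, G z) := rfl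
    rw [h2, ← h1]
    refine MeasureTheory.integral_congr_ae (Eventually.of_forall fun z => ?_)
    show ρ z * wt' (x₁ + ξ.1 - z) = ρ z * wt' (x₁ - z + ξ.1)
    rw [add_sub_right_comm]
  have h3 := Λ.integral_comp_comm hGi
  rw [hFG, ← h3, hW]
  have hi1 : MeasureTheory.Integrable (fun z => ρ z * wt' (x₁ - z)) MeasureTheory.volume := by
    refine Continuous.integrable_of_hasCompactSupport (by fun_prop) hρs.mul_right
  have hi2 : MeasureTheory.Integrable (fun z => ρ z * b) MeasureTheory.volume := by
    refine Continuous.integrable_of_hasCompactSupport (by fun_prop) hρs.mul_right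
  have hb : b = ∫ z, ρ z * b := by
    rw [MeasureTheory.integral_mul_const, hρ1, one_mul]
  rw [hb, ← MeasureTheory.integral_add hi1 hi2]
  refine MeasureTheory.integral_mono (hi1.add hi2) (Λ.integrable_comp hGi) fun z => ?_
  show ρ z * wt' (x₁ - z) + ρ z * b ≤ Λ (ρ z • f2.curry z)
  rw [map_smul, smul_eq_mul, ← mul_add]
  by_cases hz : ρ z = 0
  · simp [hz]
  · exact mul_le_mul_of_nonneg_left (hmv z hz _ fun ξ => rfl) (hρ0 z)

lemma hess_mem {n : ℕ} {c : ℝ} (hc : ((n : ℝ) - 1) * (π / 2) ≤ c)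
    (hc2 : c < n * (π / 2)) {W : (Fin n → ℝ) → ℝ} (hWc : ContDiff ℝ 2 W) {x₁ : Fin n → ℝ}
    {η : ℝ} (hη : 0 < η)
    (hmv : ∀ (B : Matrix (Fin n) (Fin n) ℝ) (γ : ℝ), B.PosSemidef → 0 < B.trace →
      (∀ A ∈ Fc n c, 2 * γ * B.trace < (B * A).trace) →
      ∀ r, 0 < r → r ≤ η → ∀ [CompactSpace (esph (0 : Fin n → ℝ) r)]
      (Λ : StrongDual ℝ C(esph (0 : Fin n → ℝ) r, ℝ)), (∀ f, |Λ f| ≤ ‖f‖) →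
      (∀ h : MvPolynomial (Fin n) ℝ, Lop B h = 0 → Λ (resE r h) = eval 0 h) →
      ∀ F : C(esph (0 : Fin n → ℝ) r, ℝ),
        (∀ ξ : esph (0 : Fin n → ℝ) r, F ξ = W (x₁ + ξ.1)) → W x₁ + γ * r ^ 2 ≤ Λ F) :
    hessianMatrix W x₁ ∈ Fc n c := by
  by_contra hne
  set H := hessianMatrix W x₁ with hH
  have hHs : H.IsSymm := hessianMatrix_isSymm hWc.contDiffAt
  obtain ⟨B, δ, hδ, hB, ht, hsep⟩ := Fc_separation hc hc2 hHs hne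
  set β := (B * H).trace with hβ
  set γ := (β + δ / 2) / (2 * B.trace) with hγ
  set μ := β / (2 * B.trace) with hμ
  set s := δ / (8 * B.trace) with hs
  have hspos : 0 < s := by positivity
  have hγe : 2 * γ * B.trace = β + δ / 2 := by rw [hγ]; field_simp
  have hsep' : ∀ A ∈ Fc n c, 2 * γ * B.trace < (B * A).trace := by
    intro A hA
    have := hsep A hA
    rw [mul_sub, Matrix.trace_sub] at this
    rw [hγe]; linarith
  obtain ⟨e, he, hT⟩ := Metric.eventually_nhds_iff.1 (taylor2 (hWc.contDiffAt (x := x₁)) hspos)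
  set r := min η (e / 2) with hr
  have hrpos : 0 < r := by rw [hr]; positivity
  have hre : r < e := lt_of_le_of_lt (min_le_right _ _) (by linarith)
  have : CompactSpace (esph (0 : Fin n → ℝ) r) :=
    isCompact_iff_compactSpace.1 (isCompact_esph 0 hrpos.le)
  obtain ⟨Λ, hΛ, hΛh⟩ := exists_functional hB ht hrpos
  set F : C(esph (0 : Fin n → ℝ) r, ℝ) :=
    ⟨fun ξ => W (x₁ + ξ.1), hWc.continuous.comp (by fun_prop)⟩ with hF
  have h1 := hmv B γ hB ht hsep' r hrpos (min_le_left _ _) Λ hΛ hΛh F fun ξ => rfl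
  obtain ⟨T, hTe, hTH⟩ := quadPoly (W x₁) (fderiv ℝ W x₁ : (Fin n → ℝ) →ₗ[ℝ] ℝ) hHs 0
  have hLT : Lop B T = C β := by
    refine MvPolynomial.funext fun x => ?_
    rw [eval_Lop, hTH, eval_C]
  set p := T - μ • (PSq 0 - C (r ^ 2)) with hp
  have hLp : Lop B p = 0 := by
    have h0 : Lop B (C (r ^ 2)) = 0 := by simp [Lop_apply]
    rw [hp, map_sub, map_smul, map_sub, hLT, Lop_PSq, h0, sub_zero, smul_eq_C_mul, ← C_mul, ← C_sub]
    have : β - μ * (2 * B.trace) = 0 := by rw [hμ]; field_simp; ring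
    rw [this, C_0]
  have hpe : ∀ x, eval x p = eval x T - μ * (sqd 0 x - r ^ 2) := by
    intro x; rw [hp, map_sub, smul_eval, map_sub, eval_PSq, eval_C]
  have hp0 : eval 0 p = W x₁ + μ * r ^ 2 := by
    rw [hpe, hTe, sqd_self]; simp
  have h2 : |Λ (F - resE r p)| ≤ s * r ^ 2 := by
    refine (hΛ _).trans ((ContinuousMap.norm_le _ (by positivity)).2 fun ξ => ?_)
    have hξ : sqd 0 ξ.1 = r ^ 2 := ξ.2
    rw [ContinuousMap.sub_apply, resE_apply, hpe, hξ, sub_self, mul_zero, sub_zero, hTe]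
    have h3 := norm_le_of_sqd_le hrpos.le hξ.le
    rw [sub_zero] at h3
    have h4 := hT (y := x₁ + ξ.1) (by rw [dist_eq_norm, add_sub_cancel_left]; linarith)
    rw [add_sub_cancel_left] at h4
    rw [sqd, sub_zero] at hξ
    rw [hξ] at h4
    rw [sub_zero]
    exact h4
  rw [map_sub, hΛh p hLp, hp0] at h2
  have h3 := (abs_le.1 h2).2
  have h4 : γ * r ^ 2 ≤ (μ + s) * r ^ 2 := by linarith
  have h5 := le_of_mul_le_mul_right h4 (by positivity)
  have h6 : γ = μ + 2 * s := by rw [hγ, hμ, hs]; field_simp; ring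
  linarith

open Convolution in
lemma mollify {n : ℕ} {c : ℝ} (hc : ((n : ℝ) - 1) * (π / 2) ≤ c)
    (hc2 : c < n * (π / 2)) {D K : Set (Fin n → ℝ)} (hD : IsOpen D) {w : (Fin n → ℝ) → ℝ}
    (hw : IsTypeF (Fc n c) D (fun x => (w x : EReal))) (hwc : ContinuousOn w D)
    (hK : IsCompact K) (hKD : K ⊆ D) {ε : ℝ} (hε : 0 < ε) :
    ∃ W : (Fin n → ℝ) → ℝ, ContDiff ℝ 2 W ∧ (∀ x ∈ K, |W x - w x| ≤ ε) ∧
      ∀ x ∈ K, hessianMatrix W x ∈ Fc n c := by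
  obtain ⟨η, hη, hηD⟩ := hK.exists_cthickening_subset_open hD hKD
  set K2 := Metric.cthickening η K with hK2
  have hK2c : IsCompact K2 := hK.cthickening
  obtain ⟨v, hv⟩ := ContinuousMap.exists_restrict_eq (Metric.isClosed_cthickening (E := K) (δ := η))
    ⟨fun x : K2 => w x.1, continuousOn_iff_continuous_domRestrict.1 (hwc.mono hηD)⟩
  have hvw : ∀ x ∈ K2, v x = w x := fun x hx => congrArg (fun f => f ⟨x, hx⟩) hv
  have hKK2 : K ⊆ K2 := Metric.self_subset_cthickening K
  -- uniform continuity
  have huc := hK2c.uniformContinuousOn_of_continuous v.continuous.continuousOn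
  obtain ⟨e, he, hue⟩ := Metric.uniformContinuousOn_iff.1 huc ε hε
  set R := min (η / 2) e with hR
  have hRpos : 0 < R := by rw [hR]; positivity
  have hRη : R ≤ η / 2 := min_le_left _ _
  set φ : ContDiffBump (0 : Fin n → ℝ) := ⟨R / 2, R, by positivity, by linarith⟩ with hφ
  set ρ := φ.normed MeasureTheory.volume with hρ
  set W := (ρ ⋆[ContinuousLinearMap.lsmul ℝ ℝ, MeasureTheory.volume] v : (Fin n → ℝ) → ℝ) with hWd
  have hWc : ContDiff ℝ 2 W := by
    exact φ.hasCompactSupport_normed.contDiff_convolution_left _ (n := 2) φ.contDiff_normed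
      v.continuous.locallyIntegrable
  refine ⟨W, hWc, fun x hx => ?_, fun x hx => ?_⟩
  · rw [← hvw x (hKK2 hx)]
    refine φ.dist_normed_convolution_le v.continuous.aestronglyMeasurable fun y hy => ?_
    have hy' : dist y x < R := hy
    refine (hue y ?_ x (hKK2 hx) (lt_of_lt_of_le hy' (min_le_right _ _))).le
    exact Metric.mem_cthickening_of_dist_le y x η K hx (by linarith)
  · refine hess_mem hc hc2 hWc (half_pos hη) ?_
    intro B γ hB ht hsep r hr hrη _ Λ hΛ hΛh F hF
    refine conv_mean Λ (ρ := ρ) (wt' := v) φ.continuous_normed φ.hasCompactSupport_normed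
      φ.nonneg_normed φ.integral_normed v.continuous (fun x => rfl) ?_ hF
    intro z hz f hf
    have hz' : dist z 0 < R := by
      have : z ∈ Function.support ρ := hz
      rw [hρ, φ.support_normed_eq] at this
      exact this
    rw [dist_zero_right] at hz'
    have hball : eball (x - z) r ⊆ K2 := by
      intro y hy
      have h1 := eball_subset hr.le hy
      rw [Metric.mem_closedBall] at h1
      refine Metric.mem_cthickening_of_dist_le y x η K hx ?_
      have h2 : dist (x - z) x ≤ R := by rw [dist_eq_norm, sub_sub_cancel_left, norm_neg]; exact hz'.le
      linarith [dist_triangle y (x - z) x]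
    rw [hvw _ (hball (self_mem_eball _ _))]
    refine mean_value hw hB ht hsep hr hΛ hΛh (hball.trans hηD) fun ξ => ?_
    rw [hf ξ]
    refine hvw _ (hball ?_)
    show sqd _ _ ≤ _
    have : sqd 0 ξ.1 = r ^ 2 := ξ.2
    rw [sqd, add_sub_cancel_left]
    rw [sqd, sub_zero] at this
    exact this.le

end MvPolynomial

lemma dot_succ {n : ℕ} (a b : Fin (n+1) → ℝ) :
    a ⬝ᵥ b = a 0 * b 0 + Fin.tail a ⬝ᵥ Fin.tail b := by
  simp only [dotProduct, Fin.sum_univ_succ]; rfl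

lemma dot_blk {n : ℕ} (κ : ℝ) (S : Matrix (Fin n) (Fin n) ℝ) (d : Fin (n+1) → ℝ) :
    d ⬝ᵥ blk κ S *ᵥ d = κ * d 0 ^ 2 + Fin.tail d ⬝ᵥ S *ᵥ Fin.tail d := by
  have h0 : (blk κ S *ᵥ d) 0 = κ * d 0 := by
    simp [Matrix.mulVec, dotProduct, Fin.sum_univ_succ]
  have h1 : Fin.tail (blk κ S *ᵥ d) = S *ᵥ Fin.tail d := by
    ext i
    simp [Fin.tail, Matrix.mulVec, dotProduct, Fin.sum_univ_succ]
  rw [dot_succ, h0, h1]; ring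

lemma no_interior_max {n : ℕ} {c : ℝ} (hc : n * (π / 2) ≤ c) (hc2 : c - π / 2 < n * (π / 2))
    {D : Set (Fin n → ℝ)} (hD : IsOpen D) {u : (Fin (n+1) → ℝ) → ℝ}
    (hu : IsTypeF (calF n (-c)) (cyl D) (fun y => ((-(u y) : ℝ) : EReal)))
    {W : (Fin n → ℝ) → ℝ} (hW : ContDiff ℝ 2 W) {y₁ : Fin (n+1) → ℝ} (hy₁ : y₁ ∈ cyl D)
    (hWH : hessianMatrix W (Fin.tail y₁) ∈ Fc n (c - π / 2)) {κ τ : ℝ} (hκ : 0 < κ)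
    (hmax : IsLocalMax (fun y => W (Fin.tail y) + τ * y 0 + κ * sqd 0 y - u y) y₁) : False := by
  set H := hessianMatrix W (Fin.tail y₁) with hH
  have hcc : ((n : ℝ) - 1) * (π / 2) ≤ c - π / 2 := by linarith
  have hstrict := Fc_strict hcc hc2 hκ hWH
  set S := H + κ • (1 : Matrix (Fin n) (Fin n) ℝ) with hS
  have hSs : S.IsSymm := hWH.1.add (Matrix.isSymm_one.smul κ)
  have hnot := notMem_calF_blk hκ hSs hstrict
  have hT : ∀ᶠ y in nhds y₁, |W (Fin.tail y) - (W (Fin.tail y₁) +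
      fderiv ℝ W (Fin.tail y₁) (Fin.tail y - Fin.tail y₁) + (1 / 2) *
      ((Fin.tail y - Fin.tail y₁) ⬝ᵥ H *ᵥ (Fin.tail y - Fin.tail y₁)))| ≤
      κ / 4 * ((Fin.tail y - Fin.tail y₁) ⬝ᵥ (Fin.tail y - Fin.tail y₁)) :=
    (continuous_tail.tendsto y₁).eventually (taylor2 hW.contDiffAt (by positivity))
  have hall := (hT.and hmax).and ((isOpen_cyl hD).mem_nhds hy₁)
  obtain ⟨e, he, hE⟩ := Metric.eventually_nhds_iff.1 hall
  set r := e / 2 with hr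
  have hrpos : 0 < r := by positivity
  have hball : ∀ y ∈ eball y₁ r, dist y y₁ < e := by
    intro y hy
    have := Metric.mem_closedBall.1 (eball_subset hrpos.le hy)
    linarith
  set tl : (Fin (n+1) → ℝ) →ₗ[ℝ] (Fin n → ℝ) := LinearMap.funLeft ℝ ℝ Fin.succ with htl
  have htlv : ∀ d, tl d = Fin.tail d := fun d => rfl
  set ℓ : (Fin (n+1) → ℝ) →ₗ[ℝ] ℝ :=
    -(((fderiv ℝ W (Fin.tail y₁) : (Fin n → ℝ) →ₗ[ℝ] ℝ) ∘ₗ tl) + τ • LinearMap.proj 0 +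
      (2 * κ) • dotProductBilin ℝ ℝ y₁) with hℓ
  have hℓv : ∀ d, ℓ d = -(fderiv ℝ W (Fin.tail y₁) (Fin.tail d) + τ * d 0 + 2 * κ * (y₁ ⬝ᵥ d)) := by
    intro d
    simp [hℓ, htlv]
  have hblkS : (-(blk κ S)).IsSymm := (blk_isSymm hSs).neg
  obtain ⟨q, hq, hqH⟩ := MvPolynomial.quadPoly (-(u y₁) - κ * r ^ 2 / 4) ℓ hblkS y₁
  have key := typeF_cmp hu (MvPolynomial.contDiff_eval q) (fun x _ => by rw [hqH]; exact hnot)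
    (isCompact_eball y₁ hrpos.le) (fun y hy => (hE (hball y hy)).2) ?_ y₁ (self_mem_eball _ _)
  · have key' := EReal.coe_le_coe_iff.1 key
    rw [hq, sub_self] at key'
    simp at key'
    have : 0 < κ * r ^ 2 := by positivity
    linarith
  · intro y hy
    have hy' : sqd y₁ y = r ^ 2 := frontier_eball_subset _ _ hy
    have hyb : y ∈ eball y₁ r := esph_subset_eball _ _ hy'
    obtain ⟨⟨h1, h2⟩, -⟩ := hE (hball y hyb)
    refine EReal.coe_le_coe_iff.2 ?_
    rw [hq, hℓv, Matrix.neg_mulVec, dotProduct_neg, dot_blk, hS, Matrix.add_mulVec, Matrix.smul_mulVec,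
      Matrix.one_mulVec, dotProduct_add, dotProduct_smul]
    have htd : Fin.tail (y - y₁) = Fin.tail y - Fin.tail y₁ := rfl
    set d := y - y₁ with hd
    rw [← htd] at h1
    have hdd : d ⬝ᵥ d = r ^ 2 := hy'
    have hd0 : y = y₁ + d := by rw [hd]; abel
    have hsq : sqd 0 y = sqd 0 y₁ + 2 * (y₁ ⬝ᵥ d) + d ⬝ᵥ d := by
      rw [sqd, sqd, sub_zero, sub_zero, hd0]
      simp only [dotProduct_add, add_dotProduct]
      rw [dotProduct_comm d y₁]; ring
    have hy0 : y 0 = y₁ 0 + d 0 := by rw [hd]; simp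
    beta_reduce at h2
    rw [hsq, hy0] at h2
    have h3 := (abs_le.1 h1).1
    have h4 := dot_succ d d
    rw [hdd] at h4 h2
    simp only [smul_eq_mul]
    have h5 : 0 ≤ d 0 * d 0 := mul_self_nonneg _
    set a := Fin.tail d ⬝ᵥ Fin.tail d with ha
    have h6 : d 0 ^ 2 = r ^ 2 - a := by rw [h4]; ring
    rw [h6]
    have h7 : κ * a ≤ κ * r ^ 2 := mul_le_mul_of_nonneg_left (by linarith) hκ.le
    nlinarith

lemma compare_core {n : ℕ} {c : ℝ} (hc : n * (π / 2) ≤ c) (hc2 : c - π / 2 < n * (π / 2))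
    {D : Set (Fin n → ℝ)} (hD : IsOpen D) {u : (Fin (n+1) → ℝ) → ℝ}
    (hu : IsTypeF (calF n (-c)) (cyl D) (fun y => ((-(u y) : ℝ) : EReal)))
    (huc : ContinuousOn u (cyl D)) {w : (Fin n → ℝ) → ℝ}
    (hw : IsTypeF (Fc n (c - π / 2)) D (fun x => (w x : EReal))) (hwc : ContinuousOn w D) {τ : ℝ}
    (hcpt : ∀ η > 0, ∃ K, IsCompact K ∧ K ⊆ cyl D ∧
      ∀ y ∈ cyl D, η ≤ w (Fin.tail y) + τ * y 0 - u y → y ∈ K) :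
    ∀ y ∈ cyl D, w (Fin.tail y) + τ * y 0 ≤ u y := by
  intro y hy
  by_contra hcon
  push Not at hcon
  set m := w (Fin.tail y) + τ * y 0 - u y with hm
  have hmpos : 0 < m := by linarith
  obtain ⟨K, hK, hKc, hKη⟩ := hcpt (m / 2) (by positivity)
  have hyK : y ∈ K := hKη y hy (by linarith)
  obtain ⟨r, hr, hrK⟩ := hK.exists_cthickening_subset_open (isOpen_cyl hD) hKc
  set K' := Metric.cthickening r K with hK'
  have hK'c : IsCompact K' := hK.cthickening
  have hyK' : y ∈ K' := Metric.self_subset_cthickening K hyK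
  obtain ⟨W, hW, hWw, hWH⟩ := MvPolynomial.mollify (by linarith) hc2 hD hw hwc
    (hK'c.image continuous_tail) (by rintro _ ⟨z, hz, rfl⟩; exact (hrK hz).2)
    (show 0 < m / 8 by positivity)
  obtain ⟨R, hR⟩ := (hK'c.image (continuous_sqd 0)).bddAbove
  have hRb : ∀ z ∈ K', sqd 0 z ≤ R := fun z hz => hR ⟨z, hz, rfl⟩
  have hR0 : 0 ≤ R := (sqd_nonneg 0 y).trans (hRb y hyK')
  set κ := m / (8 * (R + 1)) with hκ
  have hκpos : 0 < κ := by positivity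
  have hκb : ∀ z ∈ K', κ * sqd 0 z ≤ m / 8 := by
    intro z hz
    calc κ * sqd 0 z ≤ κ * (R + 1) := mul_le_mul_of_nonneg_left (by linarith [hRb z hz]) hκpos.le
      _ = m / 8 := by rw [hκ]; field_simp
  have hΦc : ContinuousOn (fun y => W (Fin.tail y) + τ * y 0 + κ * sqd 0 y - u y) K' := by
    refine ContinuousOn.sub (Continuous.continuousOn ?_) (huc.mono hrK)
    exact ((hW.continuous.comp continuous_tail).add (by fun_prop)).add
      ((continuous_sqd 0).const_smul κ)
  obtain ⟨y₁, hy₁, hmax⟩ := hK'c.exists_isMaxOn ⟨y, hyK'⟩ hΦc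
  have h1 : W (Fin.tail y) + τ * y 0 + κ * sqd 0 y - u y ≤
    W (Fin.tail y₁) + τ * y₁ 0 + κ * sqd 0 y₁ - u y₁ := hmax hyK'
  have h2 := (abs_le.1 (hWw _ ⟨y, hyK', rfl⟩)).1
  have h3 := (abs_le.1 (hWw _ ⟨y₁, hy₁, rfl⟩)).2
  have h4 := hκb y₁ hy₁
  have h5 : 0 ≤ κ * sqd 0 y := mul_nonneg hκpos.le (sqd_nonneg _ _)
  have hy₁K : y₁ ∈ K := hKη y₁ (hrK hy₁) (by simp only [] at h2 h3; linarith)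
  refine no_interior_max hc hc2 hD hu hW (hrK hy₁) (hWH _ ⟨y₁, hy₁, rfl⟩) hκpos (τ := τ) ?_
  refine hmax.isLocalMax ?_
  exact mem_of_superset (Metric.isOpen_thickening.mem_nhds (Metric.self_subset_thickening hr K hy₁K)) (Metric.thickening_subset_cthickening r K)

lemma compare_bdry {n : ℕ} {c : ℝ} (hc : n * (π / 2) ≤ c) (hc2 : c - π / 2 < n * (π / 2))
    {D : Set (Fin n → ℝ)} (hD : IsOpen D) (hDb : Bornology.IsBounded D) {u : (Fin (n+1) → ℝ) → ℝ}
    (hu : IsTypeF (calF n (-c)) (cyl D) (fun y => ((-(u y) : ℝ) : EReal)))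
    (huc : ContinuousOn u (ccyl D)) {w : (Fin n → ℝ) → ℝ}
    (hw : IsTypeF (Fc n (c - π / 2)) D (fun x => (w x : EReal))) (hwc : ContinuousOn w D) {τ : ℝ}
    (hbd : ∀ y ∈ ccyl D, y ∉ cyl D → ∀ b, u y - τ * y 0 < b →
      ∀ᶠ x in nhdsWithin (Fin.tail y) D, w x < b) :
    ∀ y ∈ cyl D, w (Fin.tail y) + τ * y 0 ≤ u y := by
  refine compare_core hc hc2 hD hu (huc.mono (cyl_subset_ccyl D)) hw hwc fun η hη => ?_
  set E := {y : Fin (n+1) → ℝ | y ∈ cyl D ∧ η ≤ w (Fin.tail y) + τ * y 0 - u y} with hE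
  have hcl : IsClosed (ccyl D) :=
    (isClosed_Icc.preimage (continuous_apply 0)).inter (isClosed_closure.preimage continuous_tail)
  have hEsub : closure E ⊆ ccyl D :=
    closure_minimal (fun y hy => cyl_subset_ccyl D hy.1) hcl
  have hcb : Bornology.IsBounded (ccyl D) := by
    obtain ⟨R, hR⟩ := hDb.closure.exists_norm_le
    refine isBounded_iff_forall_norm_le.2 ⟨max R 1, fun y hy => ?_⟩
    refine (pi_norm_le_iff_of_nonneg (by positivity)).2 fun i => ?_
    refine Fin.cases ?_ (fun j => ?_) i
    · refine le_trans ?_ (le_max_right _ _)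
      rw [Real.norm_eq_abs, abs_le]
      exact ⟨by linarith [hy.1.1], hy.1.2⟩
    · refine le_trans ?_ (le_max_left _ _)
      exact (norm_le_pi_norm (Fin.tail y) j).trans (hR _ hy.2)
  refine ⟨closure E, Metric.isCompact_of_isClosed_isBounded isClosed_closure (hcb.subset hEsub), ?_,
    fun y hy h => subset_closure ⟨hy, h⟩⟩
  intro y hy
  by_contra hyn
  have hyc := hEsub hy
  have h1 := hbd y hyc hyn (u y - τ * y 0 + η / 4) (by linarith)
  have h2 : ∀ᶠ z in nhdsWithin y (ccyl D), u y - η / 4 < u z :=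
    (huc y hyc).eventually (lt_mem_nhds (by linarith))
  have hct : Continuous fun z : Fin (n+1) → ℝ => τ * z 0 := by fun_prop
  have h3 : ∀ᶠ z in nhds y, τ * z 0 < τ * y 0 + η / 4 :=
    hct.continuousAt.eventually (gt_mem_nhds (by show τ * y 0 < _; linarith))
  have ht : Tendsto (fun z : Fin (n+1) → ℝ => (Fin.tail z : Fin n → ℝ)) (nhdsWithin y (cyl D))
      (nhdsWithin (Fin.tail y) D) :=
    tendsto_nhdsWithin_of_tendsto_nhds_of_eventually_within _
      ((continuous_tail.tendsto y).mono_left nhdsWithin_le_nhds)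
      (eventually_nhdsWithin_of_forall fun z hz => hz.2)
  have h4 := ((ht.eventually h1).and (h2.filter_mono (nhdsWithin_mono y (cyl_subset_ccyl D)))).and
    (h3.filter_mono nhdsWithin_le_nhds)
  rw [eventually_nhdsWithin_iff] at h4
  obtain ⟨z, hz1, hz2⟩ := (mem_closure_iff_frequently.1 hy |>.and_eventually h4).exists
  obtain ⟨⟨a1, a2⟩, a3⟩ := hz2 hz1.1
  have := hz1.2
  linarith

lemma IsTypeF_congr {m : ℕ} {F : Set (Matrix (Fin m) (Fin m) ℝ)} {U : Set (Fin m → ℝ)}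
    {v w : (Fin m → ℝ) → EReal} (h : IsTypeF F U v) (he : ∀ x ∈ U, v x = w x) : IsTypeF F U w := by
  refine ⟨fun x hx => he x hx ▸ h.1 x hx, ?_, ?_⟩
  · intro x hx b hb
    have h1 := h.2.1 x hx b (by show v x < b; rw [he x hx]; exact hb)
    filter_upwards [h1, self_mem_nhdsWithin] with z hz hzU
    rw [← he z hzU]; exact hz
  · intro p hp hpH a K hK hKU hfr x hx
    have h1 := h.2.2 p hp hpH a K hK hKU (fun z hz => by
      have hzK : z ∈ K := hK.isClosed.frontier_subset hz
      have := hfr z hz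
      simp only [] at this ⊢
      rw [he z (hKU hzK)]; exact this) x hx
    simp only [] at h1 ⊢
    rw [← he x (hKU hx)]; exact h1

lemma Fc_segment {n : ℕ} {c : ℝ} (hc : ((n : ℝ) - 1) * (π / 2) ≤ c) {D : Set (Fin n → ℝ)}
    (hD : IsOpen D) (hDc : Convex ℝ D) {w : (Fin n → ℝ) → EReal} (hw : IsTypeF (Fc n c) D w)
    {y z : Fin n → ℝ} (hy : y ∈ D) (hz : z ∈ D) (hyz : y ≠ z) {α β : ℝ} (hα : w y ≤ (α : EReal))
    (hβ : w z ≤ (β : EReal)) {s : ℝ} (hs : s ∈ Set.Icc (0:ℝ) 1) :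
    w (y + s • (z - y)) ≤ ((α + s * (β - α) : ℝ) : EReal) := by
  refine MvPolynomial.conv_seg hD hw hyz (hDc.segment_subset hy hz) ?_ hα hβ hs
  intro A hA hneg hAF
  have := (Fc_posSemidef hc hAF).dotProduct_mulVec_nonneg (z - y)
  rw [star_trivial] at this
  linarith

lemma Fc_bot {n : ℕ} {c : ℝ} (hc : ((n : ℝ) - 1) * (π / 2) ≤ c) {D : Set (Fin n → ℝ)}
    (hD : IsOpen D) (hDc : Convex ℝ D) {w : (Fin n → ℝ) → EReal} (hw : IsTypeF (Fc n c) D w)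
    {z x : Fin n → ℝ} (hz : z ∈ D) (hwz : w z = ⊥) (hx : x ∈ D) : w x = ⊥ := by
  by_cases hzx : z = x
  · rw [← hzx]; exact hwz
  have hcont : Continuous fun e : ℝ => z + (1 + e) • (x - z) := by fun_prop
  have h1 : ∀ᶠ e in nhds (0:ℝ), z + (1 + e) • (x - z) ∈ D :=
    hcont.continuousAt.eventually_mem (hD.mem_nhds (by simpa using hx))
  obtain ⟨ε, hε, hE⟩ := Metric.eventually_nhds_iff.1 h1
  set e := ε / 2 with he
  have hepos : 0 < e := by positivity
  have hp := hE (y := e) (by rw [dist_zero_right, Real.norm_eq_abs, abs_of_pos hepos]; linarith)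
  set p := z + (1 + e) • (x - z) with hpd
  have hpz : p - z = (1 + e) • (x - z) := by rw [hpd]; abel
  have hzp : z ≠ p := by
    intro h
    have : (1 + e) • (x - z) = 0 := by rw [← hpz, ← h, sub_self]
    rcases smul_eq_zero.1 this with h0 | h0
    · linarith
    · exact hzx (sub_eq_zero.1 h0).symm
  set s := 1 / (1 + e) with hs
  have hs1 : s < 1 := by rw [hs, div_lt_one (by linarith)]; linarith
  have hs0 : 0 < s := by positivity
  have hxs : z + s • (p - z) = x := by
    rw [hpz, smul_smul, hs, one_div, inv_mul_cancel₀ (by linarith), one_smul]; abel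
  obtain ⟨β, hβ, -⟩ := EReal.lt_iff_exists_real_btwn.1 (lt_top_iff_ne_top.2 (hw.1 p hp))
  refine (EReal.eq_bot_iff_forall_lt _).2 fun b => ?_
  have h2 := Fc_segment hc hD hDc hw hz hp hzp (α := (b - 1 - s * β) / (1 - s)) (by rw [hwz]; exact bot_le)
    hβ.le ⟨hs0.le, hs1.le⟩
  rw [hxs] at h2
  refine lt_of_le_of_lt h2 (EReal.coe_lt_coe_iff.2 ?_)
  have h3 : (b - 1 - s * β) / (1 - s) + s * (β - (b - 1 - s * β) / (1 - s)) = b - 1 := by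
    have : 1 - s ≠ 0 := by linarith
    field_simp; ring
  rw [h3]; linarith

lemma Fc_continuous {n : ℕ} {c : ℝ} (hc : ((n : ℝ) - 1) * (π / 2) ≤ c) {D : Set (Fin n → ℝ)}
    (hD : IsOpen D) (hDc : Convex ℝ D) {w : (Fin n → ℝ) → ℝ}
    (hw : IsTypeF (Fc n c) D (fun x => (w x : EReal))) : ContinuousOn w D := by
  have hcv : ConvexOn ℝ D w := by
    refine ⟨hDc, fun y hy z hz a b ha hb hab => ?_⟩
    by_cases hyz : y = z
    · subst hyz
      rw [← add_smul, ← add_smul, hab, one_smul, one_smul]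
    · have h := EReal.coe_le_coe_iff.1
        (Fc_segment hc hD hDc hw hy hz hyz le_rfl le_rfl (s := b) ⟨hb, by linarith⟩)
      have e1 : a • y + b • z = y + b • (z - y) := by
        have : a = 1 - b := by linarith
        rw [this]; module
      rw [e1]
      refine h.trans (le_of_eq ?_)
      have : a = 1 - b := by linarith
      rw [this]; simp only [smul_eq_mul]; ring
  exact hcv.continuousOn hD

lemma candidate_le {n : ℕ} {c : ℝ} (hc : n * (π / 2) ≤ c) (hc2 : c - π / 2 < n * (π / 2))
    {D : Set (Fin n → ℝ)} (hD : IsOpen D) (hDc : Convex ℝ D)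
    (hDb : Bornology.IsBounded D) {u : (Fin (n+1) → ℝ) → ℝ}
    (hu : IsTypeF (calF n (-c)) (cyl D) (fun y => ((-(u y) : ℝ) : EReal)))
    (huc : ContinuousOn u (ccyl D)) {w : (Fin n → ℝ) → EReal}
    (hw : IsTypeF (Fc n (c - π / 2)) D w) {τ : ℝ}
    (h0 : ∀ x ∈ D, w x ≤ (u (Fin.cons 0 x) : EReal))
    (h1 : ∀ x ∈ D, w x ≤ ((u (Fin.cons 1 x) - τ : ℝ) : EReal))
    (hlat : ∀ x ∈ frontier D, ∀ s ∈ Set.Icc (0:ℝ) 1,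
      limsup w (nhdsWithin x D) ≤ ((u (Fin.cons s x) - τ * s : ℝ) : EReal))
    {x : Fin n → ℝ} (hx : x ∈ D) {t : ℝ} (ht : t ∈ Set.Icc (0:ℝ) 1) :
    w x + ((τ * t : ℝ) : EReal) ≤ (u (Fin.cons t x) : EReal) := by
  have hcc : ((n : ℝ) - 1) * (π / 2) ≤ c - π / 2 := by linarith
  by_cases hbot : ∃ z ∈ D, w z = ⊥
  · obtain ⟨z, hz, hwz⟩ := hbot
    rw [Fc_bot hcc hD hDc hw hz hwz hx, EReal.bot_add]
    exact bot_le
  push Not at hbot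
  set v : (Fin n → ℝ) → ℝ := fun x => (w x).toReal with hv
  have hvw : ∀ x ∈ D, w x = (v x : EReal) := fun x hx =>
    (EReal.coe_toReal (hw.1 x hx) (hbot x hx)).symm
  have hvF : IsTypeF (Fc n (c - π / 2)) D (fun x => (v x : EReal)) := IsTypeF_congr hw hvw
  have hvc := Fc_continuous hcc hD hDc hvF
  have h0' : ∀ x ∈ D, v x ≤ u (Fin.cons 0 x) := fun x hx => by
    have := h0 x hx; rw [hvw x hx] at this; exact EReal.coe_le_coe_iff.1 this
  have h1' : ∀ x ∈ D, v x ≤ u (Fin.cons 1 x) - τ := fun x hx => by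
    have := h1 x hx; rw [hvw x hx] at this; exact EReal.coe_le_coe_iff.1 this
  rw [hvw x hx, ← EReal.coe_add, EReal.coe_le_coe_iff]
  rcases eq_or_lt_of_le ht.1 with h | h
  · rw [← h]; have := h0' x hx; linarith
  rcases eq_or_lt_of_le ht.2 with h' | h'
  · rw [h']; have := h1' x hx; linarith
  have key := compare_bdry hc hc2 hD hDb hu huc hvF hvc (τ := τ) ?_ (Fin.cons t x)
    (cons_mem_cyl ⟨h, h'⟩ hx)
  · simpa using key
  intro y hy hyn b hb
  have hyc : (Fin.cons (y 0) (Fin.tail y) : Fin (n+1) → ℝ) = y := Fin.cons_self_tail y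
  by_cases hyD : Fin.tail y ∈ D
  · have hle : v (Fin.tail y) ≤ u y - τ * y 0 := by
      rcases eq_or_lt_of_le hy.1.1 with g | g
      · have := h0' _ hyD
        rw [g, hyc] at this
        rw [← g]; linarith
      rcases eq_or_lt_of_le hy.1.2 with g' | g'
      · have := h1' _ hyD
        rw [← g', hyc] at this
        rw [g']; linarith
      · exact absurd ⟨⟨g, g'⟩, hyD⟩ hyn
    exact (hvc _ hyD).eventually (gt_mem_nhds (lt_of_le_of_lt hle hb))
  · have hfr : Fin.tail y ∈ frontier D := by
      rw [frontier, hD.interior_eq]; exact ⟨hy.2, hyD⟩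
    have hl := hlat _ hfr (y 0) hy.1
    rw [hyc] at hl
    have := eventually_lt_of_limsup_lt (lt_of_le_of_lt hl (EReal.coe_lt_coe_iff.2 hb))
    filter_upwards [this, self_mem_nhdsWithin] with z hz hzD
    rw [hvw z hzD] at hz
    exact EReal.coe_lt_coe_iff.1 hz

/-- **Legendre transform formula for solutions of the degenerate special Lagrangian
equation.**  Let `D ⊂ ℝⁿ` be a bounded strictly convex domain and
`c ∈ [nπ/2, (n+1)π/2)`.  Let `g` be continuous, and `C²`, on `∂([0,1] × D)` with
`g(0,·), g(1,·) ∈ F_{c−π/2}(D)`.  If `u ∈ C⁰([0,1] × D̄)` satisfies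
`u ∈ ℱ_c((0,1) × D)`, `−u ∈ ℱ_{−c}((0,1) × D)` and `u = g` on `∂([0,1] × D)`, then for
all `(t,x) ∈ [0,1] × D`, `u(t,x) = sup_{τ ∈ ℝ} (h_τ(x) + τt)`, where
`h_τ = P_{c−π/2}(min{g(0,·), g(1,·) − τ}; inf_{r∈[0,1]}(g(r,·) − rτ))` is the
obstacle-problem envelope. -/
theorem dsl_legendre_formula (n : ℕ) (c : ℝ)
    (hc : (n : ℝ) * π / 2 ≤ c) (hc' : c < ((n : ℝ) + 1) * π / 2)
    (D : Set (Fin n → ℝ)) (hDopen : IsOpen D) (hDconn : IsConnected D)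
    (hDbdd : Bornology.IsBounded D) (hDconv : Convex ℝ D)
    (hDstrict : ∀ x ∈ frontier D, ∀ y ∈ frontier D, x ≠ y →
      ¬ segment ℝ x y ⊆ frontier D)
    -- `Q = [0,1] × D̄` and `U = (0,1) × D`
    (Q : Set (Fin (n+1) → ℝ))
    (hQ : Q = {y : Fin (n+1) → ℝ | y 0 ∈ Set.Icc (0:ℝ) 1 ∧ Fin.tail y ∈ closure D})
    (U : Set (Fin (n+1) → ℝ))
    (hU : U = {y : Fin (n+1) → ℝ | y 0 ∈ Set.Ioo (0:ℝ) 1 ∧ Fin.tail y ∈ D})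
    -- boundary data
    (g : (Fin (n+1) → ℝ) → ℝ)
    (hgC2 : ContDiffOn ℝ 2 g (frontier Q))
    (hg0 : IsTypeF (Fc n (c - π / 2)) D (fun x => ((g (Fin.cons 0 x) : ℝ) : EReal)))
    (hg1 : IsTypeF (Fc n (c - π / 2)) D (fun x => ((g (Fin.cons 1 x) : ℝ) : EReal)))
    -- the weak solution
    (u : (Fin (n+1) → ℝ) → ℝ)
    (hucont : ContinuousOn u Q)
    (husub : IsTypeF (calF n c) U (fun y => ((u y : ℝ) : EReal)))
    (husup : IsTypeF (calF n (-c)) U (fun y => ((-(u y) : ℝ) : EReal)))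
    (hbdry : ∀ y ∈ frontier Q, u y = g y)
    -- the family of envelopes `h_τ`
    (h : ℝ → (Fin n → ℝ) → EReal)
    (hh : h = fun τ x => ⨆ w ∈ {w : (Fin n → ℝ) → EReal |
        IsTypeF (Fc n (c - π / 2)) D w ∧
        (∀ z ∈ D, w z ≤
          ((min (g (Fin.cons 0 z)) (g (Fin.cons 1 z) - τ) : ℝ) : EReal)) ∧
        (∀ y ∈ frontier D, Filter.limsup w (nhdsWithin y D) ≤
          (((⨅ r : Set.Icc (0:ℝ) 1, (g (Fin.cons (r : ℝ) y) - (r : ℝ) * τ)) : ℝ) :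
            EReal))}, w x) :
    ∀ t ∈ Set.Icc (0:ℝ) 1, ∀ x ∈ D,
      ((u (Fin.cons t x) : ℝ) : EReal) =
        ⨆ τ : ℝ, (h τ x + ((τ * t : ℝ) : EReal)) := by
  subst hQ hU hh
  have hc1 : n * (π / 2) ≤ c := by linarith
  have hc2 : c - π / 2 < n * (π / 2) := by linarith
  have hDn : D.Nonempty := hDconn.nonempty
  have huc : ContinuousOn u (ccyl D) := hucont
  have hsub : IsTypeF (calF n c) (cyl D) (fun y => ((u y : ℝ) : EReal)) := husub
  have hsup : IsTypeF (calF n (-c)) (cyl D) (fun y => ((-(u y) : ℝ) : EReal)) := husup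
  have hb : ∀ y ∈ frontier (ccyl D), u y = g y := hbdry
  have hb0 : ∀ z ∈ D, u (Fin.cons 0 z) = g (Fin.cons 0 z) := fun z hz =>
    hb _ (frontier_ccyl_side (Or.inl rfl) (subset_closure hz))
  have hb1 : ∀ z ∈ D, u (Fin.cons 1 z) = g (Fin.cons 1 z) := fun z hz =>
    hb _ (frontier_ccyl_side (Or.inr rfl) (subset_closure hz))
  have hinf : ∀ τ : ℝ, ∀ y ∈ frontier D,
      (⨅ r : Set.Icc (0:ℝ) 1, (g (Fin.cons (r : ℝ) y) - (r : ℝ) * τ)) = wt u τ y := by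
    intro τ y hy
    rw [wt, sInf_image']
    refine iInf_congr fun r => ?_
    rw [hb _ (frontier_ccyl_lat hDopen hDconv hDn r.2 hy), mul_comm]
  intro t ht x hx
  refine le_antisymm ?_ ?_
  · by_contra hcon
    push Not at hcon
    obtain ⟨b, hb1', hb2'⟩ := EReal.lt_iff_exists_real_btwn.1 hcon
    obtain ⟨τ, hτ⟩ := wt_legendre hc1 hDopen huc hsub hx ht (EReal.coe_lt_coe_iff.1 hb2')
    refine absurd hb1' (not_lt.2 ?_)
    refine le_trans (EReal.coe_le_coe_iff.2 hτ) ?_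
    rw [EReal.coe_add]
    refine le_trans ?_ (le_iSup _ τ)
    refine add_le_add ?_ le_rfl
    refine le_iSup₂_of_le (fun x => ((wt u τ x : ℝ) : EReal)) ⟨wt_typeF hc1 hc2 hDopen huc hsub τ, ?_, ?_⟩ le_rfl
    · intro z hz
      refine EReal.coe_le_coe_iff.2 (le_min ?_ ?_)
      · have := wt_le huc τ (subset_closure hz) (s := 0) (by simp)
        rw [hb0 z hz] at this; linarith
      · have := wt_le huc τ (subset_closure hz) (s := 1) (by simp)
        rw [hb1 z hz] at this; linarith
    · intro y hy
      rw [hinf τ y hy]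
      exact wt_limsup huc τ hy.1
  · refine iSup_le fun τ => ?_
    rw [← EReal.le_sub_iff_add_le (Or.inl (EReal.coe_ne_bot _)) (Or.inl (EReal.coe_ne_top _))]
    refine iSup₂_le fun w hw => ?_
    obtain ⟨hw1, hw2, hw3⟩ := hw
    rw [EReal.le_sub_iff_add_le (Or.inl (EReal.coe_ne_bot _)) (Or.inl (EReal.coe_ne_top _))]
    refine candidate_le hc1 hc2 hDopen hDconv hDbdd hsup huc hw1 ?_ ?_ ?_ hx ht
    · intro z hz
      refine (hw2 z hz).trans (EReal.coe_le_coe_iff.2 ?_)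
      rw [hb0 z hz]; exact min_le_left _ _
    · intro z hz
      refine (hw2 z hz).trans (EReal.coe_le_coe_iff.2 ?_)
      rw [hb1 z hz]; exact min_le_right _ _
    · intro y hy s hs
      refine (hw3 y hy).trans (EReal.coe_le_coe_iff.2 ?_)
      rw [hinf τ y hy]
      exact wt_le huc τ hy.1 hs
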